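/- Let p > 3 be a prime. If p ≡ 1 (mod 3), write p = x^2 + 3y^2 with integers x, y; then (−1)^{(p−1)/2}·Σ_{k=0}^{p−1} k^2·C(2k,k)^3/256^k ≡ (1/9)x^2 − p/18 − p^2/(72x^2) (mod p^3) and (−1)^{(p−1)/2}·Σ_{k=0}^{p−1} k^3·C(2k,k)^3/256^k ≡ (1/18)x^2 + p/72 − p^2/(144x^2) (mod p^3). If p ≡ 2 (mod 3), then (−1)^{(p−1)/2}·Σ_{k=0}^{p−1} k^2·C(2k,k)^3/256^k ≡ −(2/9)R_3(p) (mod p^2) and (−1)^{(p−1)/2}·Σ_{k=0}^{p−1} k^3·C(2k,k)^3/256^k ≡ −(1/9)R_3(p) + (1/24)p (mod p^2). -/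

import Mathlib

/-- `a ≡ b (mod p^r)` for rationals: the numerator of `a - b` in lowest terms
is divisible by `p^r`. -/
def ratCongr (p r : ℕ) (a b : ℚ) : Prop := (p : ℤ)^r ∣ (a - b).num
/-- `R_3(p)`. -/
def R3 (p : ℕ) : ℚ :=
  (1 + 2*(p:ℚ) + 4/3*(2^(p-1) - 1) - 3/2*(3^(p-1) - 1)) *
    (((p-1)/2).choose (p/6) : ℚ)^2


/-! ### Part 1: the deformed family and its contiguous relations -/
set_option linter.unusedSimpArgs false
set_option linter.unusedVariables false

namespace S4

/-- terms of the deformed family -/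
def tt (e : ℚ) (K : ℕ) : ℚ :=
  ∏ i ∈ Finset.range K, ((1/2 + 2*e + i) * (1/2 - 6*e + i) * (1/2 - 2*e + i)) /
    ((1 - 4*e + i) * (1 - 2*e + i) * ((i:ℚ) + 1) * 4)

def uu (e : ℚ) (K : ℕ) : ℚ :=
  ∏ i ∈ Finset.range K, ((1/2 + 2*e + i) * (1/2 - 6*e - 3 + i) * (1/2 - 2*e - 1 + i)) /
    ((1 - 4*e + i) * (1 - 2*e + i) * ((i:ℚ) + 1) * 4)

def F (i : ℕ) (e : ℚ) (N : ℕ) : ℚ := ∑ j ∈ Finset.range N, (j:ℚ)^i * tt e j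

def wK (e j : ℚ) : ℚ := j + 1/6 - 2*e
def wW (e j : ℚ) : ℚ := j^2 - (2*e - 1/6)^2 - 4*e*(j + 1/6 - 2*e)

def SF (e : ℚ) (N : ℕ) : ℚ := ∑ j ∈ Finset.range N, tt e j
def SK (e : ℚ) (N : ℕ) : ℚ := ∑ j ∈ Finset.range N, wK e j * tt e j
def SW (e : ℚ) (N : ℕ) : ℚ := ∑ j ∈ Finset.range N, wW e j * tt e j

lemma tt_zero (e : ℚ) : tt e 0 = 1 := by simp [tt]
lemma uu_zero (e : ℚ) : uu e 0 = 1 := by simp [uu]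
lemma tt_succ (e : ℚ) (K : ℕ) : tt e (K+1) = tt e K *
    (((1/2 + 2*e + K) * (1/2 - 6*e + K) * (1/2 - 2*e + K)) /
    ((1 - 4*e + K) * (1 - 2*e + K) * ((K:ℚ) + 1) * 4)) := by
  rw [tt, Finset.prod_range_succ, ← tt]
lemma uu_succ (e : ℚ) (K : ℕ) : uu e (K+1) = uu e K *
    (((1/2 + 2*e + K) * (1/2 - 6*e - 3 + K) * (1/2 - 2*e - 1 + K)) /
    ((1 - 4*e + K) * (1 - 2*e + K) * ((K:ℚ) + 1) * 4)) := by
  rw [uu, Finset.prod_range_succ, ← uu]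

lemma rel_t (e : ℚ) (j : ℕ) :
    tt e j * (3*(12*e+5)*(12*e+1)*(4*e+1)^2/16) =
    uu e j * ((1/2 - 6*e - 3 + j) * (1/2 - 6*e - 2 + j) * (1/2 - 6*e - 1 + j)
      * (1/2 - 2*e - 1 + j)) := by
  induction j with
  | zero => simp [tt_zero, uu_zero]; ring
  | succ j ih =>
    rw [tt_succ, uu_succ]
    push_cast
    linear_combination (((1/2 + 2*e + j) * (1/2 - 6*e + j) * (1/2 - 2*e + j)) /
      ((1 - 4*e + j) * (1 - 2*e + j) * ((j:ℚ) + 1) * 4)) * ih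

lemma rel_t' (e : ℚ) (N : ℕ) (h : ∀ j : ℕ, j < N → 1 - 4*e + j ≠ 0 ∧ -1 - 4*e + j ≠ 0 ∧
    1 - 2*e + j ≠ 0 ∧ -2*e + j ≠ 0) (j : ℕ) (hj : j ≤ N) :
    tt (e + 1/2) j * (-4*e^2*(4*e+1)^2) =
    uu e j * ((1/2 + 2*e + j) * (-1 - 4*e + j) * (- 4*e + j) * (-2*e + j)) := by
  induction j with
  | zero => simp [tt_zero, uu_zero]; ring
  | succ j ih =>
    have ih := ih (by omega)
    obtain ⟨h1, h2, h3, h4⟩ := h j (by omega)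
    rw [tt_succ, uu_succ]
    push_cast
    have e1 : 1 - 4*(e+1/2) + (j:ℚ) = -1 - 4*e + j := by ring
    have e2 : 1 - 2*(e+1/2) + (j:ℚ) = -2*e + j := by ring
    rw [e1, e2]
    have h5 : (j:ℚ) + 1 ≠ 0 := by positivity
    have e3 : tt (e + 1/2) j * (((1/2 + 2*(e+1/2) + (j:ℚ)) * (1/2 - 6*(e+1/2) + j) *
       (1/2 - 2*(e+1/2) + j)) /
      ((-1 - 4*e + j) * (-2*e + j) * ((j:ℚ) + 1) * 4)) * (-4*e^2*(4*e+1)^2) =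
      (uu e j * ((1/2 + 2*e + j) * (-1 - 4*e + j) * (- 4*e + j) * (-2*e + j))) *
      (((1/2 + 2*(e+1/2) + (j:ℚ)) * (1/2 - 6*(e+1/2) + j) *
       (1/2 - 2*(e+1/2) + j)) /
      ((-1 - 4*e + j) * (-2*e + j) * ((j:ℚ) + 1) * 4)) := by
      rw [← ih]; ring
    rw [e3]
    have a1 : (1:ℚ) - 4*e + j = (-1 - 4*e + j) + 2 := by ring
    have a2 : (1:ℚ) - 2*e + j = (-2*e + j) + 1 := by ring
    rw [a1] at h1 ⊢
    rw [a2] at h3 ⊢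
    have a3 : -2*e = (-2*e + j) - j := by ring
    have a4 : -4*e + (j:ℚ) = (-1-4*e + j) + 1 := by ring
    have a5 : -4*e + ((j:ℚ)+1) = (-1-4*e + j) + 2 := by ring
    have a6 : -1-4*e + ((j:ℚ)+1) = (-1-4*e + j) + 1 := by ring
    have a7 : -2*e + ((j:ℚ)+1) = (-2*e + j) + 1 := by ring
    rw [a4, a5, a6, a7]
    generalize (-1 - 4*e + (j:ℚ)) = a at *
    generalize (-2*e + (j:ℚ)) = b at *
    field_simp
    ring

lemma uu_step (e : ℚ) (j : ℕ) (h1 : 1 - 4*e + j ≠ 0) (h3 : 1 - 2*e + j ≠ 0) :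
    uu e (j+1) * (((j:ℚ)+1) * (1 - 4*e + j) * (1 - 2*e + j)) =
    uu e j * ((1/2 + 2*e + j) * (1/2 - 6*e - 3 + j) * (1/2 - 2*e - 1 + j) / 4) := by
  rw [uu_succ]
  have h5 : (j:ℚ) + 1 ≠ 0 := by positivity
  generalize (1 - 4*e + (j:ℚ)) = a at *
  generalize (1 - 2*e + (j:ℚ)) = b at *
  field_simp

def qF (e j : ℚ) : ℚ := 306 + 3240*e + 11232*e^2 + 12672*e^3 + (-252 - 1728*e - 2880*e^2)*j
def qK (e j : ℚ) : ℚ := -63 - 636*e - 2064*e^2 - 2112*e^3 + (132 + 912*e + 1536*e^2)*j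
  + (-60 - 240*e)*j^2
def qW (e j : ℚ) : ℚ := 287/2 + 2598*e + 17808*e^2 + 57664*e^3 + 87936*e^4 + 50688*e^5
  + (-445 - 6600*e - 35072*e^2 - 78720*e^3 - 62208*e^4)*j
  + (402 + 5016*e + 19680*e^2 + 24192*e^3)*j^2 + (-108 - 1152*e - 2880*e^2)*j^3

lemma idF (e j : ℚ) (h0 : e ≠ 0) (h1 : 4*e+1 ≠ 0) (h2 : 12*e+1 ≠ 0) (h5 : 12*e+5 ≠ 0) :
    1 * ((1/2 + 2*e + j) * (-1 - 4*e + j) * (- 4*e + j) * (-2*e + j))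
        / (-4*e^2*(4*e+1)^2) -
      (3*((12*e+1)/(16*e))^2) * (1 * ((1/2 - 6*e - 3 + j) * (1/2 - 6*e - 2 + j) * (1/2 - 6*e - 1 + j)
      * (1/2 - 2*e - 1 + j)) / (3*(12*e+5)*(12*e+1)*(4*e+1)^2/16)) =
      qF e (j+1) / (-48*e^2*(4*e+1)^2*(3*(4*e+1))*(12*e+5)) * ((1/2 + 2*e + j) * (1/2 - 6*e - 3 + j) * (1/2 - 2*e - 1 + j) / 4)
      - qF e j / (-48*e^2*(4*e+1)^2*(3*(4*e+1))*(12*e+5)) * (j * (- 4*e + j) * (-2*e + j)) := by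
  simp only [qF, qK, qW, wK, wW]
  generalize ha : 4*e+1 = a at *
  generalize hb : 12*e+1 = b at *
  generalize hc : 12*e+5 = c at *
  field_simp
  subst ha hb hc
  ring

lemma idK (e j : ℚ) (h0 : e ≠ 0) (h1 : 4*e+1 ≠ 0) (h2 : 12*e+1 ≠ 0) (h5 : 12*e+5 ≠ 0) :
    wK (e+1/2) j * ((1/2 + 2*e + j) * (-1 - 4*e + j) * (- 4*e + j) * (-2*e + j))
        / (-4*e^2*(4*e+1)^2) -
      (3*(12*e+1)*(12*e+5)/(16*e)^2) * (wK e j * ((1/2 - 6*e - 3 + j) * (1/2 - 6*e - 2 + j) * (1/2 - 6*e - 1 + j)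
      * (1/2 - 2*e - 1 + j)) / (3*(12*e+5)*(12*e+1)*(4*e+1)^2/16)) =
      qK e (j+1) / (-48*e^2*(4*e+1)^2*(3*(4*e+1))) * ((1/2 + 2*e + j) * (1/2 - 6*e - 3 + j) * (1/2 - 2*e - 1 + j) / 4)
      - qK e j / (-48*e^2*(4*e+1)^2*(3*(4*e+1))) * (j * (- 4*e + j) * (-2*e + j)) := by
  simp only [qF, qK, qW, wK, wW]
  generalize ha : 4*e+1 = a at *
  generalize hb : 12*e+1 = b at *
  generalize hc : 12*e+5 = c at *
  field_simp
  subst ha hb hc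
  ring

lemma idW (e j : ℚ) (h0 : e ≠ 0) (h1 : 4*e+1 ≠ 0) (h2 : 12*e+1 ≠ 0) (h5 : 12*e+5 ≠ 0) :
    wW (e+1/2) j * ((1/2 + 2*e + j) * (-1 - 4*e + j) * (- 4*e + j) * (-2*e + j))
        / (-4*e^2*(4*e+1)^2) -
      (3*((12*e+5)/(16*e))^2) * (wW e j * ((1/2 - 6*e - 3 + j) * (1/2 - 6*e - 2 + j) * (1/2 - 6*e - 1 + j)
      * (1/2 - 2*e - 1 + j)) / (3*(12*e+5)*(12*e+1)*(4*e+1)^2/16)) =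
      qW e (j+1) / (-48*e^2*(4*e+1)^2*(3*(4*e+1))*(12*e+1)) * ((1/2 + 2*e + j) * (1/2 - 6*e - 3 + j) * (1/2 - 2*e - 1 + j) / 4)
      - qW e j / (-48*e^2*(4*e+1)^2*(3*(4*e+1))*(12*e+1)) * (j * (- 4*e + j) * (-2*e + j)) := by
  simp only [qF, qK, qW, wK, wW]
  generalize ha : 4*e+1 = a at *
  generalize hb : 12*e+1 = b at *
  generalize hc : 12*e+5 = c at *
  field_simp
  subst ha hb hc
  ring

lemma gen_tel (e : ℚ) (N : ℕ) (h : ∀ j : ℕ, j < N → 1 - 4*e + j ≠ 0 ∧ -1 - 4*e + j ≠ 0 ∧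
    1 - 2*e + j ≠ 0 ∧ -2*e + j ≠ 0) (h0 : e ≠ 0) (h1 : 4*e+1 ≠ 0) (h2 : 12*e+1 ≠ 0)
    (h5 : 12*e+5 ≠ 0) (w w' q : ℚ → ℚ) (rho D : ℚ)
    (hid : ∀ j : ℚ, w' j * ((1/2 + 2*e + j) * (-1 - 4*e + j) * (- 4*e + j) * (-2*e + j))
        / (-4*e^2*(4*e+1)^2) -
      rho * (w j * ((1/2 - 6*e - 3 + j) * (1/2 - 6*e - 2 + j) * (1/2 - 6*e - 1 + j)
      * (1/2 - 2*e - 1 + j)) / (3*(12*e+5)*(12*e+1)*(4*e+1)^2/16)) =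
      q (j+1) / D * ((1/2 + 2*e + j) * (1/2 - 6*e - 3 + j) * (1/2 - 2*e - 1 + j) / 4)
      - q j / D * (j * (- 4*e + j) * (-2*e + j)))
    (hu : uu e N = 0) :
    ∑ j ∈ Finset.range N, w' j * tt (e+1/2) j = rho * ∑ j ∈ Finset.range N, w j * tt e j := by
  have key : ∀ M : ℕ, M ≤ N → ∑ j ∈ Finset.range M, w' j * tt (e+1/2) j
      - rho * ∑ j ∈ Finset.range M, w j * tt e j =
      q M / D * (M * (-4*e + M) * (-2*e + M)) * uu e M := by
    intro M hM
    induction M with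
    | zero => simp
    | succ M ih =>
      have ih := ih (by omega)
      obtain ⟨g1, g2, g3, g4⟩ := h M (by omega)
      rw [Finset.sum_range_succ, Finset.sum_range_succ]
      have r1 := rel_t e M
      have r2 := rel_t' e N h M (by omega)
      have r3 := uu_step e M g1 g3
      have c1 : 3*(12*e+5)*(12*e+1)*(4*e+1)^2/16 ≠ 0 := by simp [h1, h2, h5]
      have c2 : (-4*e^2*(4*e+1)^2) ≠ 0 := by
        simp [h0, h1]
      have s1 := (eq_div_iff c1).2 r1
      have s2 := (eq_div_iff c2).2 r2
      push_cast
      have hh := hid M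
      rw [s1, s2]
      push_cast at r3 hh ih ⊢
      linear_combination ih + uu e M * hh - q (M+1) / D * r3
  have := key N le_rfl
  rw [hu] at this
  linarith

lemma step_F (e : ℚ) (N : ℕ) (h : ∀ j : ℕ, j < N → 1 - 4*e + j ≠ 0 ∧ -1 - 4*e + j ≠ 0 ∧
    1 - 2*e + j ≠ 0 ∧ -2*e + j ≠ 0) (h0 : e ≠ 0) (h1 : 4*e+1 ≠ 0) (h2 : 12*e+1 ≠ 0)
    (h5 : 12*e+5 ≠ 0) (hu : uu e N = 0) :
    SF (e+1/2) N = 3*((12*e+1)/(16*e))^2 * SF e N := by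
  have := gen_tel e N h h0 h1 h2 h5 (fun _ => 1) (fun _ => 1) (qF e)
    (3*((12*e+1)/(16*e))^2) (-48*e^2*(4*e+1)^2*(3*(4*e+1))*(12*e+5)) (by
      intro j; exact idF e j h0 h1 h2 h5) hu
  simpa [SF] using this

lemma step_K (e : ℚ) (N : ℕ) (h : ∀ j : ℕ, j < N → 1 - 4*e + j ≠ 0 ∧ -1 - 4*e + j ≠ 0 ∧
    1 - 2*e + j ≠ 0 ∧ -2*e + j ≠ 0) (h0 : e ≠ 0) (h1 : 4*e+1 ≠ 0) (h2 : 12*e+1 ≠ 0)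
    (h5 : 12*e+5 ≠ 0) (hu : uu e N = 0) :
    SK (e+1/2) N = 3*(12*e+1)*(12*e+5)/(16*e)^2 * SK e N := by
  have := gen_tel e N h h0 h1 h2 h5 (wK e) (wK (e+1/2)) (qK e)
    (3*(12*e+1)*(12*e+5)/(16*e)^2) (-48*e^2*(4*e+1)^2*(3*(4*e+1))) (by
      intro j; exact idK e j h0 h1 h2 h5) hu
  simpa [SK] using this

lemma step_W (e : ℚ) (N : ℕ) (h : ∀ j : ℕ, j < N → 1 - 4*e + j ≠ 0 ∧ -1 - 4*e + j ≠ 0 ∧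
    1 - 2*e + j ≠ 0 ∧ -2*e + j ≠ 0) (h0 : e ≠ 0) (h1 : 4*e+1 ≠ 0) (h2 : 12*e+1 ≠ 0)
    (h5 : 12*e+5 ≠ 0) (hu : uu e N = 0) :
    SW (e+1/2) N = 3*((12*e+5)/(16*e))^2 * SW e N := by
  have := gen_tel e N h h0 h1 h2 h5 (wW e) (wW (e+1/2)) (qW e)
    (3*((12*e+5)/(16*e))^2) (-48*e^2*(4*e+1)^2*(3*(4*e+1))*(12*e+1)) (by
      intro j; exact idW e j h0 h1 h2 h5) hu
  simpa [SW] using this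
end S4


/-! ### Part 2: closed forms at the nodes -/
namespace S4

lemma tt_zero_of (e : ℚ) (K i : ℕ) (hi : i < K)
    (h : (1/2 + 2*e + i) * (1/2 - 6*e + i) * (1/2 - 2*e + i) = 0) : tt e K = 0 := by
  rw [tt]
  apply Finset.prod_eq_zero (Finset.mem_range.2 hi)
  rw [h, zero_div]

lemma uu_zero_of (e : ℚ) (K i : ℕ) (hi : i < K)
    (h : (1/2 + 2*e + i) * (1/2 - 6*e - 3 + i) * (1/2 - 2*e - 1 + i) = 0) : uu e K = 0 := by
  rw [uu]
  apply Finset.prod_eq_zero (Finset.mem_range.2 hi)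
  rw [h, zero_div]

lemma natne (a b : ℕ) (h : a ≠ b) : (a:ℚ) ≠ b := by exact_mod_cast h

def eA (n : ℕ) : ℚ := (2*n+1)/4
def eB (n : ℕ) : ℚ := -(2*n+1)/4
def eC (n : ℕ) : ℚ := (2*n+1)/12

lemma condA (n : ℕ) (hn : 2 ≤ n) : ∀ j : ℕ, j < n + 2 → 1 - 4*eA n + j ≠ 0 ∧ -1 - 4*eA n + j ≠ 0 ∧
    1 - 2*eA n + j ≠ 0 ∧ -2*eA n + j ≠ 0 := by
  intro j hj
  have h1 := natne j (2*n) (by omega)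
  have h2 := natne j (2*n+2) (by omega)
  have h3 := natne (2*j+1) (2*n) (by omega)
  have h4 := natne (2*j) (2*n+1) (by omega)
  push_cast at h1 h2 h3 h4
  unfold eA
  refine ⟨fun h => h1 ?_, fun h => h2 ?_, fun h => h3 ?_, fun h => h4 ?_⟩ <;> linarith

lemma condB (n : ℕ) : ∀ j : ℕ, j < n + 2 → 1 - 4*eB (n+1) + j ≠ 0 ∧ -1 - 4*eB (n+1) + j ≠ 0 ∧
    1 - 2*eB (n+1) + j ≠ 0 ∧ -2*eB (n+1) + j ≠ 0 := by
  intro j hj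
  unfold eB
  have h1 : (0:ℚ) ≤ n := Nat.cast_nonneg n
  have h2 : (0:ℚ) ≤ j := Nat.cast_nonneg j
  push_cast
  refine ⟨?_, ?_, ?_, ?_⟩ <;> apply ne_of_gt <;> linarith

lemma condC (n N : ℕ) (hn : n % 3 ≠ 1) : ∀ j : ℕ, j < N → 1 - 4*eC n + j ≠ 0 ∧ -1 - 4*eC n + j ≠ 0 ∧
    1 - 2*eC n + j ≠ 0 ∧ -2*eC n + j ≠ 0 := by
  intro j hj
  have h1 := natne (3*j+2) (2*n) (by omega)
  have h2 := natne (3*j) (2*n+4) (by omega)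
  have h3 := natne (6*j+5) (2*n) (by omega)
  have h4 := natne (6*j) (2*n+1) (by omega)
  push_cast at h1 h2 h3 h4
  unfold eC
  refine ⟨fun h => h1 ?_, fun h => h2 ?_, fun h => h3 ?_, fun h => h4 ?_⟩ <;> linarith

lemma eA_succ (n : ℕ) : eA (n+1) = eA n + 1/2 := by unfold eA; push_cast; ring
lemma eB_succ (n : ℕ) : eB n = eB (n+1) + 1/2 := by unfold eB; push_cast; ring
lemma eC_succ (n : ℕ) : eC (n+3) = eC n + 1/2 := by unfold eC; push_cast; ring

lemma sums_A (n : ℕ) : SF (eA n) (n+2) = SF (eA n) (n+1) ∧ SK (eA n) (n+2) = SK (eA n) (n+1)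
    ∧ SW (eA n) (n+2) = SW (eA n) (n+1) := by
  have h : tt (eA n) (n+1) = 0 := tt_zero_of _ _ n (by omega) (by unfold eA; ring)
  refine ⟨?_, ?_, ?_⟩
  · rw [SF, Finset.sum_range_succ, h, add_zero]; rfl
  · rw [SK, Finset.sum_range_succ, h, mul_zero, add_zero]; rfl
  · rw [SW, Finset.sum_range_succ, h, mul_zero, add_zero]; rfl

lemma sums_B (n : ℕ) : SF (eB n) (n+2) = SF (eB n) (n+1) ∧ SK (eB n) (n+2) = SK (eB n) (n+1)
    ∧ SW (eB n) (n+2) = SW (eB n) (n+1) := by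
  have h : tt (eB n) (n+1) = 0 := tt_zero_of _ _ n (by omega) (by unfold eB; ring)
  refine ⟨?_, ?_, ?_⟩
  · rw [SF, Finset.sum_range_succ, h, add_zero]; rfl
  · rw [SK, Finset.sum_range_succ, h, mul_zero, add_zero]; rfl
  · rw [SW, Finset.sum_range_succ, h, mul_zero, add_zero]; rfl

lemma sums_C (n : ℕ) : SF (eC n) (n+4) = SF (eC n) (n+1) ∧ SK (eC n) (n+4) = SK (eC n) (n+1)
    ∧ SW (eC n) (n+4) = SW (eC n) (n+1) := by
  have h : ∀ k, tt (eC n) (n+1+k) = 0 := fun k => tt_zero_of _ _ n (by omega) (by unfold eC; ring)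
  have h1 := h 0
  have h2 := h 1
  have h3 := h 2
  refine ⟨?_, ?_, ?_⟩
  · rw [SF, Finset.sum_range_succ, Finset.sum_range_succ, Finset.sum_range_succ, h1, h2, h3]
    simp [SF]
  · rw [SK, Finset.sum_range_succ, Finset.sum_range_succ, Finset.sum_range_succ, h1, h2, h3]
    simp [SK]
  · rw [SW, Finset.sum_range_succ, Finset.sum_range_succ, Finset.sum_range_succ, h1, h2, h3]
    simp [SW]

lemma FA_closed (n : ℕ) : SF (eA n) (n+1) = ∏ j ∈ Finset.range n, (3*((3*(j:ℚ)+2)/(4*j+2))^2) ∧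
    SK (eA n) (n+1) = -(1/3) * ∏ j ∈ Finset.range n, (3*(3*(j:ℚ)+2)*(3*j+4)/(4*j+2)^2) ∧
    SW (eA n) (n+1) = 2/9 * ∏ j ∈ Finset.range n, (3*((3*(j:ℚ)+4)/(4*j+2))^2) := by
  induction n with
  | zero => norm_num [SF, SK, SW, tt, eA, wK, wW]
  | succ n ih =>
    rcases Nat.lt_or_ge n 2 with hn | hn
    · interval_cases n <;>
      norm_num [SF, SK, SW, tt, eA, wK, wW, Finset.sum_range_succ, Finset.prod_range_succ]
    · have h0 : (0:ℚ) ≤ n := Nat.cast_nonneg n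
      have e0 : eA n ≠ 0 := by unfold eA; positivity
      have e1 : 4*eA n + 1 ≠ 0 := by unfold eA; positivity
      have e2 : 12*eA n + 1 ≠ 0 := by unfold eA; positivity
      have e3 : 12*eA n + 5 ≠ 0 := by unfold eA; positivity
      have hu : uu (eA n) (n+2) = 0 := uu_zero_of _ _ (n+1) (by omega) (by unfold eA; push_cast; ring)
      have s1 := step_F (eA n) (n+2) (condA n hn) e0 e1 e2 e3 hu
      have s2 := step_K (eA n) (n+2) (condA n hn) e0 e1 e2 e3 hu
      have s3 := step_W (eA n) (n+2) (condA n hn) e0 e1 e2 e3 hu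
      rw [← eA_succ, (sums_A n).1, ih.1] at s1
      rw [← eA_succ, (sums_A n).2.1, ih.2.1] at s2
      rw [← eA_succ, (sums_A n).2.2, ih.2.2] at s3
      rw [Finset.prod_range_succ, Finset.prod_range_succ, Finset.prod_range_succ, s1, s2, s3]
      have q1 : 12*eA n + 1 = 2*(3*n+2) := by unfold eA; ring
      have q2 : 16*eA n = 2*(4*n+2) := by unfold eA; ring
      have q3 : 12*eA n + 5 = 2*(3*n+4) := by unfold eA; ring
      rw [q1, q2, q3]
      have q4 : (4*(n:ℚ)+2) ≠ 0 := by positivity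
      generalize (4*(n:ℚ)+2) = a at *
      refine ⟨?_, ?_, ?_⟩ <;> generalize (∏ x ∈ Finset.range n, (_:ℚ)) = P <;> field_simp

lemma FB_closed (n : ℕ) : SF (eB n) (n+1) = ∏ j ∈ Finset.range n, ((4/3)*((2*(j:ℚ)+3)/(3*j+4))^2) ∧
    SK (eB n) (n+1) = (2/3) * ∏ j ∈ Finset.range n, ((4/3)*(2*(j:ℚ)+3)^2/((3*j+2)*(3*j+4))) ∧
    SW (eB n) (n+1) = 2/9 * ∏ j ∈ Finset.range n, ((4/3)*((2*(j:ℚ)+3)/(3*j+2))^2) := by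
  induction n with
  | zero => norm_num [SF, SK, SW, tt, eB, wK, wW]
  | succ n ih =>
    have h0 : (0:ℚ) ≤ n := Nat.cast_nonneg n
    have e0 : eB (n+1) ≠ 0 := by unfold eB; push_cast; apply ne_of_lt; linarith
    have e1 : 4*eB (n+1) + 1 ≠ 0 := by unfold eB; push_cast; apply ne_of_lt; linarith
    have e2 : 12*eB (n+1) + 1 ≠ 0 := by unfold eB; push_cast; apply ne_of_lt; linarith
    have e3 : 12*eB (n+1) + 5 ≠ 0 := by unfold eB; push_cast; apply ne_of_lt; linarith
    have hu : uu (eB (n+1)) (n+2) = 0 := uu_zero_of _ _ (n+1) (by omega) (by unfold eB; push_cast; ring)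
    have s1 := step_F (eB (n+1)) (n+2) (condB n) e0 e1 e2 e3 hu
    have s2 := step_K (eB (n+1)) (n+2) (condB n) e0 e1 e2 e3 hu
    have s3 := step_W (eB (n+1)) (n+2) (condB n) e0 e1 e2 e3 hu
    rw [← eB_succ, (sums_B n).1, ih.1] at s1
    rw [← eB_succ, (sums_B n).2.1, ih.2.1] at s2
    rw [← eB_succ, (sums_B n).2.2, ih.2.2] at s3
    rw [Finset.prod_range_succ, Finset.prod_range_succ, Finset.prod_range_succ,
      ← mul_assoc (2/3:ℚ), ← mul_assoc (2/9:ℚ), s1, s2, s3]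
    have q1 : 12*eB (n+1) + 1 = -2*(3*n+4) := by unfold eB; push_cast; ring
    have q2 : 16*eB (n+1) = -4*(2*n+3) := by unfold eB; push_cast; ring
    have q3 : 12*eB (n+1) + 5 = -2*(3*n+2) := by unfold eB; push_cast; ring
    rw [q1, q2, q3]
    have q4 : (3*(n:ℚ)+2) ≠ 0 := by positivity
    have q5 : (3*(n:ℚ)+4) ≠ 0 := by positivity
    have q6 : (2*(n:ℚ)+3) ≠ 0 := by positivity
    generalize (3*(n:ℚ)+2) = a at *
    generalize (3*(n:ℚ)+4) = b at *
    generalize (2*(n:ℚ)+3) = c at *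
    refine ⟨?_, ?_, ?_⟩ <;> field_simp <;> norm_num

lemma FC_step (n : ℕ) (hn : n % 3 ≠ 1) :
    SF (eC (n+3)) (n+4) = 3*((2*n+2)/(4*(2*n+1)/3))^2 * SF (eC n) (n+1) ∧
    SK (eC (n+3)) (n+4) = 3*(2*n+2)*(2*n+6)/(4*(2*n+1)/3)^2 * SK (eC n) (n+1) ∧
    SW (eC (n+3)) (n+4) = 3*((2*n+6)/(4*(2*n+1)/3))^2 * SW (eC n) (n+1) := by
  have e0 : eC n ≠ 0 := by unfold eC; positivity
  have e1 : 4*eC n + 1 ≠ 0 := by unfold eC; positivity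
  have e2 : 12*eC n + 1 ≠ 0 := by unfold eC; positivity
  have e3 : 12*eC n + 5 ≠ 0 := by unfold eC; positivity
  have hu : uu (eC n) (n+4) = 0 := uu_zero_of _ _ (n+3) (by omega) (by unfold eC; push_cast; ring)
  have s1 := step_F (eC n) (n+4) (condC n _ hn) e0 e1 e2 e3 hu
  have s2 := step_K (eC n) (n+4) (condC n _ hn) e0 e1 e2 e3 hu
  have s3 := step_W (eC n) (n+4) (condC n _ hn) e0 e1 e2 e3 hu
  rw [← eC_succ, (sums_C n).1] at s1
  rw [← eC_succ, (sums_C n).2.1] at s2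
  rw [← eC_succ, (sums_C n).2.2] at s3
  have q1 : 12*eC n + 1 = 2*n+2 := by unfold eC; ring
  have q2 : 16*eC n = 4*(2*n+1)/3 := by unfold eC; ring
  have q3 : 12*eC n + 5 = 2*n+6 := by unfold eC; ring
  rw [q1, q2] at s1
  rw [q1, q2, q3] at s2
  rw [q2, q3] at s3
  exact ⟨s1, s2, s3⟩

lemma FC_one (m : ℕ) : SF (eC (3*m)) (3*m+1) = ∏ j ∈ Finset.range m, (27/4*((3*(j:ℚ)+1)/(6*j+1))^2) ∧
    SK (eC (3*m)) (3*m+1) = 0 ∧ SW (eC (3*m)) (3*m+1) = 0 := by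
  induction m with
  | zero => norm_num [SF, SK, SW, tt, eC, wK, wW]
  | succ m ih =>
    obtain ⟨s1, s2, s3⟩ := FC_step (3*m) (by omega)
    rw [ih.1] at s1
    rw [ih.2.1, mul_zero] at s2
    rw [ih.2.2, mul_zero] at s3
    refine ⟨?_, s2, s3⟩
    rw [Finset.prod_range_succ]
    have : 3*(m+1) = 3*m+3 := by ring
    rw [this, s1]
    push_cast
    have q : 6*(m:ℚ)+1 ≠ 0 := by positivity
    have q' : 2*(3*(m:ℚ))+1 = 6*m+1 := by ring
    rw [q']
    generalize (∏ x ∈ Finset.range m, (_:ℚ)) = P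
    generalize 6*(m:ℚ)+1 = a at *
    field_simp
    ring

lemma FC_two (m : ℕ) : SF (eC (3*m+2)) (3*m+3) = 0 ∧ SK (eC (3*m+2)) (3*m+3) = 0 := by
  induction m with
  | zero => norm_num [SF, SK, SW, tt, eC, wK, wW, Finset.sum_range_succ, Finset.prod_range_succ]
  | succ m ih =>
    obtain ⟨s1, s2, s3⟩ := FC_step (3*m+2) (by omega)
    rw [ih.1, mul_zero] at s1
    rw [ih.2, mul_zero] at s2
    exact ⟨s1, s2⟩

end S4


/-! ### Part 3: p-integral rationals, congruences, quadratic functions, truncated logs -/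
namespace S4

section
variable (p : ℕ) [hp : Fact p.Prime]

/-- the ring of p-integral rationals -/
def O : Subring ℚ where
  carrier := {x | ¬ p ∣ x.den}
  mul_mem' := by
    intro a b ha hb h
    rcases (Nat.Prime.dvd_mul hp.out).1 (h.trans (Rat.mul_den_dvd a b)) with h | h
    · exact ha h
    · exact hb h
  one_mem' := by
    simpa using hp.out.ne_one
  add_mem' := by
    intro a b ha hb h
    rcases (Nat.Prime.dvd_mul hp.out).1 (h.trans (Rat.add_den_dvd a b)) with h | h
    · exact ha h
    · exact hb h
  zero_mem' := by
    simpa using hp.out.ne_one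
  neg_mem' := by
    intro a ha
    simpa using ha

/-- divisibility by `p^r` among p-integral rationals -/
def M (r : ℕ) (x : ℚ) : Prop := ∃ c ∈ O p, x = (p:ℚ)^r * c

variable {p}

lemma inv_nat_mem {k : ℕ} (h : ¬ p ∣ k) : ((k:ℚ))⁻¹ ∈ O p := by
  change ¬ p ∣ ((k:ℚ)⁻¹).den
  have hk : k ≠ 0 := by rintro rfl; simp at h
  rw [Rat.inv_natCast_den_of_pos (Nat.pos_of_ne_zero hk)]
  exact h

lemma pne : (p:ℚ) ≠ 0 := by exact_mod_cast hp.out.ne_zero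

lemma p_mem : (p:ℚ) ∈ O p := natCast_mem _ _

lemma M.mem {r : ℕ} {x : ℚ} (h : M p r x) : x ∈ O p := by
  obtain ⟨c, hc, rfl⟩ := h
  exact mul_mem (pow_mem p_mem _) hc

lemma M_zero {r : ℕ} : M p r 0 := ⟨0, zero_mem _, by simp⟩

lemma M.add {r : ℕ} {x y : ℚ} (hx : M p r x) (hy : M p r y) : M p r (x+y) := by
  obtain ⟨c, hc, rfl⟩ := hx
  obtain ⟨d, hd, rfl⟩ := hy
  exact ⟨c+d, add_mem hc hd, by ring⟩

lemma M.neg {r : ℕ} {x : ℚ} (hx : M p r x) : M p r (-x) := by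
  obtain ⟨c, hc, rfl⟩ := hx
  exact ⟨-c, neg_mem hc, by ring⟩

lemma M.sub {r : ℕ} {x y : ℚ} (hx : M p r x) (hy : M p r y) : M p r (x-y) := by
  rw [sub_eq_add_neg]; exact hx.add hy.neg

lemma M.mul {r s : ℕ} {x y : ℚ} (hx : M p r x) (hy : M p s y) : M p (r+s) (x*y) := by
  obtain ⟨c, hc, rfl⟩ := hx
  obtain ⟨d, hd, rfl⟩ := hy
  exact ⟨c*d, mul_mem hc hd, by ring⟩

lemma M.lmul {r : ℕ} {x y : ℚ} (hx : x ∈ O p) (hy : M p r y) : M p r (x*y) := by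
  obtain ⟨d, hd, rfl⟩ := hy
  exact ⟨x*d, mul_mem hx hd, by ring⟩

lemma M.rmul {r : ℕ} {x y : ℚ} (hx : M p r x) (hy : y ∈ O p) : M p r (x*y) := by
  rw [mul_comm]; exact hx.lmul hy

lemma M.mono {r s : ℕ} {x : ℚ} (h : s ≤ r) (hx : M p r x) : M p s x := by
  obtain ⟨c, hc, rfl⟩ := hx
  obtain ⟨t, rfl⟩ := Nat.exists_eq_add_of_le h
  exact ⟨p^t*c, mul_mem (pow_mem p_mem _) hc, by ring⟩

lemma M.sum {ι : Type*} {r : ℕ} (s : Finset ι) (f : ι → ℚ) (h : ∀ i ∈ s, M p r (f i)) :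
    M p r (∑ i ∈ s, f i) := by
  classical
  induction s using Finset.induction_on with
  | empty => simpa using M_zero
  | insert a s ha ih =>
    rw [Finset.sum_insert ha]
    exact (h a (Finset.mem_insert_self _ _)).add (ih fun i hi => h i (Finset.mem_insert_of_mem hi))

lemma M_p : M p 1 (p:ℚ) := ⟨1, one_mem _, by simp⟩

lemma M.congr {r : ℕ} {x y : ℚ} (h : M p r x) (e : x = y) : M p r y := e ▸ h

lemma num_of_M {r : ℕ} {x : ℚ} (h : M p r x) : (p:ℤ)^r ∣ x.num := by
  obtain ⟨c, hc, hx⟩ := h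
  have h1 : x.num * c.den = (p:ℤ)^r * c.num * x.den := by
    have a1 : (x.num:ℚ) = x * x.den := by
      rw [Rat.mul_den_eq_num]
    have a2 : (c.num:ℚ) = c * c.den := by
      rw [Rat.mul_den_eq_num]
    have : ((x.num * c.den : ℤ) : ℚ) = (((p:ℤ)^r * c.num * x.den : ℤ) : ℚ) := by
      push_cast
      rw [a1, a2]
      nth_rewrite 1 [hx]
      ring
    exact_mod_cast this
  have h2 : IsCoprime ((p:ℤ)^r) (c.den : ℤ) := by
    apply IsCoprime.pow_left
    rw [Nat.isCoprime_iff_coprime]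
    exact (Nat.Prime.coprime_iff_not_dvd hp.out).2 hc
  refine h2.dvd_of_dvd_mul_right ?_
  rw [h1, mul_assoc]
  exact dvd_mul_right _ _

lemma M_int_iff {r : ℕ} {z : ℤ} : M p r (z:ℚ) ↔ (p:ℤ)^r ∣ z := by
  constructor
  · intro h
    have := num_of_M h
    simpa using this
  · rintro ⟨c, rfl⟩
    exact ⟨c, intCast_mem _ _, by push_cast; ring⟩

lemma not_M_one : ¬ M p 1 (1:ℚ) := by
  intro h
  have := (M_int_iff (p := p) (r := 1) (z := 1)).1 (by simpa using h)
  rw [pow_one] at this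
  have h2 : (p:ℤ) ∣ ((1:ℕ):ℤ) := by simpa using this
  rw [Int.natCast_dvd_natCast] at h2
  exact hp.out.one_lt.ne' (Nat.dvd_one.1 h2)

lemma M_of_num {x : ℚ} (hx : x ∈ O p) (h : (p:ℤ) ∣ x.num) : M p 1 x := by
  obtain ⟨c, hc⟩ := h
  refine ⟨c * (x.den:ℚ)⁻¹, mul_mem (intCast_mem _ _) (inv_nat_mem hx), ?_⟩
  have h2 : (x.den:ℚ) ≠ 0 := by exact_mod_cast x.den_nz
  have a1 : (x.num:ℚ) = x * x.den := by
    rw [Rat.mul_den_eq_num]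
  rw [hc] at a1
  push_cast at a1
  field_simp
  linarith

lemma inv_mem {x : ℚ} (hx : x ∈ O p) (h : ¬ M p 1 x) : x⁻¹ ∈ O p := by
  change ¬ p ∣ x⁻¹.den
  intro h2
  apply h
  apply M_of_num hx
  rw [Rat.den_inv] at h2
  split_ifs at h2 with h0
  · simp [h0]
  · exact Int.natCast_dvd.2 h2

lemma mem_of_unit_congr {x : ℚ} (h : M p 1 (x - 1)) : x ∈ O p ∧ x⁻¹ ∈ O p ∧ x ≠ 0 := by
  have hx : x ∈ O p := by
    have := add_mem h.mem (one_mem (O p))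
    simpa using this
  have h2 : ¬ M p 1 x := by
    intro h3
    apply not_M_one (p := p)
    have := h3.sub h
    simpa using this
  refine ⟨hx, inv_mem hx h2, ?_⟩
  rintro rfl
  exact h2 M_zero

/-- division by `p` -/
lemma M.div_p {r : ℕ} {x : ℚ} (h : M p (r+1) (p*x)) : M p r x := by
  obtain ⟨c, hc, hx⟩ := h
  refine ⟨c, hc, ?_⟩
  have := pne (p := p)
  apply mul_left_cancel₀ this
  rw [hx]; ring

lemma M.cancel {r : ℕ} {x y : ℚ} (h : M p r (x*y)) (hx : x⁻¹ ∈ O p) (h0 : x ≠ 0) : M p r y := by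
  have := h.lmul hx
  rwa [inv_mul_cancel_left₀ h0] at this

/-- numbers that are prime to p -/
lemma inv_lt {k : ℕ} (h0 : 0 < k) (h1 : k < p) : ((k:ℚ))⁻¹ ∈ O p :=
  inv_nat_mem fun h => absurd (Nat.le_of_dvd h0 h) (by omega)

end

section
variable {p : ℕ} [hp : Fact p.Prime] [h3 : Fact (3 < p)]

lemma two_mem : (2⁻¹:ℚ) ∈ O p := by
  have := inv_lt (p := p) (k := 2) (by norm_num) (by have := h3.out; omega)
  simpa using this
lemma three_mem : (3⁻¹:ℚ) ∈ O p := by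
  have := inv_lt (p := p) (k := 3) (by norm_num) h3.out
  simpa using this

lemma rat_mem (z : ℤ) (a b : ℕ) : (z:ℚ) / (2^a*3^b) ∈ O p := by
  have : (z:ℚ) / (2^a*3^b) = z * ((2⁻¹)^a * (3⁻¹)^b) := by
    rw [div_eq_mul_inv, mul_inv, inv_pow, inv_pow]
  rw [this]
  exact mul_mem (intCast_mem _ _) (mul_mem (pow_mem two_mem _) (pow_mem three_mem _))

lemma half_mem : (1/2:ℚ) ∈ O p := by simpa using rat_mem (p := p) 1 1 0

/-- truncated exponential relation -/
def L (p : ℕ) [Fact p.Prime] (a α : ℚ) : Prop := M p 1 α ∧ M p 3 (a - (1 + α + α^2/2))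

lemma L.congr {a α a' α' : ℚ} (h : L p a α) (ha : a = a') (hα : α = α') : L p a' α' := ha ▸ hα ▸ h

lemma L_one : L p 1 0 := ⟨M_zero, by simpa using M_zero⟩

lemma L.one_congr {a α : ℚ} (h : L p a α) : M p 1 (a - 1) := by
  have h1 := h.2.mono (show 1 ≤ 3 by norm_num)
  have h2 : M p 1 (α * (1 + α * (1/2))) :=
    h.1.rmul (add_mem (one_mem _) (mul_mem h.1.mem half_mem))
  exact (h1.add h2).congr (by ring)

lemma L.mem {a α : ℚ} (h : L p a α) : a ∈ O p := (mem_of_unit_congr h.one_congr).1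
lemma L.ne {a α : ℚ} (h : L p a α) : a ≠ 0 := (mem_of_unit_congr h.one_congr).2.2
lemma L.inv_mem {a α : ℚ} (h : L p a α) : a⁻¹ ∈ O p := (mem_of_unit_congr h.one_congr).2.1

lemma L.mul {a b α β : ℚ} (ha : L p a α) (hb : L p b β) : L p (a*b) (α+β) := by
  refine ⟨ha.1.add hb.1, ?_⟩
  have i1 : M p 3 (α * α * β) := (ha.1.mul ha.1).mul hb.1
  have i2 : M p 3 (α * β * β) := (ha.1.mul hb.1).mul hb.1
  have i3 : M p 3 ((α * α * β) * (β * (1/2*(1/2)))) :=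
    i1.rmul (mul_mem hb.1.mem (mul_mem half_mem half_mem))
  have j1 := ha.2.rmul hb.mem
  have hE : (1 + α + α^2/2) ∈ O p := by
    have := sub_mem ha.mem ha.2.mem
    simpa using this
  have j2 := hb.2.lmul hE
  exact ((j1.add j2).add (((i1.rmul half_mem).add (i2.rmul half_mem)).add i3)).congr (by ring)

/-- M 3 of difference allows changing the log -/
lemma L.change {a α β : ℚ} (h : L p a α) (hd : M p 3 (α - β)) : L p a β := by
  have hb : M p 1 β := (h.1.sub (hd.mono (by norm_num))).congr (by ring)
  refine ⟨hb, ?_⟩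
  have : M p 3 ((α - β) * (1 + (α + β) * (1/2))) :=
    hd.rmul (add_mem (one_mem _) (mul_mem (add_mem h.1.mem hb.mem) half_mem))
  exact (h.2.add this).congr (by ring)

lemma L.change_left {a b α : ℚ} (h : L p a α) (hd : M p 3 (a - b)) : L p b α :=
  ⟨h.1, (h.2.sub hd).congr (by ring)⟩

lemma M1_unit {u : ℚ} (h : M p 1 u) : (1 + u)⁻¹ ∈ O p ∧ 1 + u ≠ 0 :=
  (mem_of_unit_congr (h.congr (by ring : u = (1 + u) - 1))).2

lemma L.inj {a α β : ℚ} (h : L p a α) (h' : L p a β) : M p 3 (α - β) := by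
  have h1 : M p 3 ((1 + (α + β) * (1/2)) * (α - β)) := (h'.2.sub h.2).congr (by ring)
  have h2 := M1_unit ((h.1.add h'.1).rmul half_mem)
  exact h1.cancel h2.1 h2.2

lemma L.inv {a α : ℚ} (h : L p a α) : L p a⁻¹ (-α) := by
  refine ⟨h.1.neg, ?_⟩
  have h0 := h.ne
  have hi := h.inv_mem
  have i1 : M p 3 (α * α * α) := (h.1.mul h.1).mul h.1
  have hE : (1 - α + α*α*(1/2)) ∈ O p :=
    add_mem (sub_mem (one_mem _) h.1.mem) (mul_mem (mul_mem h.1.mem h.1.mem) half_mem)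
  have j1 := (h.2.rmul hE)
  have j2 : M p 3 ((α * α * α) * (α * (1/2*(1/2)))) :=
    i1.rmul (mul_mem h.1.mem (mul_mem half_mem half_mem))
  -- a * E(-α) - 1 = (a - Eα) E(-α) + α^4/4
  have j3 := ((j1.add j2).lmul hi).neg
  refine j3.congr ?_
  field_simp
  ring

lemma L.div {a b α β : ℚ} (ha : L p a α) (hb : L p b β) : L p (a/b) (α-β) := by
  rw [div_eq_mul_inv, sub_eq_add_neg]; exact ha.mul hb.inv

lemma L.sq {a α : ℚ} (ha : L p a α) : L p (a^2) (2*α) := by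
  rw [pow_two, two_mul]; exact ha.mul ha

lemma L.prod {ι : Type*} (s : Finset ι) (f g : ι → ℚ) (h : ∀ i ∈ s, L p (f i) (g i)) :
    L p (∏ i ∈ s, f i) (∑ i ∈ s, g i) := by
  classical
  induction s using Finset.induction_on with
  | empty => simpa using L_one
  | insert a s ha ih =>
    rw [Finset.sum_insert ha, Finset.prod_insert ha]
    exact (h a (Finset.mem_insert_self _ _)).mul (ih fun i hi => h i (Finset.mem_insert_of_mem hi))

lemma L_lin {z : ℚ} (hz : M p 1 z) : L p (1 - z) (-z - z^2/2) := by
  have h1 : M p 2 (z*z*(1/2)) := (hz.mul hz).rmul half_mem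
  refine ⟨(hz.neg.sub (h1.mono (by norm_num))).congr (by ring), ?_⟩
  have h2 : M p 3 (z*z*z) := (hz.mul hz).mul hz
  have h3 : M p 3 ((z*z*z) * (1/2 + z*(1/2*(1/2*(1/2))))) :=
    h2.rmul (add_mem half_mem (mul_mem hz.mem (mul_mem half_mem (mul_mem half_mem half_mem))))
  exact h3.neg.congr (by ring)

lemma L.sqrt {a α : ℚ} (h : L p (a^2) α) (h1 : M p 1 (a - 1)) : L p a (α/2) := by
  have hα : M p 1 (α/2) := (h.1.rmul half_mem).congr (by ring)
  have i1 : M p 3 (α * α * α) := (h.1.mul h.1).mul h.1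
  refine ⟨hα, ?_⟩
  have hb : L p ((1 + α/2 + (α/2)^2/2)^2) α := by
    have : L p (1 + α/2 + (α/2)^2/2) (α/2) := ⟨hα, by simpa using M_zero⟩
    exact this.sq.congr rfl (by ring)
  set b := 1 + α/2 + (α/2)^2/2 with hbdef
  have hb1 : M p 1 (b - 1) := by
    have : L p b (α/2) := ⟨hα, M_zero.congr (sub_self b).symm⟩
    exact this.one_congr
  have j : M p 3 ((a + b) * (a - b)) := (h.2.sub hb.2).congr (by ring)
  have h2 := M1_unit ((h1.add hb1).rmul half_mem)
  have j2 : M p 3 ((1 + (a - 1 + (b - 1)) * (1/2)) * (a - b)) := (j.lmul (half_mem (p := p))).congr (by ring)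
  exact j2.cancel h2.1 h2.2

/-- functions that are quadratic in `p δ` modulo `p^3` -/
def Quad (p : ℕ) [Fact p.Prime] (f : ℚ → ℚ) : Prop := ∃ c0 ∈ O p, ∃ c1 ∈ O p, ∃ c2 ∈ O p, ∀ δ ∈ O p,
  M p 3 (f δ - (c0 + c1 * (p*δ) + c2 * (p*δ)^2))

lemma Quad.const {c : ℚ} (hc : c ∈ O p) : Quad p (fun _ => c) :=
  ⟨c, hc, 0, zero_mem _, 0, zero_mem _, fun δ _ => by simpa using M_zero⟩

lemma Quad.lin {a b : ℚ} (ha : a ∈ O p) (hb : b ∈ O p) : Quad p (fun δ => a + b * (p*δ)) :=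
  ⟨a, ha, b, hb, 0, zero_mem _, fun δ _ => by simpa using M_zero⟩

lemma Quad.add {f g : ℚ → ℚ} (hf : Quad p f) (hg : Quad p g) : Quad p (fun δ => f δ + g δ) := by
  obtain ⟨a0, ha0, a1, ha1, a2, ha2, ha⟩ := hf
  obtain ⟨b0, hb0, b1, hb1, b2, hb2, hb⟩ := hg
  exact ⟨a0+b0, add_mem ha0 hb0, a1+b1, add_mem ha1 hb1, a2+b2, add_mem ha2 hb2,
    fun δ hδ => ((ha δ hδ).add (hb δ hδ)).congr (by ring)⟩

lemma Quad.mul {f g : ℚ → ℚ} (hf : Quad p f) (hg : Quad p g) : Quad p (fun δ => f δ * g δ) := by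
  obtain ⟨a0, ha0, a1, ha1, a2, ha2, ha⟩ := hf
  obtain ⟨b0, hb0, b1, hb1, b2, hb2, hb⟩ := hg
  refine ⟨a0*b0, mul_mem ha0 hb0, a0*b1+a1*b0, add_mem (mul_mem ha0 hb1) (mul_mem ha1 hb0),
    a0*b2+a1*b1+a2*b0, add_mem (add_mem (mul_mem ha0 hb2) (mul_mem ha1 hb1)) (mul_mem ha2 hb0),
    fun δ hδ => ?_⟩
  have hpd : M p 1 (p*δ) := M_p.rmul hδ
  have h3 : M p 3 ((p*δ)*(p*δ)*(p*δ)) := (hpd.mul hpd).mul hpd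
  have hB : b0 + b1 * (p*δ) + b2 * (p*δ)^2 ∈ O p :=
    add_mem (add_mem hb0 (mul_mem hb1 hpd.mem)) (mul_mem hb2 (pow_mem hpd.mem 2))
  have hg' : g δ ∈ O p := by
    have := add_mem (hb δ hδ).mem hB
    simpa using this
  have hA : a0 + a1 * (p*δ) + a2 * (p*δ)^2 ∈ O p :=
    add_mem (add_mem ha0 (mul_mem ha1 hpd.mem)) (mul_mem ha2 (pow_mem hpd.mem 2))
  have k1 := (ha δ hδ).rmul hg'
  have k2 := (hb δ hδ).lmul hA
  have k3 : M p 3 (((p*δ)*(p*δ)*(p*δ)) * (a1*b2+a2*b1+a2*b2*(p*δ))) :=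
    h3.rmul (add_mem (add_mem (mul_mem ha1 hb2) (mul_mem ha2 hb1)) (mul_mem (mul_mem ha2 hb2) hpd.mem))
  exact ((k1.add k2).add k3).congr (by ring)

lemma Quad.congr {f g : ℚ → ℚ} (hf : Quad p f) (h : ∀ δ, f δ = g δ) : Quad p g := by
  have : f = g := funext h
  exact this ▸ hf

lemma Quad.inv1 {b : ℚ} (hb : b ∈ O p) : Quad p (fun δ => (1 + b * (p*δ))⁻¹) := by
  refine ⟨1, one_mem _, -b, neg_mem hb, b^2, pow_mem hb 2, fun δ hδ => ?_⟩
  have hpd : M p 1 (b*(p*δ)) := (M_p.rmul hδ).lmul hb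
  obtain ⟨h1, h2⟩ := M1_unit hpd
  have h3 : M p 3 ((b*(p*δ))*(b*(p*δ))*(b*(p*δ))) := (hpd.mul hpd).mul hpd
  refine (h3.lmul h1).neg.congr ?_
  beta_reduce
  generalize hu : 1 + b*(p*δ) = u at *
  have : b*(p*δ) = u - 1 := by rw [← hu]; ring
  have e1 : -b*(p*δ) = -(u-1) := by rw [← this]; ring
  have e2 : b^2*(p*δ)^2 = (u-1)^2 := by rw [← this]; ring
  rw [e1, e2, this]
  field_simp
  ring

/-- inverse of `a + b p δ` with `a` a unit -/
lemma Quad.inv {a b : ℚ} (ha : a⁻¹ ∈ O p) (h0 : a ≠ 0) (hb : b ∈ O p) :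
    Quad p (fun δ => (a + b * (p*δ))⁻¹) := by
  refine ((Quad.const ha).mul (Quad.inv1 (mul_mem ha hb))).congr fun δ => ?_
  rw [← mul_inv]
  congr 1
  field_simp

lemma Quad.prod {ι : Type*} (s : Finset ι) (f : ι → ℚ → ℚ) (h : ∀ i ∈ s, Quad p (f i)) :
    Quad p (fun δ => ∏ i ∈ s, f i δ) := by
  classical
  induction s using Finset.induction_on with
  | empty => simpa using Quad.const (one_mem (O p))
  | insert a s ha ih =>
    refine ((h a (Finset.mem_insert_self _ _)).mul
      (ih fun i hi => h i (Finset.mem_insert_of_mem hi))).congr fun δ => ?_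
    rw [Finset.prod_insert ha]

lemma Quad.sum {ι : Type*} (s : Finset ι) (f : ι → ℚ → ℚ) (h : ∀ i ∈ s, Quad p (f i)) :
    Quad p (fun δ => ∑ i ∈ s, f i δ) := by
  classical
  induction s using Finset.induction_on with
  | empty => simpa using Quad.const (zero_mem (O p))
  | insert a s ha ih =>
    refine ((h a (Finset.mem_insert_self _ _)).add
      (ih fun i hi => h i (Finset.mem_insert_of_mem hi))).congr fun δ => ?_
    rw [Finset.sum_insert ha]

lemma mem4 : (1/4:ℚ) ∈ O p := by
  have := rat_mem (p := p) 1 2 0; norm_num at this; simpa using this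
lemma mem12 : (1/12:ℚ) ∈ O p := by
  have := rat_mem (p := p) 1 2 1; norm_num at this; simpa using this

/-- three-node interpolation -/
lemma Quad.interp {f : ℚ → ℚ} (hf : Quad p f) :
    M p 3 (f 0 - (f (-1/4) / 8 - f (1/4) / 4 + 9 / 8 * f (1/12))) ∧
    M p 2 (f 0 - (f (-1/4) + f (1/4)) / 2) ∧ M p 1 (f (1/4) - f 0) ∧ M p 1 (f (-1/4) - f 0) ∧
      M p 1 (f (1/12) - f 0) := by
  obtain ⟨a0, ha0, a1, ha1, a2, ha2, ha⟩ := hf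
  have n0 := ha 0 (zero_mem _)
  have nA := ha (1/4) mem4
  have nB := ha (-1/4) (by have := neg_mem (mem4 (p := p)); simpa [neg_div] using this)
  have nC := ha (1/12) mem12
  have h8 : (1/8:ℚ) ∈ O p := by have := rat_mem (p := p) 1 3 0; norm_num at this; simpa using this
  have h98 : (9/8:ℚ) ∈ O p := by have := rat_mem (p := p) 9 3 0; norm_num at this; simpa using this
  have hq : M p 2 ((p:ℚ)*p*(a2*(1/4*(1/4)))) := (M_p.mul M_p).rmul (mul_mem ha2 (mul_mem mem4 mem4))
  have hl : ∀ d ∈ O p, M p 1 ((p:ℚ)*(d*(a1 + a2*(p*d)))) := fun d hd =>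
    M_p.rmul (mul_mem hd (add_mem ha1 (mul_mem ha2 (mul_mem p_mem hd))))
  refine ⟨?_, ?_, ?_, ?_, ?_⟩
  · exact (((n0.sub (nB.lmul h8)).add (nA.lmul mem4)).sub (nC.lmul h98)).congr (by ring)
  · exact (((n0.sub ((nA.add nB).lmul half_mem)).mono (by norm_num)).sub hq).congr (by ring)
  · exact (((nA.sub n0).mono (by norm_num)).add (hl _ mem4)).congr (by ring)
  · exact (((nB.sub n0).mono (by norm_num)).add (hl _ (neg_mem mem4))).congr (by ring)
  · exact (((nC.sub n0).mono (by norm_num)).add (hl _ mem12)).congr (by ring)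

end
end S4


/-! ### Part 4: reductions -/
namespace S4

/-- the sums in question -/
def S (i p : ℕ) : ℚ := ∑ k ∈ Finset.range p, (k:ℚ)^i * ((2*k).choose k : ℚ)^3 / 256^k

lemma a_eq (j : ℕ) : ((2*j).choose j : ℚ)^3 / 256^j = tt 0 j := by
  induction j with
  | zero => simp [tt]
  | succ j ih =>
    rw [tt_succ, ← ih]
    have h := Nat.succ_mul_centralBinom_succ j
    rw [Nat.centralBinom, Nat.centralBinom] at h
    have h' : ((j:ℚ)+1) * ((2*(j+1)).choose (j+1) : ℚ) = 2*(2*j+1)*((2*j).choose j : ℚ) := by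
      exact_mod_cast h
    have h1 : ((2*(j+1)).choose (j+1) : ℚ) = 2*(2*j+1)*((2*j).choose j : ℚ) / (j+1) := by
      rw [eq_div_iff (by positivity)]; linarith
    rw [h1, pow_succ]
    have h2 : (j:ℚ)+1 ≠ 0 := by positivity
    have h3 : 1 - 4*(0:ℚ) + j = j + 1 := by ring
    have h4 : 1 - 2*(0:ℚ) + j = j + 1 := by ring
    rw [h3, h4]
    generalize ((2*j).choose j : ℚ) = c
    field_simp
    ring

lemma tel (N : ℕ) : ∑ j ∈ Finset.range N, ((2*(j:ℚ)+1)^3 - 32*(j:ℚ)^3) * tt 0 j = 32*(N:ℚ)^3 * tt 0 N := by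
  induction N with
  | zero => simp
  | succ j ih =>
    rw [Finset.sum_range_succ, ih, tt_succ]
    have h2 : (j:ℚ)+1 ≠ 0 := by positivity
    have h3 : 1 - 4*(0:ℚ) + j = j + 1 := by ring
    have h4 : 1 - 2*(0:ℚ) + j = j + 1 := by ring
    rw [h3, h4]
    push_cast
    field_simp
    ring

section
variable {p : ℕ} [hp : Fact p.Prime] [h3 : Fact (3 < p)]

lemma inv256 (j : ℕ) : ((256:ℚ)^j)⁻¹ ∈ O p := by
  have : ((256:ℚ)^j)⁻¹ = ((2⁻¹:ℚ)^8)^j := by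
    rw [← inv_pow]; norm_num
  rw [this]
  exact pow_mem (pow_mem two_mem _) _

lemma a_mem (j : ℕ) : tt 0 j ∈ O p := by
  rw [← a_eq, div_eq_mul_inv]
  exact mul_mem (pow_mem (natCast_mem _ _) _) (inv256 j)

lemma a_M (j : ℕ) (h1 : j < p) (h2 : p ≤ 2*j) : M p 3 (tt 0 j) := by
  rw [← a_eq, div_eq_mul_inv]
  apply M.rmul _ (inv256 j)
  have := hp.out.dvd_choose_add h1 h1 (by omega)
  rw [← two_mul] at this
  obtain ⟨c, hc⟩ := this
  rw [hc]
  exact ⟨(c:ℚ)^3, pow_mem (natCast_mem _ _) _, by push_cast; ring⟩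

lemma S_eq (i n : ℕ) (hn : p = 2*n+1) :
    M p 3 (S i p - ∑ j ∈ Finset.range (n+1), (j:ℚ)^i * tt 0 j) := by
  have e : S i p = ∑ j ∈ Finset.range p, (j:ℚ)^i * tt 0 j := by
    unfold S
    apply Finset.sum_congr rfl
    intro j _
    rw [← a_eq]; ring
  have e2 : p = (n+1) + n := by omega
  rw [e]
  nth_rewrite 2 [e2]
  rw [Finset.sum_range_add, add_sub_cancel_left]
  apply M.sum
  intro x hx
  have hx := Finset.mem_range.1 hx
  exact (a_M (n+1+x) (by omega) (by omega)).lmul (pow_mem (natCast_mem _ _) _)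

lemma S3_eq : M p 3 (S 3 p - S 2 p / 2 - (S 1 p + S 0 p / 6)/4) := by
  have e : ∀ i, S i p = ∑ j ∈ Finset.range p, (j:ℚ)^i * tt 0 j := by
    intro i
    unfold S
    apply Finset.sum_congr rfl
    intro j _
    rw [← a_eq]; ring
  have h := tel p
  have h1 : -24 * S 3 p + 12 * S 2 p + 6 * S 1 p + S 0 p = 32*(p:ℚ)^3 * tt 0 p := by
    rw [← h]
    simp only [e, Finset.mul_sum, ← Finset.sum_add_distrib]
    apply Finset.sum_congr rfl
    intro j _
    ring
  have h4 : (1/24:ℚ) ∈ O p := by have := rat_mem (p := p) 1 3 1; norm_num at this; simpa using this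
  have h2 : M p 3 (32*(p:ℚ)^3 * tt 0 p) := ⟨32 * tt 0 p, mul_mem (ofNat_mem _ 32) (a_mem _), by ring⟩
  rw [← h1] at h2
  exact (h2.lmul h4).neg.congr (by ring)

lemma Quad_tt (n : ℕ) (hn : p = 2*n+1) (j : ℕ) (hj : j ≤ n) : Quad p (fun δ => tt (p*δ) j) := by
  have hi : ∀ i ∈ Finset.range j, Quad p (fun δ => ((1/2 + 2*(p*δ) + i) * (1/2 - 6*(p*δ) + i) * (1/2 - 2*(p*δ) + i)) /
    ((1 - 4*(p*δ) + i) * (1 - 2*(p*δ) + i) * ((i:ℚ) + 1) * 4)) := by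
    intro i hi
    have hi := Finset.mem_range.1 hi
    have m1 : (1/2:ℚ) + i ∈ O p := add_mem half_mem (natCast_mem _ _)
    have u1 : ((i:ℚ)+1)⁻¹ ∈ O p := by
      have := inv_lt (p := p) (k := i+1) (by omega) (by omega)
      exact_mod_cast this
    have u0 : (i:ℚ)+1 ≠ 0 := by positivity
    have q1 := Quad.lin (p := p) m1 (ofNat_mem (O p) 2)
    have q2 := Quad.lin (p := p) m1 (neg_mem (ofNat_mem (O p) 6))
    have q3 := Quad.lin (p := p) m1 (neg_mem (ofNat_mem (O p) 2))
    have r1 := Quad.inv (p := p) u1 u0 (neg_mem (ofNat_mem (O p) 4))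
    have r2 := Quad.inv (p := p) u1 u0 (neg_mem (ofNat_mem (O p) 2))
    have r3 := Quad.const (p := p) (mul_mem u1 mem4)
    refine (((q1.mul q2).mul q3).mul ((r1.mul r2).mul r3)).congr fun δ => ?_
    have a1 : 1 - 4*(p*δ) + (i:ℚ) = (i + 1 + -OfNat.ofNat 4 * (p*δ)) := by
      ring
    have a2 : 1 - 2*(p*δ) + (i:ℚ) = (i + 1 + -OfNat.ofNat 2 * (p*δ)) := by
      ring
    rw [a1, a2]
    generalize (i:ℚ) + 1 + -OfNat.ofNat 4 * (p*δ) = A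
    generalize (i:ℚ) + 1 + -OfNat.ofNat 2 * (p*δ) = B
    generalize (i:ℚ) + 1 = D
    change (1/2 + (i:ℚ) + 2 * (p*δ)) * (1/2 + (i:ℚ) + -6 * (p*δ)) * (1/2 + (i:ℚ) + -2 * (p*δ)) * _ = _
    simp only [div_eq_mul_inv, mul_inv, one_mul]
    ring
  exact Quad.prod _ _ hi

lemma Quad_SF (n : ℕ) (hn : p = 2*n+1) : Quad p (fun δ => SF (p*δ) (n+1)) := by
  unfold SF
  exact Quad.sum _ _ fun j hj => Quad_tt n hn j (by have := Finset.mem_range.1 hj; omega)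

lemma six_mem : (1/6:ℚ) ∈ O p := by have := rat_mem (p := p) 1 1 1; norm_num at this; simpa using this

lemma Quad_wK (j : ℕ) : Quad p (fun δ => wK (p*δ) j) := by
  refine (Quad.lin (p := p) (add_mem (natCast_mem (O p) j) six_mem) (neg_mem (ofNat_mem (O p) 2))).congr fun δ => ?_
  unfold wK
  change _ + -2 * (p*δ) = _
  ring

lemma Quad_SK (n : ℕ) (hn : p = 2*n+1) : Quad p (fun δ => SK (p*δ) (n+1)) := by
  unfold SK
  exact Quad.sum _ _ fun j hj =>
    (Quad_wK j).mul (Quad_tt n hn j (by have := Finset.mem_range.1 hj; omega))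

lemma Quad_SW (n : ℕ) (hn : p = 2*n+1) : Quad p (fun δ => SW (p*δ) (n+1)) := by
  unfold SW
  refine Quad.sum _ _ fun j hj =>
    Quad.mul ?_ (Quad_tt n hn j (by have := Finset.mem_range.1 hj; omega))
  have q1 := Quad.lin (p := p) (neg_mem six_mem) (ofNat_mem (O p) 2)
  have q2 := Quad.lin (p := p) (zero_mem _) (neg_mem (ofNat_mem (O p) 4))
  have q3 := Quad.const (p := p) (pow_mem (natCast_mem (O p) j) 2)
  have q4 := Quad.const (p := p) (neg_mem (one_mem (O p)))
  refine ((q3.add (q4.mul (q1.mul q1))).add (q2.mul (Quad_wK j))).congr fun δ => ?_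
  unfold wW wK
  change _ + -1 * ((-(1/6) + 2*(p*δ)) * (-(1/6) + 2*(p*δ))) + (0 + -4 * (p*δ)) * _ = _
  ring

lemma interp_all (n : ℕ) (hn : p = 2*n+1) (G : ℚ → ℚ) (hG : Quad p (fun δ => G (p*δ))) :
    M p 3 (G 0 - (G (eB n) / 8 - G (eA n) / 4 + 9 / 8 * G (eC n))) ∧
    M p 2 (G 0 - (G (eB n) + G (eA n)) / 2) ∧ M p 1 (G (eA n) - G 0) ∧ M p 1 (G (eB n) - G 0) ∧
      M p 1 (G (eC n) - G 0) := by
  have h := hG.interp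
  have a : (p:ℚ) * (1/4) = eA n := by rw [hn]; unfold eA; push_cast; ring
  have b : (p:ℚ) * (-1/4) = eB n := by rw [hn]; unfold eB; push_cast; ring
  have c : (p:ℚ) * (1/12) = eC n := by rw [hn]; unfold eC; push_cast; ring
  simpa only [a, b, c, mul_zero] using h

lemma S0_eq (n : ℕ) (hn : p = 2*n+1) : M p 3 (S 0 p - SF 0 (n+1)) :=
  (S_eq 0 n hn).congr (by simp [SF])

lemma S1_eq (n : ℕ) (hn : p = 2*n+1) : M p 3 (S 1 p + S 0 p / 6 - SK 0 (n+1)) := by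
  refine ((S_eq 1 n hn).add ((S_eq 0 n hn).lmul six_mem)).congr ?_
  have : SK 0 (n+1) = ∑ j ∈ Finset.range (n+1), (j:ℚ)^1 * tt 0 j +
    1/6 * ∑ j ∈ Finset.range (n+1), (j:ℚ)^0 * tt 0 j := by
    rw [SK, Finset.mul_sum, ← Finset.sum_add_distrib]
    apply Finset.sum_congr rfl
    intro j _
    unfold wK; ring
  rw [this]; ring

lemma S2_eq (n : ℕ) (hn : p = 2*n+1) : M p 3 (S 2 p - (SF 0 (n+1) / 36 + SW 0 (n+1))) := by
  refine (S_eq 2 n hn).congr ?_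
  have : SW 0 (n+1) + SF 0 (n+1) / 36 = ∑ j ∈ Finset.range (n+1), (j:ℚ)^2 * tt 0 j := by
    rw [SW, SF, Finset.sum_div, ← Finset.sum_add_distrib]
    apply Finset.sum_congr rfl
    intro j _
    unfold wW; ring
  rw [← this]; ring

end
end S4


/-! ### Part 5: products of arithmetic progressions and their logarithms -/
namespace S4

/-- rising factorial -/
def R (z : ℚ) (k : ℕ) : ℚ := ∏ s ∈ Finset.range k, (z + s)

lemma R_zero (z : ℚ) : R z 0 = 1 := by simp [R]
lemma R_succ (z : ℚ) (k : ℕ) : R z (k+1) = R z k * (z + k) := by simp [R, Finset.prod_range_succ]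
lemma R_split (z : ℚ) (k l : ℕ) : R z (k+l) = R z k * R (z+k) l := by
  unfold R
  rw [Finset.prod_range_add]
  congr 1
  apply Finset.prod_congr rfl
  intro i _
  push_cast; ring
lemma R_succ' (z : ℚ) (k : ℕ) : R z (k+1) = z * R (z+1) k := by
  rw [add_comm k 1, R_split]; simp [R]
lemma R_refl (z : ℚ) (k : ℕ) : R z k = (-1)^k * R (1 - z - k) k := by
  unfold R
  rw [← Finset.prod_range_reflect]
  have : ((-1:ℚ))^k = ∏ s ∈ Finset.range k, (-1:ℚ) := by simp
  rw [this, ← Finset.prod_mul_distrib]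
  apply Finset.prod_congr rfl
  intro i hi
  have hi := Finset.mem_range.1 hi
  have : ((k - 1 - i : ℕ) : ℚ) = k - 1 - i := by
    rw [Nat.cast_sub (by omega), Nat.cast_sub (by omega)]; push_cast; ring
  rw [this]; ring
lemma R_refl' {z w : ℚ} (k : ℕ) (h : w = 1 - z - k) : R z k = (-1)^k * R w k := by
  rw [h, ← R_refl]
lemma R_dup (z : ℚ) (k : ℕ) : R (2*z) (2*k) = 4^k * R z k * R (z+1/2) k := by
  induction k with
  | zero => simp [R]
  | succ k ih =>
    rw [show 2*(k+1) = 2*k+1+1 by ring, R_succ, R_succ, ih, R_succ, R_succ]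
    push_cast; ring
lemma R_dup' (z : ℚ) (k : ℕ) : R (2*z) (2*k+1) = 2*4^k * R z (k+1) * R (z+1/2) k := by
  rw [R_succ, R_dup, R_succ]; push_cast; ring
lemma R_trip (z : ℚ) (k : ℕ) : R (3*z) (3*k) = 27^k * R z k * R (z+1/3) k * R (z+2/3) k := by
  induction k with
  | zero => simp [R]
  | succ k ih =>
    rw [show 3*(k+1) = 3*k+1+1+1 by ring, R_succ, R_succ, R_succ, ih, R_succ, R_succ, R_succ]
    push_cast; ring
lemma R_trip' (z : ℚ) (k : ℕ) : R (3*z) (3*k+1) = 3*27^k * R z (k+1) * R (z+1/3) k * R (z+2/3) k := by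
  rw [R_succ, R_trip, R_succ]; push_cast; ring
lemma R_one (k : ℕ) : R 1 k = k.factorial := by
  induction k with
  | zero => simp [R]
  | succ k ih => rw [R_succ, ih, Nat.factorial_succ]; push_cast; ring
lemma R_scale (c z : ℚ) (k : ℕ) : ∏ s ∈ Finset.range k, (c * (z + s)) = c^k * R z k := by
  rw [Finset.prod_mul_distrib]; simp [R]

/-- normalised product -/
def PP (p k : ℕ) (x : ℚ) : ℚ := R (1 - x*p) k / k.factorial
/-- `p` times harmonic number -/
def hh (p k : ℕ) : ℚ := ∑ s ∈ Finset.range k, (p:ℚ) * ((s:ℚ)+1)⁻¹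
def ss (p k : ℕ) : ℚ := ∑ s ∈ Finset.range k, ((p:ℚ) * ((s:ℚ)+1)⁻¹)^2

lemma fac_ne (k : ℕ) : (k.factorial : ℚ) ≠ 0 := by exact_mod_cast k.factorial_ne_zero

lemma R_PP (p k : ℕ) (x : ℚ) : R (1 - x*p) k = k.factorial * PP p k x := by
  unfold PP; field_simp [fac_ne k]

lemma R_PP' (p k : ℕ) (x : ℚ) {z : ℚ} (h : z = 1 - x*p) : R z k = k.factorial * PP p k x := by
  rw [h, R_PP]

lemma PP_zero (p k : ℕ) : PP p k 0 = 1 := by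
  unfold PP; rw [zero_mul, sub_zero, R_one, div_self (fac_ne k)]

lemma PP_eq (p k : ℕ) (x : ℚ) : PP p k x = ∏ s ∈ Finset.range k, (1 - x * (p * ((s:ℚ)+1)⁻¹)) := by
  induction k with
  | zero => simp [PP, R]
  | succ k ih =>
    rw [Finset.prod_range_succ, ← ih]
    unfold PP
    rw [R_succ, Nat.factorial_succ]
    have := fac_ne k
    have h2 : (k:ℚ)+1 ≠ 0 := by positivity
    push_cast
    field_simp
    ring

section
variable {p : ℕ} [hp : Fact p.Prime] [h3 : Fact (3 < p)]

lemma M_hh {k : ℕ} (hk : k < p) : M p 1 (hh p k) := by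
  apply M.sum
  intro i hi
  have hi := Finset.mem_range.1 hi
  have := inv_lt (p := p) (k := i+1) (by omega) (by omega)
  push_cast at this
  exact M_p.rmul this

lemma M_ss {k : ℕ} (hk : k < p) : M p 2 (ss p k) := by
  apply M.sum
  intro i hi
  have hi := Finset.mem_range.1 hi
  have := inv_lt (p := p) (k := i+1) (by omega) (by omega)
  push_cast at this
  have := M_p.rmul this
  exact (this.mul this).congr (by ring)

lemma L_PP {k : ℕ} (hk : k < p) {x : ℚ} (hx : x ∈ O p) :
    L p (PP p k x) (-x * hh p k - x^2 * ss p k / 2) := by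
  rw [PP_eq]
  have : -x * hh p k - x^2 * ss p k / 2 = ∑ s ∈ Finset.range k,
      (- (x * (p * ((s:ℚ)+1)⁻¹)) - (x * (p * ((s:ℚ)+1)⁻¹))^2/2) := by
    unfold hh ss
    rw [Finset.mul_sum, Finset.mul_sum, Finset.sum_div, ← Finset.sum_sub_distrib]
    apply Finset.sum_congr rfl
    intro i _
    ring
  rw [this]
  apply L.prod
  intro i hi
  have hi := Finset.mem_range.1 hi
  have := inv_lt (p := p) (k := i+1) (by omega) (by omega)
  push_cast at this
  exact L_lin ((M_p.rmul this).lmul hx)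

lemma PP_ne {k : ℕ} (hk : k < p) {x : ℚ} (hx : x ∈ O p) : PP p k x ≠ 0 := (L_PP hk hx).ne

lemma sgn_ne (k : ℕ) : ((-1:ℚ))^k ≠ 0 := by positivity

lemma sgn_sq (k : ℕ) : ((-1:ℚ))^k * (-1)^k = 1 := by rw [← mul_pow]; norm_num

/-- reflection -/
lemma refl_fac {k l : ℕ} (h : p = k + l + 1) (x : ℚ) :
    ((p-1).factorial : ℚ) * PP p (p-1) x = (-1)^l * k.factorial * l.factorial * PP p k x * PP p l (1-x) := by
  have e : p - 1 = k + l := by omega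
  have hq : (p:ℚ) = k + l + 1 := by exact_mod_cast h
  rw [← R_PP]
  rw [e]
  rw [R_split, R_PP, R_refl' l (w := 1 - (1-x)*p) (by rw [hq]; ring), R_PP]
  ring

lemma refl_fac0 {k l : ℕ} (h : p = k + l + 1) :
    ((p-1).factorial : ℚ) = (-1)^l * k.factorial * l.factorial * PP p l 1 := by
  have := refl_fac h 0
  rw [PP_zero, PP_zero] at this
  simpa using this

lemma refl_PP {k l : ℕ} (h : p = k + l + 1) (x : ℚ) :
    PP p (p-1) x * PP p l 1 = PP p k x * PP p l (1-x) := by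
  have h1 := refl_fac h x
  rw [refl_fac0 h] at h1
  have := sgn_ne l
  have a := fac_ne k
  have b := fac_ne l
  apply mul_left_cancel₀ (mul_ne_zero (mul_ne_zero this a) b)
  linear_combination h1

lemma one_mem' : (1:ℚ) ∈ O p := one_mem _
lemma neg_one_mem' : (-1:ℚ) ∈ O p := neg_mem (one_mem _)

lemma M.rat {r : ℕ} {x : ℚ} (h : M p r x) (z : ℤ) (a b : ℕ) : M p r ((z:ℚ)/(2^a*3^b) * x) :=
  h.lmul (rat_mem z a b)

lemma refl_ss {k l : ℕ} (h : p = k + l + 1) : M p 3 (ss p (p-1) - (ss p k + ss p l)) ∧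
    M p 3 (hh p (p-1) - (hh p k - hh p l - ss p l)) := by
  have hk : k < p := by omega
  have hl : l < p := by omega
  have hpp : p - 1 < p := by omega
  have e1 := ((L_PP hpp one_mem').mul (L_PP hl one_mem')).congr (refl_PP h 1) rfl
  have f1 := (L_PP hk one_mem').mul (L_PP hl (x := 1 - 1) (by simpa using zero_mem _))
  have e2 := ((L_PP hpp neg_one_mem').mul (L_PP hl one_mem')).congr (refl_PP h (-1)) rfl
  have f2 := (L_PP hk neg_one_mem').mul (L_PP hl (x := 1 - (-1)) (sub_mem (one_mem _) (neg_mem (one_mem _))))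
  have g1 := e1.inj f1
  have g2 := e2.inj f2
  constructor
  · exact (g1.add g2).neg.congr (by ring)
  · exact ((g2.sub g1).rat 1 1 0).congr (by push_cast; ring)

/-- duplication -/
lemma dup_fac {n : ℕ} (h : p = 2*n+1) (x : ℚ) :
    ((p-1).factorial : ℚ) * PP p (p-1) x = (-4)^n * n.factorial^2 * PP p n (x/2) * PP p n ((1-x)/2) := by
  have e : p - 1 = 2*n := by omega
  have hq : (p:ℚ) = 2*n+1 := by exact_mod_cast h
  rw [← R_PP]
  rw [e]
  rw [show 1 - x*(p:ℚ) = 2*((1-x*p)/2) by ring, R_dup, R_refl' (z := (1-x*p)/2) n (w := 1 - ((1-x)/2)*p) (by rw [hq]; ring),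
    R_PP, R_PP' p n (x/2) (by ring)]
  rw [show (-4:ℚ)^n = (-1)^n*4^n by rw [← mul_pow]; norm_num]
  ring

lemma dup_fac0 {n : ℕ} (h : p = 2*n+1) :
    ((p-1).factorial : ℚ) = (-4)^n * n.factorial^2 * PP p n (1/2) := by
  have := dup_fac h 0
  rw [PP_zero, zero_div, PP_zero] at this
  simpa using this

lemma dup_PP {n : ℕ} (h : p = 2*n+1) (x : ℚ) :
    PP p (p-1) x * PP p n (1/2) = PP p n (x/2) * PP p n ((1-x)/2) := by
  have h1 := dup_fac h x
  rw [dup_fac0 h] at h1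
  have a := fac_ne n
  have : (-4:ℚ)^n * n.factorial^2 ≠ 0 := by positivity
  apply mul_left_cancel₀ this
  linear_combination h1

lemma four_PP {n : ℕ} (h : p = 2*n+1) : 4^n * PP p n (1/2) = PP p n 1 := by
  have h1 := dup_fac0 h
  rw [refl_fac0 (k := n) (l := n) (by omega)] at h1
  have a := fac_ne n
  rw [show (-4:ℚ)^n = (-1)^n*4^n by rw [← mul_pow]; norm_num] at h1
  have : (-1:ℚ)^n * n.factorial^2 ≠ 0 := by positivity
  apply mul_left_cancel₀ this
  linear_combination -h1

lemma wolst {n : ℕ} (h : p = 2*n+1) : M p 3 (hh p (p-1)) ∧ M p 3 (ss p (p-1)) ∧ M p 3 (ss p n) := by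
  obtain ⟨a1, a2⟩ := refl_ss (p := p) (k := n) (l := n) (by omega)
  have hn : n < p := by omega
  have hpp : p - 1 < p := by omega
  have e2 := ((L_PP hpp neg_one_mem').mul (L_PP hn half_mem)).congr (dup_PP h (-1)) rfl
  have f2 := (L_PP hn (x := -1/2) (by have := neg_mem (half_mem (p := p)); rwa [← neg_div] at this)).mul
    (L_PP hn (x := (1 - (-1))/2) (by norm_num))
  have g2 := e2.inj f2
  have H : M p 3 (hh p (p-1)) := by
    exact (((g2.add (a1.rat 1 1 0)).add (a2.rat 1 1 0)).rat 2 0 1).congr (by push_cast; ring)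
  have Sn : M p 3 (ss p n) := (H.sub a2).neg.congr (by ring)
  exact ⟨H, (a1.add (Sn.lmul (ofNat_mem (O p) 2))).congr (by change _ + 2 * _ = _; ring), Sn⟩


lemma L_Pp {n : ℕ} (h : p = 2*n+1) {x : ℚ} (hx : x ∈ O p) : L p (PP p (p-1) x) 0 := by
  obtain ⟨a, b, c⟩ := wolst h
  refine (L_PP (by omega) hx).change ?_
  exact ((a.lmul (neg_mem hx)).sub ((b.lmul (pow_mem hx 2)).rat 1 1 0)).congr (by push_cast; ring)

lemma L_Pn {n : ℕ} (h : p = 2*n+1) {x : ℚ} (hx : x ∈ O p) : L p (PP p n x) (-x * hh p n) := by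
  obtain ⟨a, b, c⟩ := wolst h
  refine (L_PP (by omega) hx).change ?_
  exact (((c.lmul (pow_mem hx 2)).rat 1 1 0)).neg.congr (by push_cast; ring)

lemma L_two {n : ℕ} (h : p = 2*n+1) : L p (2^(p-1)) (-hh p n/2) := by
  have h1 := L_Pn h (half_mem (p := p))
  have h2 := L_Pn h (one_mem' (p := p))
  have h3 := four_PP (p := p) h
  refine (h2.div h1).congr ?_ (by ring)
  rw [← h3, mul_div_assoc, div_self h1.ne, mul_one, show p - 1 = 2*n by omega, pow_mul]
  norm_num

/-- the relevant indices -/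
def Dat (p n k l m : ℕ) : Prop := (p = 6*m+1 ∧ n = 3*m ∧ k = 2*m ∧ l = 4*m) ∨
  (p = 6*m+5 ∧ n = 3*m+2 ∧ k = 2*m+1 ∧ l = 4*m+3)

lemma Dat.n {n k l m : ℕ} (h : Dat p n k l m) : p = 2*n+1 := by unfold Dat at h; omega
lemma Dat.kl {n k l m : ℕ} (h : Dat p n k l m) : p = k+l+1 := by unfold Dat at h; omega

lemma third_mem : (1/3:ℚ) ∈ O p := by simpa using three_mem (p := p)

lemma trip_PP {n k l m : ℕ} (h : Dat p n k l m) : 3^(p-1) * PP p l (1/3) = PP p l 1 := by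
  have h0 := refl_fac0 h.kl
  have a := fac_ne k
  have b := fac_ne l
  have hs := sgn_ne l
  have key : ((p-1).factorial : ℚ) = 3^(p-1) * (-1)^l * k.factorial * l.factorial * PP p l (1/3) := by
    rcases h with ⟨h1, h2, h3, h4⟩ | ⟨h1, h2, h3, h4⟩
    · have hpk : p = 3*k+1 := by omega
      have hq : (p:ℚ) = 3*k+1 := by exact_mod_cast hpk
      rw [show p - 1 = 3*k by omega]
      have := R_trip (1/3) k
      have r1 := R_refl' (z := 1/3) (w := 1-1/3*p) k (by rw [hq]; ring)
      rw [show (3:ℚ)*(1/3) = 1 by norm_num, show (1:ℚ)/3+1/3 = 2/3 by norm_num,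
        show (1:ℚ)/3+2/3 = 1 by norm_num, r1, R_one, R_one] at this
      have e2 := R_split (1-1/3*p) k k
      rw [show k + k = l by omega, R_PP p l, show 1-1/3*(p:ℚ)+k = 2/3 by rw [hq]; ring] at e2
      have s1 : (-1:ℚ)^k = 1 := Even.neg_one_pow ⟨m, by omega⟩
      have s2 : (-1:ℚ)^l = 1 := Even.neg_one_pow ⟨k, by omega⟩
      rw [this, pow_mul, s1, s2]
      norm_num
      linear_combination -27^k*k.factorial * e2
    · have hpk : p = 3*k+2 := by omega
      have hq : (p:ℚ) = 3*k+2 := by exact_mod_cast hpk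
      rw [show p - 1 = 3*k+1 by omega]
      have := R_trip' (1/3) k
      have r1 := R_refl' (z := 2/3) (w := 1-1/3*p) k (by rw [hq]; ring)
      rw [show (3:ℚ)*(1/3) = 1 by norm_num, show (1:ℚ)/3+1/3 = 2/3 by norm_num,
        show (1:ℚ)/3+2/3 = 1 by norm_num, r1, R_one, R_one] at this
      have e2 := R_split (1-1/3*p) k (k+1)
      rw [show k + (k+1) = l by omega, R_PP p l, show 1-1/3*(p:ℚ)+k = 1/3 by rw [hq]; ring] at e2
      have s1 : (-1:ℚ)^k = -1 := Odd.neg_one_pow ⟨m, by omega⟩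
      have s2 : (-1:ℚ)^l = -1 := Odd.neg_one_pow ⟨k, by omega⟩
      rw [this, pow_succ, pow_mul, s1, s2]
      norm_num
      linear_combination -27^k*k.factorial * 3 * e2
  rw [key] at h0
  apply mul_left_cancel₀ (mul_ne_zero (mul_ne_zero hs a) b)
  linear_combination h0

lemma L_Pl {n k l m : ℕ} (h : Dat p n k l m) {x : ℚ} (hx : x ∈ O p) :
    L p (PP p l x) (-x * (hh p k + ss p k) + x^2 * ss p k / 2) := by
  obtain ⟨a, b, c⟩ := wolst h.n
  obtain ⟨e1, e2⟩ := refl_ss h.kl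
  have kl := h.kl
  refine (L_PP (by omega) hx).change ?_
  have f1 : M p 3 (ss p k + ss p l) := (b.sub e1).congr (by ring)
  have f2 : M p 3 (hh p l - hh p k - ss p k) := ((e2.sub a).sub f1).congr (by ring)
  exact ((f2.lmul (neg_mem hx)).sub ((f1.lmul (pow_mem hx 2)).rat 1 1 0)).congr (by push_cast; ring)

lemma L_Pk {n k l m : ℕ} (h : Dat p n k l m) {x : ℚ} (hx : x ∈ O p) :
    L p (PP p k x) (-x * hh p k - x^2 * ss p k / 2) := L_PP (by have := h.kl; omega) hx

lemma L_three {n k l m : ℕ} (h : Dat p n k l m) : L p (3^(p-1)) (-2*hh p k/3 - 2*ss p k/9) := by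
  have h1 := L_Pl h third_mem
  have h2 := L_Pl h one_mem'
  refine (h2.div h1).congr ?_ (by ring)
  rw [← trip_PP h, mul_div_assoc, div_self h1.ne, mul_one]

lemma D_fac {n k l m : ℕ} (h : Dat p n k l m) (x : ℚ) :
    (k.factorial : ℚ) * n.factorial * (PP p k x * PP p n ((1+x)/2)) =
      2^k * m.factorial * l.factorial * (PP p m (x/2) * PP p l ((1+x)/2)) := by
  have hq : (p:ℚ) = 2*n+1 := by exact_mod_cast h.n
  have d : R (1-x*p) k = 2^k * R ((1-x*p)/2) (k-m) * R (1 - x/2*p) m := by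
    rw [show 1 - x*(p:ℚ) = 2*((1-x*p)/2) by ring]
    rcases h with ⟨h1, h2, h3, h4⟩ | ⟨h1, h2, h3, h4⟩
    · rw [h3, R_dup, show 2*m-m = m by omega, pow_mul, show 2*((1-x*(p:ℚ))/2)/2 = (1-x*p)/2 by ring,
        show (1-x*(p:ℚ))/2 + 1/2 = 1 - x/2*p by ring]
      norm_num
    · rw [h3, R_dup', show 2*m+1-m = m+1 by omega, pow_succ, pow_mul, show 2*((1-x*(p:ℚ))/2)/2 = (1-x*p)/2 by ring,
        show (1-x*(p:ℚ))/2 + 1/2 = 1 - x/2*p by ring, show (2:ℚ)^2 = 4 by norm_num]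
      ring
  have e := R_split (1 - ((1+x)/2)*p) n (k-m)
  rw [show n + (k-m) = l by unfold Dat at h; omega, show 1 - ((1+x)/2)*(p:ℚ) + n = (1-x*p)/2 by rw [hq]; ring,
    R_PP, R_PP] at e
  rw [R_PP, R_PP] at d
  linear_combination (n.factorial * PP p n ((1+x)/2)) * d - 2^k * m.factorial * PP p m (x/2) * e

lemma D_PP {n k l m : ℕ} (h : Dat p n k l m) (x : ℚ) :
    PP p k x * PP p n ((1+x)/2) * PP p l (1/2) = PP p n (1/2) * PP p m (x/2) * PP p l ((1+x)/2) := by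
  have h1 := D_fac h x
  have h2 := D_fac h 0
  rw [PP_zero, zero_div, PP_zero, add_zero, one_mul, one_mul] at h2
  have a := fac_ne k
  have b := fac_ne n
  have c := fac_ne m
  have d := fac_ne l
  have e : (k.factorial : ℚ) * n.factorial * (2^k * m.factorial * l.factorial) ≠ 0 := by positivity
  apply mul_left_cancel₀ e
  linear_combination (2^k * m.factorial * l.factorial * PP p l (1/2)) * h1 -
    (2^k * m.factorial * l.factorial * PP p m (x/2) * PP p l ((1+x)/2)) * h2

lemma L_Pm {n k l m : ℕ} (h : Dat p n k l m) {x : ℚ} (hx : x ∈ O p) :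
    L p (PP p m x) (-x * (hh p n + hh p k - ss p k/2) - 5 * x^2 * ss p k / 2) := by
  have hm : m < p := by unfold Dat at h; omega
  have mm : (-1/2:ℚ) ∈ O p := by have := neg_mem (half_mem (p := p)); rwa [← neg_div] at this
  have z1 : ((1 + 1)/2:ℚ) ∈ O p := by norm_num
  have z2 : ((1 + -1)/2:ℚ) ∈ O p := by norm_num; 
  have e1 := (((L_Pk h one_mem').mul (L_Pn h.n z1)).mul (L_Pl h half_mem)).congr (D_PP h 1) rfl
  have f1 := ((L_Pn h.n half_mem).mul (L_PP hm half_mem)).mul (L_Pl h z1)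
  have e2 := (((L_Pk h neg_one_mem').mul (L_Pn h.n z2)).mul (L_Pl h half_mem)).congr (D_PP h (-1)) rfl
  have f2 := ((L_Pn h.n half_mem).mul (L_PP hm mm)).mul (L_Pl h z2)
  have g1 := e1.inj f1
  have g2 := e2.inj f2
  have s1 : M p 3 (ss p m - 5 * ss p k) := ((g1.add g2).rat 4 0 0).congr (by push_cast; ring)
  have s2 : M p 3 (hh p m - (hh p n + hh p k - ss p k/2)) := (g1.sub g2).congr (by push_cast; ring)
  refine (L_PP hm hx).change ?_
  exact ((s2.lmul (neg_mem hx)).sub ((s1.lmul (pow_mem hx 2)).rat 1 1 0)).congr (by push_cast; ring)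

end
end S4


/-! ### Part 6: K sum and cube root of unity sign -/
namespace S4
section
variable {p : ℕ} [hp : Fact p.Prime] [h3 : Fact (3 < p)]

lemma leg3 (hp3 : p ≠ 3) : legendreSym p (-3) = legendreSym 3 p := by
  have h2 : p ≠ 2 := by have := h3.out; omega
  have : Fact (Nat.Prime 3) := ⟨Nat.prime_three⟩
  have h := legendreSym.quadratic_reciprocity' (p := 3) (q := p) (by norm_num) h2
  rw [show (-3:ℤ) = (-1) * 3 by norm_num, legendreSym.mul, legendreSym.at_neg_one h2,
    ZMod.χ₄_eq_neg_one_pow (hp.out.eq_two_or_odd.resolve_left h2)]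
  have h' : legendreSym p 3 = (-1) ^ (3 / 2 * (p / 2)) * legendreSym 3 p := by exact_mod_cast h
  rw [h', ← mul_assoc, show 3/2*(p/2) = p/2 by omega, ← mul_pow]
  norm_num

lemma neg3_aux (n : ℕ) (hn : p = 2*n+1) : (p:ℤ) ∣ (-3)^n - legendreSym 3 p := by
  have := legendreSym.eq_pow p (-3)
  rw [leg3 (by have := h3.out; omega), show p/2 = n by omega] at this
  have h : (((-3)^n - legendreSym 3 p : ℤ) : ZMod p) = 0 := by
    push_cast
    rw [this]; push_cast; ring
  exact (ZMod.intCast_zmod_eq_zero_iff_dvd _ _).1 h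

lemma neg3_one (n : ℕ) (hn : p = 2*n+1) (h : p % 3 = 1) : M p 1 ((-3:ℚ)^n - 1) := by
  have h1 := neg3_aux n hn
  have : legendreSym 3 p = 1 := by
    rw [legendreSym.mod, show ((p:ℤ) % ((3:ℕ):ℤ)) = 1 by omega]; decide
  rw [this] at h1
  have := (M_int_iff (p := p) (r := 1)).2 (by simpa using h1)
  exact this.congr (by push_cast; ring)

lemma neg3_two (n : ℕ) (hn : p = 2*n+1) (h : p % 3 = 2) : M p 1 (-(-3:ℚ)^n - 1) := by
  have h1 := neg3_aux n hn
  have : legendreSym 3 p = -1 := by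
    rw [legendreSym.mod, show ((p:ℤ) % ((3:ℕ):ℤ)) = 2 by omega]; decide
  rw [this] at h1
  have := (M_int_iff (p := p) (r := 1)).2 (by simpa using h1)
  exact this.neg.congr (by push_cast; ring)

lemma L_neg3_one {n k l m : ℕ} (h : Dat p n k l m) (h1 : p % 3 = 1) :
    L p ((-3)^n) (-hh p k/3 - ss p k/9) := by
  have := L_three h
  rw [show p - 1 = n*2 by have := h.n; omega, show (3:ℚ)^(n*2) = ((-3)^n)^2 by
    rw [← pow_mul, mul_comm, pow_mul, pow_mul]; norm_num] at this
  exact (this.sqrt (neg3_one n h.n h1)).congr rfl (by ring)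

lemma L_neg3_two {n k l m : ℕ} (h : Dat p n k l m) (h1 : p % 3 = 2) :
    L p (-(-3)^n) (-hh p k/3 - ss p k/9) := by
  have := L_three h
  rw [show p - 1 = n*2 by have := h.n; omega, show (3:ℚ)^(n*2) = (-(-3)^n)^2 by
    rw [neg_sq, ← pow_mul, mul_comm, pow_mul, pow_mul]; norm_num] at this
  exact (this.sqrt (neg3_two n h.n h1)).congr rfl (by ring)

lemma KA_fac (n : ℕ) : ∏ j ∈ Finset.range n, (3*(3*(j:ℚ)+2)*(3*j+4)/(4*j+2)^2) =
    ((3*n+1).factorial : ℚ) * n.factorial / ((2*n).factorial : ℚ)^2 := by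
  induction n with
  | zero => simp
  | succ n ih =>
    rw [Finset.prod_range_succ, ih, show 3*(n+1)+1 = 3*n+1+1+1+1 by ring, show 2*(n+1) = 2*n+1+1 by ring]
    simp only [Nat.factorial_succ]
    have a := fac_ne (2*n)
    have h1 : (2*(n:ℚ)+1) ≠ 0 := by positivity
    have h2 : (4*(n:ℚ)+2) ≠ 0 := by positivity
    have h4 : (n:ℚ)+1 ≠ 0 := by positivity
    push_cast
    rw [show 2*(n:ℚ)+1+1 = 2*(n+1) by ring, show 4*(n:ℚ)+2 = 2*(2*n+1) by ring]
    generalize hA : 2*(n:ℚ)+1 = A at *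
    generalize hB : (n:ℚ)+1 = B at *
    rw [show 3*(n:ℚ)+2+1 = 3*B by rw [← hB]; ring]
    field_simp
    ring

lemma KB_fac (n : ℕ) : ∏ j ∈ Finset.range n, ((4/3:ℚ)*(2*(j:ℚ)+3)^2/((3*j+2)*(3*j+4))) =
    ((2*n+1).factorial : ℚ)^2 / (n.factorial * (3*n+1).factorial) := by
  induction n with
  | zero => simp
  | succ n ih =>
    rw [Finset.prod_range_succ, ih, show 3*(n+1)+1 = 3*n+1+1+1+1 by ring, show 2*(n+1)+1 = 2*n+1+1+1 by ring]
    have a := fac_ne (3*n+1)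
    have b := fac_ne n
    rw [Nat.factorial_succ (3*n+1+1+1), Nat.factorial_succ (3*n+1+1), Nat.factorial_succ (3*n+1), 
      Nat.factorial_succ (2*n+1+1), Nat.factorial_succ (2*n+1), Nat.factorial_succ n]
    have h1 : (3*(n:ℚ)+2) ≠ 0 := by positivity
    have h2 : (3*(n:ℚ)+4) ≠ 0 := by positivity
    have h4 : (n:ℚ)+1 ≠ 0 := by positivity
    push_cast
    generalize ((3*n+1).factorial:ℚ) = f at *
    generalize ((2*n+1).factorial:ℚ) = g at *
    generalize (n.factorial:ℚ) = h at *
    rw [show 3*(n:ℚ)+1+1+1+1 = 3*n+4 by ring, show 3*(n:ℚ)+1+1 = 3*n+2 by ring, show 2*(n:ℚ)+1+1+1 = 2*n+3 by ring]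
    generalize hA : 3*(n:ℚ)+2 = A at *
    generalize hC : 3*(n:ℚ)+4 = C at *
    generalize hB : (n:ℚ)+1 = B at *
    rw [show 2*(n:ℚ)+1+1 = 2*B by rw [← hB]; ring]
    rw [show A + 1 = 3*B by rw [← hB, ← hA]; ring]
    field_simp
    ring

lemma fac3n {n : ℕ} (hn : p = 2*n+1) :
    ((3*n+1).factorial : ℚ) = p * (p-1).factorial * n.factorial * PP p n (-1) := by
  have := R_split 1 p n
  rw [R_one, R_one, show (p + n) = 3*n+1 by omega, R_PP' p n (-1) (by ring)] at this
  rw [this, ← Nat.mul_factorial_pred (show p ≠ 0 by omega)]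
  push_cast; ring

/-- the unit in the `K` sums -/
def UU (p n : ℕ) : ℚ := PP p n (-1) / PP p n 1

lemma L_UU {n : ℕ} (hn : p = 2*n+1) : L p (UU p n) (2 * hh p n) :=
  ((L_Pn hn neg_one_mem').div (L_Pn hn one_mem')).congr rfl (by ring)

lemma KA_eq {n : ℕ} (hn : p = 2*n+1) : SK (eA n) (n+1) = -(p/3)*(-1)^n * UU p n := by
  rw [(FA_closed n).2.1, KA_fac, fac3n hn, show 2*n = p-1 by omega, refl_fac0 (k := n) (l := n) (by omega)]
  have a := fac_ne n
  have b := (L_Pn hn one_mem').ne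
  have := sgn_sq n
  have s := sgn_ne n
  unfold UU
  have e : ((-1:ℚ)^n)⁻¹ = (-1)^n := by field_simp; rw [sq]; exact this.symm
  generalize (-1:ℚ)^n = t at *
  generalize PP p n 1 = u at *
  generalize PP p n (-1) = v at *
  have : t^2 = 1 := by rw [sq]; exact this
  field_simp
  rw [this, mul_one]

lemma KB_eq {n : ℕ} (hn : p = 2*n+1) : SK (eB n) (n+1) = (2*p/3)*(-1)^n * (UU p n)⁻¹ := by
  rw [(FB_closed n).2.1, KB_fac, fac3n hn, show 2*n+1 = p by omega, ← Nat.mul_factorial_pred (show p ≠ 0 by omega)]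
  have f := fac_ne (p-1)
  have e := refl_fac0 (p := p) (k := n) (l := n) (by omega)
  have a := fac_ne n
  have b := (L_Pn hn one_mem').ne
  have c := (L_Pn hn neg_one_mem').ne
  have d := pne (p := p)
  unfold UU
  push_cast
  generalize ((p-1).factorial : ℚ) = F at *
  generalize (-1:ℚ)^n = t at *
  generalize PP p n 1 = u at *
  generalize PP p n (-1) = v at *
  field_simp
  rw [e]; ring

lemma K0 {n : ℕ} (hn : p = 2*n+1) : M p 3 (SK 0 (n+1) - (-1)^n * p/6) := by
  have hC : SK (eC n) (n+1) = 0 := by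
    have hp3 : ¬ 3 ∣ p := by
      intro h
      have := (Nat.prime_dvd_prime_iff_eq Nat.prime_three hp.out).1 h
      have := h3.out; omega
    have : n % 3 = 0 ∨ n % 3 = 2 := by omega
    rcases this with h | h
    · obtain ⟨m, rfl⟩ : ∃ m, n = 3*m := ⟨n/3, by omega⟩
      exact (FC_one m).2.1
    · obtain ⟨m, rfl⟩ : ∃ m, n = 3*m+2 := ⟨n/3, by omega⟩
      exact (FC_two m).2
  have h := (interp_all n hn (fun e => SK e (n+1)) (Quad_SK n hn)).1
  rw [hC, KA_eq hn, KB_eq hn] at h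
  have l1 := L_UU hn
  have l2 := l1.inv
  have e : M p 2 (UU p n + (UU p n)⁻¹ - 2) := by
    refine (((l1.2.add l2.2).mono (show 2 ≤ 3 by norm_num)).add (l1.1.mul l1.1)).congr ?_
    ring
  have s : ((-1:ℚ)^n) ∈ O p := pow_mem neg_one_mem' _
  refine (h.add (((M_p.mul e).lmul s).rat 1 2 1)).congr ?_
  push_cast
  ring
end
end S4


/-! ### Part 7: the case `p ≡ 2 (mod 3)` -/
namespace S4

lemma prod_sq (c : ℚ) (f g : ℕ → ℚ) (n : ℕ) :
    ∏ j ∈ Finset.range n, (c * (f j / g j)^2) = c^n * ((∏ j ∈ Finset.range n, f j) / ∏ j ∈ Finset.range n, g j)^2 := by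
  rw [Finset.prod_mul_distrib, Finset.prod_pow, Finset.prod_div_distrib]; simp

lemma prod_lin (c d : ℚ) (hc : c ≠ 0) (n : ℕ) : ∏ j ∈ Finset.range n, (c*(j:ℚ)+d) = c^n * R (d/c) n := by
  rw [← R_scale]
  apply Finset.prod_congr rfl
  intro j _
  field_simp
  ring

lemma prods (n : ℕ) : ∏ j ∈ Finset.range n, (3*((3*(j:ℚ)+2)/(4*j+2))^2) = 3^n * (3^n * R (2/3) n / (4^n * R (1/2) n))^2 ∧
   ∏ j ∈ Finset.range n, (3*((3*(j:ℚ)+4)/(4*j+2))^2) = 3^n * (3^n * R (4/3) n / (4^n * R (1/2) n))^2 ∧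
   ∏ j ∈ Finset.range n, ((4/3:ℚ)*((2*(j:ℚ)+3)/(3*j+4))^2) = (4/3)^n * (2^n * R (3/2) n / (3^n * R (4/3) n))^2 ∧
   ∏ j ∈ Finset.range n, ((4/3:ℚ)*((2*(j:ℚ)+3)/(3*j+2))^2) = (4/3)^n * (2^n * R (3/2) n / (3^n * R (2/3) n))^2 := by
  have a := prod_lin 3 2 (by norm_num) n
  have b := prod_lin 3 4 (by norm_num) n
  have c := prod_lin 4 2 (by norm_num) n
  have d := prod_lin 2 3 (by norm_num) n
  norm_num at a b c d
  refine ⟨?_, ?_, ?_, ?_⟩ <;> rw [prod_sq] <;> simp only [a, b, c, d] <;> norm_num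

section
variable {p : ℕ} [hp : Fact p.Prime] [h3 : Fact (3 < p)]

lemma fac_inv {k : ℕ} (h : k < p) : ((k.factorial:ℚ))⁻¹ ∈ O p :=
  inv_nat_mem (fun hd => by have := (hp.out.dvd_factorial).1 hd; omega)

lemma R12 {n : ℕ} (hn : p = 2*n+1) : R (1/2) n = (-1)^n * (n.factorial * PP p n (1/2)) := by
  have hq : (p:ℚ) = 2*n+1 := by exact_mod_cast hn
  rw [R_refl' n (w := 1 - 1/2*p) (by rw [hq]; ring), R_PP]

lemma R32 {n : ℕ} (hn : p = 2*n+1) : R (3/2) n = p * R (1/2) n := by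
  have hq : (p:ℚ) = 2*n+1 := by exact_mod_cast hn
  have h1 := R_succ (1/2) n
  rw [R_succ', show (1:ℚ)/2+1 = 3/2 by norm_num] at h1
  rw [hq]; linear_combination 2*h1

lemma R23_two {m : ℕ} (h : p = 6*m+5) :
    R (2/3) (3*m+2) = (-1)^(2*m+1) * ((2*m+1).factorial * PP p (2*m+1) (1/3)) * (p/3) * (m.factorial * PP p m (-1/3)) := by
  have hq : (p:ℚ) = 6*m+5 := by exact_mod_cast h
  rw [show 3*m+2 = (2*m+1) + (m+1) by ring, R_split, R_succ' _ m, R_refl' (2*m+1) (w := 1 - 1/3*p) (by rw [hq]; push_cast; ring),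
    R_PP, show (2:ℚ)/3 + ((2*m+1:ℕ):ℚ) = p/3 by rw [hq]; push_cast; ring, R_PP' p m (-1/3) (by ring)]
  ring

lemma R43_two {m : ℕ} (h : p = 6*m+5) :
    R (4/3) (3*m+2) * (m.factorial * PP p m (2/3) * ((2*m+1).factorial * PP p (2*m+1) (1/3))) =
      3 * (-1)^m * ((p-1).factorial * PP p (p-1) (1/3)) := by
  have hq : (p:ℚ) = 6*m+5 := by exact_mod_cast h
  have h1 := refl_fac (p := p) (k := 5*m+4) (l := m) (by omega) (1/3)
  have h2 := R_split (1 - 1/3*p) (2*m+1+1) (3*m+2)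
  rw [show 2*m+1+1+(3*m+2) = 5*m+4 by ring, R_PP, R_succ, R_PP,
    show 1 - 1/3*(p:ℚ) + ((2*m+1+1:ℕ):ℚ) = 4/3 by rw [hq]; push_cast; ring,
    show 1 - 1/3*(p:ℚ) + ((2*m+1:ℕ):ℚ) = 1/3 by rw [hq]; push_cast; ring] at h2
  rw [show (1:ℚ) - 1/3 = 2/3 by norm_num] at h1
  have s := sgn_sq m
  have s' : ((-1:ℚ)^m)^2 = 1 := by rw [sq, s]
  linear_combination (-3 * (-1)^m)*h1 - (3 * m.factorial * PP p m (2/3)) * h2 - (3* (5*m+4).factorial * PP p (5*m+4) (1/3) * m.factorial * PP p m (2/3)) * s'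


/-- the binomial coefficient -/
lemma beta_two {m : ℕ} (h : p = 6*m+5) :
    3 * ((3*m+2).factorial : ℚ) = ((3*m+2).choose m : ℚ) * (p+1) * m.factorial * (2*m+1).factorial := by
  have hq : (p:ℚ) = 6*m+5 := by exact_mod_cast h
  have := Nat.choose_mul_factorial_mul_factorial (show m ≤ 3*m+2 by omega)
  rw [show 3*m+2-m = 2*m+1+1 by omega, Nat.factorial_succ (2*m+1)] at this
  rw [← this, hq]; push_cast; ring

lemma two_thirds_mem : (2/3:ℚ) ∈ O p := by simpa using rat_mem (p := p) 2 0 1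
lemma neg_third_mem : (-1/3:ℚ) ∈ O p := by simpa using rat_mem (p := p) (-1) 0 1

lemma s_sq (m : ℕ) : ((-1:ℚ)^m)^2 = 1 := by rw [sq, sgn_sq]

lemma WA_two {m : ℕ} (h : p = 6*m+5) : SW (eA (3*m+2)) (3*m+3) = 2/9 * (3^(3*m+2))^3 *
    (((3*m+2).choose m : ℚ) * (p+1))^2 * (PP p (p-1) (1/3) / (PP p m (2/3) * PP p (2*m+1) (1/3)))^2 := by
  have hD : Dat p (3*m+2) (2*m+1) (4*m+3) m := Or.inr ⟨h, rfl, rfl, rfl⟩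
  have e := (FA_closed (3*m+2)).2.2
  rw [show 3*m+2+1 = 3*m+3 by ring] at e
  rw [e, (prods _).2.1, R12 hD.n]
  have h1 := R43_two h
  rw [dup_fac0 hD.n, show (-4:ℚ)^(3*m+2) = (-1)^(3*m+2)*4^(3*m+2) by rw [← mul_pow]; norm_num] at h1
  have hb := beta_two h
  have u1 := (L_Pm hD two_thirds_mem).ne
  have u2 := (L_Pk hD third_mem).ne
  have u3 := (L_Pn hD.n half_mem).ne
  have s1 := s_sq m
  have s2 := sgn_ne (3*m+2)
  have f1 := fac_ne (3*m+2)
  have f2 := fac_ne m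
  have f3 := fac_ne (2*m+1)
  have t4 : (4:ℚ)^(3*m+2) ≠ 0 := by positivity
  have key : 3^(3*m+2) * R (4/3) (3*m+2) / (4^(3*m+2) * ((-1)^(3*m+2) * ((3*m+2).factorial * PP p (3*m+2) (1/2)))) =
    (-1)^m * (3^(3*m+2) * ((((3*m+2).choose m : ℚ) * (p+1)) * (PP p (p-1) (1/3) / (PP p m (2/3) * PP p (2*m+1) (1/3))))) := by
    generalize PP p m (2/3) = Pm at *
    generalize PP p (2*m+1) (1/3) = Pk at *
    generalize PP p (3*m+2) (1/2) = Pn at *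
    generalize PP p (p-1) (1/3) = Pp at *
    generalize ((3*m+2).factorial:ℚ) = N at *
    generalize (m.factorial:ℚ) = fm at *
    generalize ((2*m+1).factorial:ℚ) = fk at *
    generalize (4:ℚ)^(3*m+2) = t at *
    generalize (3:ℚ)^(3*m+2) = t' at *
    generalize (-1:ℚ)^(3*m+2) = sn at *
    generalize (-1:ℚ)^m = sm at *
    generalize ((3*m+2).choose m : ℚ) * (p+1) = c at *
    generalize R (4/3) (3*m+2) = r at *
    rw [div_eq_iff (by positivity)]
    field_simp
    have hz : fm * fk ≠ 0 := mul_ne_zero f2 f3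
    apply mul_left_cancel₀ hz
    linear_combination t' * h1 + t' * sm * t * sn * N * Pn * Pp * hb
  rw [key, mul_pow, s1]
  ring

lemma WB_two {m : ℕ} (h : p = 6*m+5) : SW (eB (3*m+2)) (3*m+3) = 2/9 * ((3^(3*m+2))⁻¹)^3 *
    (((3*m+2).choose m : ℚ) * (p+1))^2 * (PP p (3*m+2) 1 / (PP p m (-1/3) * PP p (2*m+1) (1/3)))^2 := by
  have hD : Dat p (3*m+2) (2*m+1) (4*m+3) m := Or.inr ⟨h, rfl, rfl, rfl⟩
  have e := (FB_closed (3*m+2)).2.2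
  rw [show 3*m+2+1 = 3*m+3 by ring] at e
  rw [e, (prods _).2.2.2, R32 hD.n, R12 hD.n, R23_two h]
  have hb := beta_two h
  have u1 := (L_Pm hD neg_third_mem).ne
  have u2 := (L_Pk hD third_mem).ne
  have h4 := four_PP hD.n
  have s1 := s_sq (3*m+2)
  have s2 := s_sq (2*m+1)
  have s3 := sgn_ne (2*m+1)
  have f2 := fac_ne m
  have f3 := fac_ne (2*m+1)
  have t3 : (3:ℚ)^(3*m+2) ≠ 0 := by positivity
  have hp0 := pne (p := p)
  have e4 : (4:ℚ)^(3*m+2) = (2^(3*m+2))^2 := by rw [← pow_mul, mul_comm _ 2, pow_mul]; norm_num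
  rw [← h4, div_pow, e4]
  clear e e4 h4
  generalize PP p m (-1/3) = Pm at *
  generalize PP p (2*m+1) (1/3) = Pk at *
  generalize PP p (3*m+2) (1/2) = Pn at *
  have hN : ((3*m+2).factorial:ℚ) = ((3*m+2).choose m : ℚ) * (p+1) * m.factorial * (2*m+1).factorial / 3 := by
    rw [← hb]; ring
  rw [hN]
  clear hN hb
  generalize (m.factorial:ℚ) = fm at *
  generalize ((2*m+1).factorial:ℚ) = fk at *
  generalize (2:ℚ)^(3*m+2) = t at *
  generalize (3:ℚ)^(3*m+2) = t' at *
  generalize (-1:ℚ)^(3*m+2) = sn at *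
  generalize (-1:ℚ)^(2*m+1) = sk at *
  generalize ((3*m+2).choose m : ℚ) * (p+1) = c at *
  generalize (p:ℚ) = q at *
  field_simp
  rw [s1, s2]
  ring

lemma FA_two {m : ℕ} (h : p = 6*m+5) : M p 2 (SF (eA (3*m+2)) (3*m+3)) := by
  have hD : Dat p (3*m+2) (2*m+1) (4*m+3) m := Or.inr ⟨h, rfl, rfl, rfl⟩
  have e := (FA_closed (3*m+2)).1
  rw [show 3*m+2+1 = 3*m+3 by ring] at e
  rw [e, (prods _).1, R12 hD.n, R23_two h]
  have u1 := (L_Pm hD neg_third_mem).mem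
  have u2 := (L_Pk hD third_mem).mem
  have u3 := (L_Pn hD.n half_mem).inv_mem
  have f := fac_inv (p := p) (k := 3*m+2) (by omega)
  have i3 := pow_mem (three_mem (p := p)) 1
  have n1 : (-1:ℚ) ∈ O p := neg_one_mem'
  have n3 : (3:ℚ) ∈ O p := ofNat_mem _ 3
  have i4 : ((4:ℚ)⁻¹) ∈ O p := by simpa using mem4 (p := p)
  refine ⟨3^(3*m+2) * (3^(3*m+2) * ((-1)^(2*m+1) * ((2*m+1).factorial * PP p (2*m+1) (1/3)) * (3⁻¹) * (m.factorial * PP p m (-1/3))) *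
    ((4⁻¹)^(3*m+2) * (-1)^(3*m+2) * (((3*m+2).factorial:ℚ)⁻¹ * (PP p (3*m+2) (1/2))⁻¹)))^2, ?_, ?_⟩
  · refine mul_mem (pow_mem n3 _) (pow_mem (mul_mem (mul_mem (pow_mem n3 _) (mul_mem (mul_mem (mul_mem (pow_mem n1 _) (mul_mem (natCast_mem _ _) u2)) three_mem)
      (mul_mem (natCast_mem _ _) u1))) (mul_mem (mul_mem (pow_mem i4 _) (pow_mem n1 _)) (mul_mem f u3))) _)
  · have e1 : ((-1:ℚ)^(3*m+2))⁻¹ = (-1)^(3*m+2) := by rw [← inv_pow]; norm_num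
    rw [div_eq_mul_inv, mul_inv, mul_inv, mul_inv, e1, ← inv_pow]
    ring

lemma FB_two {m : ℕ} (h : p = 6*m+5) : M p 2 (SF (eB (3*m+2)) (3*m+3)) := by
  have hD : Dat p (3*m+2) (2*m+1) (4*m+3) m := Or.inr ⟨h, rfl, rfl, rfl⟩
  have e := (FB_closed (3*m+2)).1
  rw [show 3*m+2+1 = 3*m+3 by ring] at e
  rw [e, (prods _).2.2.1, R32 hD.n, R12 hD.n]
  have u1 := (L_Pm hD two_thirds_mem)
  have u2 := (L_Pk hD third_mem)
  have u3 := (L_Pn hD.n half_mem).mem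
  have u4 := (L_Pp hD.n third_mem)
  have f := fac_inv (p := p) (k := p-1) (by omega)
  have f1 := fac_ne m
  have f2 := fac_ne (2*m+1)
  have f3 := fac_ne (p-1)
  have n1 : (-1:ℚ) ∈ O p := neg_one_mem'
  have n3 : (3⁻¹:ℚ) ∈ O p := three_mem
  have n4 : (4/3:ℚ) ∈ O p := by simpa using rat_mem (p := p) 4 0 1
  have key : (R (4/3) (3*m+2))⁻¹ = (m.factorial * PP p m (2/3) * ((2*m+1).factorial * PP p (2*m+1) (1/3))) *
    (3⁻¹ * (-1)^m * (((p-1).factorial:ℚ)⁻¹ * (PP p (p-1) (1/3))⁻¹)) := by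
    have h1 := R43_two h
    have s1 := s_sq m
    have a1 := u1.ne
    have a2 := u2.ne
    have a4 := u4.ne
    have s0 := sgn_ne m
    have hr : R (4/3) (3*m+2) ≠ 0 := by
      intro h0
      rw [h0, zero_mul] at h1
      have : (3 * (-1)^m * ((p-1).factorial * PP p (p-1) (1/3)) : ℚ) ≠ 0 := by positivity
      exact this h1.symm
    rw [inv_eq_iff_eq_inv, eq_comm, inv_eq_iff_eq_inv, eq_comm, inv_eq_one_div, div_eq_iff hr]
    generalize PP p (p-1) (1/3) = Pp at *
    field_simp
    linear_combination (-(-1)^m)*h1 - 3*(p-1).factorial*Pp*s1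
  refine ⟨(4/3)^(3*m+2) * (2^(3*m+2) * ((-1)^(3*m+2) * ((3*m+2).factorial * PP p (3*m+2) (1/2))) * ((3⁻¹)^(3*m+2) *
    ((m.factorial * PP p m (2/3) * ((2*m+1).factorial * PP p (2*m+1) (1/3))) *
    (3⁻¹ * (-1)^m * (((p-1).factorial:ℚ)⁻¹ * (PP p (p-1) (1/3))⁻¹)))))^2, ?_, ?_⟩
  · refine mul_mem (pow_mem n4 _) (pow_mem (mul_mem (mul_mem (pow_mem (ofNat_mem _ 2) _) (mul_mem (pow_mem n1 _) (mul_mem (natCast_mem _ _) u3)))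
      (mul_mem (pow_mem n3 _) (mul_mem (mul_mem (mul_mem (natCast_mem _ _) u1.mem) (mul_mem (natCast_mem _ _) u2.mem))
        (mul_mem (mul_mem n3 (pow_mem n1 _)) (mul_mem f u4.inv_mem))))) _)
  · rw [← key]
    generalize R (4/3) (3*m+2) = r
    generalize (4/3:ℚ)^(3*m+2) = r'
    simp only [div_eq_mul_inv, mul_inv, inv_pow]
    ring

/-- main result for `p ≡ 2 (mod 3)`. -/
lemma main_two {m : ℕ} (h : p = 6*m+5) : M p 2 ((-1)^(3*m+2) * S 2 p -
    (-(2/9) * ((1 + 2*(p:ℚ) + 4/3*(2^(p-1) - 1) - 3/2*(3^(p-1) - 1)) * ((3*m+2).choose m : ℚ)^2))) := by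
  have hD : Dat p (3*m+2) (2*m+1) (4*m+3) m := Or.inr ⟨h, rfl, rfl, rfl⟩
  have s1 := s_sq (3*m+2)
  have s0 : ((-1:ℚ)^(3*m+2)) ∈ O p := pow_mem neg_one_mem' _
  have l3 := L_neg3_two hD (by omega)
  have hA := (l3.mul (l3.mul l3)).mul (((L_Pp hD.n third_mem).div ((L_Pm hD two_thirds_mem).mul (L_Pk hD third_mem))).sq)
  have hB := (l3.mul (l3.mul l3)).inv.mul (((L_Pn hD.n one_mem').div ((L_Pm hD neg_third_mem).mul (L_Pk hD third_mem))).sq)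
  have h2 := L_two hD.n
  have h3' := L_three hD
  have red : ∀ {a α : ℚ}, L p a α → M p 2 (a - (1 + α)) := by
    intro a α hl
    exact ((hl.2.mono (show 2 ≤ 3 by norm_num)).add ((hl.1.mul hl.1).rat 1 1 0)).congr (by push_cast; ring)
  have rA := red hA
  have rB := red hB
  have r2 := red h2
  have r3 := red h3'
  have ms := M_ss (p := p) (k := 2*m+1) (by omega)
  have mk := M_hh (p := p) (k := 2*m+1) (by omega)
  have mn := M_hh (p := p) (k := 3*m+2) (by omega)
  have e3 : (3:ℚ)^(3*m+2) = -(-1)^(3*m+2) * (-(-3)^(3*m+2)) := by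
    rw [neg_mul_neg, ← mul_pow]; norm_num
  have e3' : ((3:ℚ)^(3*m+2))⁻¹ = -(-1)^(3*m+2) * (-(-3)^(3*m+2))⁻¹ := by
    rw [e3, mul_inv]
    congr 1
    rw [inv_neg, ← inv_pow]; norm_num
  have w := (interp_all (3*m+2) hD.n (fun e => SW e (3*m+2+1)) (Quad_SW (3*m+2) hD.n)).2.1
  have f := (interp_all (3*m+2) hD.n (fun e => SF e (3*m+2+1)) (Quad_SF (3*m+2) hD.n)).2.1
  have s2 := (S2_eq (3*m+2) hD.n).mono (show 2 ≤ 3 by norm_num)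
  rw [show 3*m+2+1 = 3*m+3 by ring] at w f s2
  have f0 : M p 2 (SF 0 (3*m+3)) := (f.add (((FA_two h).add (FB_two h)).rat 1 1 0)).congr (by push_cast; ring)
  rw [WA_two h, WB_two h, e3', e3] at w
  have q := M_p (p := p)
  have bm : ((3*m+2).choose m : ℚ)^2 ∈ O p := pow_mem (natCast_mem _ _) _
  have pm : ((p:ℚ)+1)^2 ∈ O p := pow_mem (add_mem p_mem (one_mem _)) _
  -- assemble
  have key : M p 2 ((p+1)^2 * (((-(-3)^(3*m+2)) * ((-(-3)^(3*m+2)) * (-(-3)^(3*m+2)))) * (PP p (p-1) (1/3) / (PP p m (2/3) * PP p (2*m+1) (1/3)))^2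
    + ((-(-3)^(3*m+2)) * ((-(-3)^(3*m+2)) * (-(-3)^(3*m+2))))⁻¹ * (PP p (3*m+2) 1 / (PP p m (-1/3) * PP p (2*m+1) (1/3)))^2)/2 -
    (1 + 2*(p:ℚ) + 4/3*(2^(p-1) - 1) - 3/2*(3^(p-1) - 1))) := by
    have t1 := ((rA.add rB).rat 1 1 0).lmul pm
    have t2 := (r3.rat 3 1 0).sub (r2.rat 4 0 1)
    have t3 : M p 2 (((p:ℚ)+1)^2 * (1 + (hh p (2*m+1) - 2/3*hh p (3*m+2))) - (1 + 2*p + (hh p (2*m+1) - 2/3*hh p (3*m+2)))) := by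
      have v : M p 1 (hh p (2*m+1) - 2/3*hh p (3*m+2)) := (mk.sub (mn.rat 2 0 1)).congr (by push_cast; ring)
      exact ((q.mul q).add ((q.mul v).lmul (add_mem p_mem (ofNat_mem (O p) 2)))).congr (by change _ + (_ + 2) * _ = _; ring)
    have t4 := (ms.lmul pm)
    refine ((((t1.add t2).add t3).add (t4.rat 4 0 1)).add (ms.rat (-1) 0 1)).congr ?_
    generalize (-(-3)^(3*m+2) : ℚ) = T
    generalize (PP p (p-1) (1/3) / (PP p m (2/3) * PP p (2*m+1) (1/3)))^2 = XA
    generalize (PP p (3*m+2) 1 / (PP p m (-1/3) * PP p (2*m+1) (1/3)))^2 = XB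
    push_cast
    ring
  refine (((s2.add (f0.rat 1 2 2)).add w).lmul s0).add ((key.lmul bm).rat (-2) 0 2) |>.congr ?_
  generalize (-(-3)^(3*m+2) : ℚ) = T
  generalize (PP p (p-1) (1/3) / (PP p m (2/3) * PP p (2*m+1) (1/3)))^2 = XA
  generalize (PP p (3*m+2) 1 / (PP p m (-1/3) * PP p (2*m+1) (1/3)))^2 = XB
  generalize ((-1:ℚ)^(3*m+2)) = s at *
  push_cast
  linear_combination (1/9 * (((3*m+2).choose m : ℚ) * (p+1))^2 * (T^3*XA + (T⁻¹)^3*XB) * (s^2+1)) * s1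
end
end S4


/-! ### Part 8: the case `p ≡ 1 (mod 3)`, hypergeometric side -/
namespace S4
section
variable {p : ℕ} [hp : Fact p.Prime] [h3 : Fact (3 < p)]

lemma dat_one {m : ℕ} (h : p = 6*m+1) : Dat p (3*m) (2*m) (4*m) m := Or.inl ⟨h, rfl, rfl, rfl⟩

lemma R23_one {m : ℕ} (h : p = 6*m+1) :
    R (2/3) (3*m) * (m.factorial * PP p m (2/3) * ((2*m).factorial * PP p (2*m) (1/3))) =
      (-1)^m * ((p-1).factorial * PP p (p-1) (1/3)) := by
  have hq : (p:ℚ) = 6*m+1 := by exact_mod_cast h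
  have h1 := refl_fac (p := p) (k := 5*m) (l := m) (by omega) (1/3)
  have h2 := R_split (1 - 1/3*p) (2*m) (3*m)
  rw [show 2*m+3*m = 5*m by ring, R_PP, R_PP,
    show 1 - 1/3*(p:ℚ) + ((2*m:ℕ):ℚ) = 2/3 by rw [hq]; push_cast; ring] at h2
  rw [show (1:ℚ) - 1/3 = 2/3 by norm_num] at h1
  have s' := s_sq m
  linear_combination (-(-1)^m)*h1 - (m.factorial * PP p m (2/3)) * h2 - ((5*m).factorial * PP p (5*m) (1/3) * m.factorial * PP p m (2/3)) * s'

lemma R43_one {m : ℕ} (h : p = 6*m+1) :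
    R (4/3) (3*m) = p * (-1)^(2*m) * ((2*m).factorial * PP p (2*m) (1/3)) * (m.factorial * PP p m (-1/3)) := by
  have hq : (p:ℚ) = 6*m+1 := by exact_mod_cast h
  have h1 := R_succ' (1/3) (3*m)
  rw [show 3*m+1 = 2*m + (m+1) by ring, R_split, R_succ' _ m, R_refl' (2*m) (w := 1 - 1/3*p) (by rw [hq]; push_cast; ring),
    R_PP, show (1:ℚ)/3 + ((2*m:ℕ):ℚ) = p/3 by rw [hq]; push_cast; ring, R_PP' p m (-1/3) (by ring),
    show (1:ℚ)/3+1 = 4/3 by norm_num] at h1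
  linear_combination -3*h1

lemma beta_one (m : ℕ) : ((3*m).factorial : ℚ) = ((3*m).choose m : ℚ) * m.factorial * (2*m).factorial := by
  have := Nat.choose_mul_factorial_mul_factorial (show m ≤ 3*m by omega)
  rw [show 3*m-m = 2*m by omega] at this
  exact_mod_cast this.symm

lemma beta_ne (m : ℕ) : ((3*m).choose m : ℚ) ≠ 0 := by
  have := Nat.choose_pos (show m ≤ 3*m by omega)
  positivity

lemma FA_one {m : ℕ} (h : p = 6*m+1) : SF (eA (3*m)) (3*m+1) = (3^(3*m))^3 *
    ((3*m).choose m : ℚ)^2 * (PP p (p-1) (1/3) / (PP p m (2/3) * PP p (2*m) (1/3)))^2 := by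
  have hD := dat_one h
  rw [(FA_closed (3*m)).1, (prods _).1, R12 hD.n]
  have h1 := R23_one h
  rw [dup_fac0 hD.n, show (-4:ℚ)^(3*m) = (-1)^(3*m)*4^(3*m) by rw [← mul_pow]; norm_num] at h1
  have hb := beta_one m
  have u1 := (L_Pm hD two_thirds_mem).ne
  have u2 := (L_Pk hD third_mem).ne
  have u3 := (L_Pn hD.n half_mem).ne
  have s1 := s_sq m
  have s2 := sgn_ne (3*m)
  have f1 := fac_ne (3*m)
  have f2 := fac_ne m
  have f3 := fac_ne (2*m)
  have t4 : (4:ℚ)^(3*m) ≠ 0 := by positivity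
  have key : 3^(3*m) * R (2/3) (3*m) / (4^(3*m) * ((-1)^(3*m) * ((3*m).factorial * PP p (3*m) (1/2)))) =
    (-1)^m * (3^(3*m) * (((3*m).choose m : ℚ) * (PP p (p-1) (1/3) / (PP p m (2/3) * PP p (2*m) (1/3))))) := by
    generalize PP p m (2/3) = Pm at *
    generalize PP p (2*m) (1/3) = Pk at *
    generalize PP p (3*m) (1/2) = Pn at *
    generalize PP p (p-1) (1/3) = Pp at *
    generalize ((3*m).factorial:ℚ) = N at *
    generalize (m.factorial:ℚ) = fm at *
    generalize ((2*m).factorial:ℚ) = fk at *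
    generalize (4:ℚ)^(3*m) = t at *
    generalize (3:ℚ)^(3*m) = t' at *
    generalize (-1:ℚ)^(3*m) = sn at *
    generalize (-1:ℚ)^m = sm at *
    generalize ((3*m).choose m : ℚ) = c at *
    generalize R (2/3) (3*m) = r at *
    rw [div_eq_iff (by positivity)]
    field_simp
    have hz : fm * fk ≠ 0 := mul_ne_zero f2 f3
    apply mul_left_cancel₀ hz
    linear_combination t' * h1 + t' * sm * t * sn * N * Pn * Pp * hb
  rw [key, mul_pow, s1]
  ring

lemma FB_one {m : ℕ} (h : p = 6*m+1) : SF (eB (3*m)) (3*m+1) = ((3^(3*m))⁻¹)^3 *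
    ((3*m).choose m : ℚ)^2 * (PP p (3*m) 1 / (PP p m (-1/3) * PP p (2*m) (1/3)))^2 := by
  have hD := dat_one h
  rw [(FB_closed (3*m)).1, (prods _).2.2.1, R32 hD.n, R12 hD.n, R43_one h]
  have hb := beta_one m
  have u1 := (L_Pm hD neg_third_mem).ne
  have u2 := (L_Pk hD third_mem).ne
  have h4 := four_PP hD.n
  have s1 := s_sq (3*m)
  have s2 := s_sq (2*m)
  have s3 := sgn_ne (2*m)
  have f2 := fac_ne m
  have f3 := fac_ne (2*m)
  have t3 : (3:ℚ)^(3*m) ≠ 0 := by positivity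
  have hp0 := pne (p := p)
  have e4 : (4:ℚ)^(3*m) = (2^(3*m))^2 := by rw [← pow_mul, mul_comm _ 2, pow_mul (2:ℚ) 2]; norm_num
  rw [← h4, div_pow, e4]
  clear e4 h4
  generalize PP p m (-1/3) = Pm at *
  generalize PP p (2*m) (1/3) = Pk at *
  generalize PP p (3*m) (1/2) = Pn at *
  rw [hb]
  clear hb
  generalize (m.factorial:ℚ) = fm at *
  generalize ((2*m).factorial:ℚ) = fk at *
  generalize (2:ℚ)^(3*m) = t at *
  generalize (3:ℚ)^(3*m) = t' at *
  generalize (-1:ℚ)^(3*m) = sn at *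
  generalize (-1:ℚ)^(2*m) = sk at *
  generalize ((3*m).choose m : ℚ) = c at *
  generalize (p:ℚ) = q at *
  field_simp
  rw [s1, s2]
  ring

lemma sixth_mem' : (1/6:ℚ) ∈ O p := six_mem

lemma FC_eq {m : ℕ} (h : p = 6*m+1) : SF (eC (3*m)) (3*m+1) = 3^(3*m) * (2^(p-1))^2 *
    ((3*m).choose m : ℚ)^2 * (PP p (4*m) (1/2) * PP p (p-1) (2/3) / (PP p m (1/3) * PP p (4*m) (2/3) * PP p m (1/6)))^2 := by
  have hD := dat_one h
  have hq : (p:ℚ) = 6*m+1 := by exact_mod_cast h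
  have a := prod_lin 3 1 (by norm_num) m
  have b := prod_lin 6 1 (by norm_num) m
  rw [(FC_one m).1, prod_sq, a, b, R_refl' (z := 1/6) m (w := 1-1/6*p) (by rw [hq]; ring), R_PP]
  have h1 := refl_fac (p := p) (k := 5*m) (l := m) (by omega) (2/3)
  have h2 := R_split (1 - 2/3*p) (4*m) m
  rw [show 4*m+m = 5*m by ring, R_PP, R_PP,
    show 1 - 2/3*(p:ℚ) + ((4*m:ℕ):ℚ) = 1/3 by rw [hq]; push_cast; ring] at h2
  rw [show (1:ℚ) - 2/3 = 1/3 by norm_num] at h1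
  have hb := beta_one m
  have d := D_fac hD 0
  rw [PP_zero, zero_div, PP_zero, add_zero, one_mul, one_mul] at d
  have d0 := dup_fac0 hD.n
  rw [show (-4:ℚ)^(3*m) = (-1)^(3*m)*4^(3*m) by rw [← mul_pow]; norm_num] at d0
  have u1 := (L_Pm hD third_mem).ne
  have u2 := (L_Pm hD six_mem).ne
  have u3 := (L_Pn hD.n half_mem).ne
  have u4 := (L_Pl hD half_mem).ne
  have u5 := (L_Pl hD two_thirds_mem).ne
  have s1 := s_sq m
  have s2 := s_sq (3*m)
  have f1 := fac_ne (3*m)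
  have f2 := fac_ne m
  have f3 := fac_ne (2*m)
  have f4 := fac_ne (4*m)
  rw [d0] at h1
  -- key relation
  have key : R (1/3) m * (PP p m (1/3) * PP p (4*m) (2/3)) = (-1)^m * (-1)^(3*m) * 256^m * (((3*m).choose m : ℚ) * m.factorial) * 
      (PP p (4*m) (1/2) * PP p (p-1) (2/3)) := by
    rw [show (256:ℚ)^m = 4^(3*m) * 2^(2*m) by rw [pow_mul, pow_mul, ← mul_pow]; norm_num]
    have hz : m.factorial * (4*m).factorial * (2*m).factorial * (3*m).factorial * PP p (3*m) (1/2) ≠ 0 := by positivity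
    apply mul_left_cancel₀ hz
    generalize PP p m (1/3) = Pm at *
    generalize PP p (4*m) (1/2) = Pl at *
    generalize PP p (4*m) (2/3) = Pl' at *
    generalize PP p (3*m) (1/2) = Pn at *
    generalize PP p (p-1) (2/3) = Pp at *
    generalize PP p (5*m) (2/3) = Pq at *
    generalize ((3*m).factorial:ℚ) = N at *
    generalize ((5*m).factorial:ℚ) = N5 at *
    generalize (m.factorial:ℚ) = fm at *
    generalize ((2*m).factorial:ℚ) = fk at *
    generalize ((4*m).factorial:ℚ) = fl at *
    generalize (4:ℚ)^(3*m) = t at *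
    generalize (2:ℚ)^(2*m) = t' at *
    generalize (-1:ℚ)^(3*m) = sn at *
    generalize (-1:ℚ)^m = sm at *
    generalize ((3*m).choose m : ℚ) = c at *
    generalize R (1/3) m = r at *
    linear_combination (-(fk * N * Pn * fm * Pm)) * h2 - (fk * N * Pn * fm * Pm * N5 * Pq) * s1 - (fk * N * Pn * sm) * h1
      + (fk * N * Pn * sm * sn * t * N * Pn * Pp) * hb + (fk * N * Pn * sm * sn * t * c * fm * Pp) * d
  have key2 : R (1/3) m = (-1)^m * (-1)^(3*m) * 256^m * (((3*m).choose m : ℚ) * m.factorial) * 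
      (PP p (4*m) (1/2) * PP p (p-1) (2/3)) / (PP p m (1/3) * PP p (4*m) (2/3)) := by
    rw [eq_div_iff (mul_ne_zero u1 u5), key]
  rw [key2]
  have z1 : (27/4:ℚ)^m = (3^m)^3 / (2^m)^2 := by rw [← pow_mul, ← pow_mul, mul_comm m 3, mul_comm m 2, pow_mul, pow_mul, ← div_pow]; norm_num
  have z2 : (6:ℚ)^m = 2^m * 3^m := by rw [← mul_pow]; norm_num
  have z3 : (256:ℚ)^m = (2^m)^8 := by rw [← pow_mul, mul_comm m 8, pow_mul]; norm_num
  have z4 : (2:ℚ)^(p-1) = (2^m)^6 := by rw [← pow_mul, show p - 1 = m*6 by omega]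
  have z5 : (3:ℚ)^(3*m) = (3^m)^3 := by rw [← pow_mul, mul_comm m 3]
  have n2 : (2:ℚ)^m ≠ 0 := by positivity
  have n3 : (3:ℚ)^m ≠ 0 := by positivity
  have n4 := sgn_ne m
  rw [z1, z2, z3, z4, z5]
  clear z1 z2 z3 z4 z5 key key2 h1 h2 hb d d0 a b
  generalize PP p m (1/3) = Pm at *
  generalize PP p m (1/6) = Pm' at *
  generalize PP p (4*m) (1/2) = Pl at *
  generalize PP p (4*m) (2/3) = Pl' at *
  generalize PP p (p-1) (2/3) = Pp at *
  generalize (m.factorial:ℚ) = fm at *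
  generalize (3:ℚ)^m = t at *
  generalize (2:ℚ)^m = t' at *
  generalize (-1:ℚ)^(3*m) = sn at *
  generalize (-1:ℚ)^m = sm at *
  generalize ((3*m).choose m : ℚ) = c at *
  field_simp
  rw [s2]
  ring

/-- the exponent -/
def mu (p m : ℕ) : ℚ := hh p (2*m) - 2/3*hh p (3*m) + ss p (2*m)/12

/-- log of `F_A`, `F_B`, `F_C` -/
lemma F_logs {m : ℕ} (h : p = 6*m+1) :
    (∃ EA, SF (eA (3*m)) (3*m+1) = (-1)^(3*m) * ((3*m).choose m : ℚ)^2 * EA ∧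
      L p EA (4/3*hh p (3*m) + hh p (2*m) + 4/3*ss p (2*m))) ∧
    (∃ EB, SF (eB (3*m)) (3*m+1) = (-1)^(3*m) * ((3*m).choose m : ℚ)^2 * EB ∧
      L p EB (-8/3*hh p (3*m) + hh p (2*m) + 4/3*ss p (2*m))) ∧
    (∃ EC, SF (eC (3*m)) (3*m+1) = (-1)^(3*m) * ((3*m).choose m : ℚ)^2 * EC ∧
      L p EC (hh p (2*m) + 2/9*ss p (2*m))) := by
  have hD := dat_one h
  have l3 := L_neg3_one hD (by omega)
  have s1 := s_sq (3*m)
  have e3 : (3:ℚ)^(3*m) = (-1)^(3*m) * ((-3)^(3*m)) := by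
    rw [← mul_pow]; norm_num
  have e3' : ((3:ℚ)^(3*m))⁻¹ = (-1)^(3*m) * ((-3)^(3*m))⁻¹ := by
    rw [e3, mul_inv]
    congr 1
    rw [← inv_pow]; norm_num
  have hA := (l3.mul (l3.mul l3)).mul (((L_Pp hD.n third_mem).div ((L_Pm hD two_thirds_mem).mul (L_Pk hD third_mem))).sq)
  have hB := (l3.mul (l3.mul l3)).inv.mul (((L_Pn hD.n one_mem').div ((L_Pm hD neg_third_mem).mul (L_Pk hD third_mem))).sq)
  have hC := (l3.mul (L_two hD.n).sq).mul ((((L_Pl hD half_mem).mul (L_Pp hD.n two_thirds_mem)).div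
    (((L_Pm hD third_mem).mul (L_Pl hD two_thirds_mem)).mul (L_Pm hD six_mem))).sq)
  refine ⟨⟨_, ?_, hA.congr rfl (by ring)⟩, ⟨_, ?_, hB.congr rfl (by ring)⟩, ⟨_, ?_, hC.congr rfl (by ring)⟩⟩
  · rw [FA_one h, e3]
    generalize (-1:ℚ)^(3*m) = s at *
    generalize (-3:ℚ)^(3*m) = T at *
    generalize (PP p (p-1) (1/3) / (PP p m (2/3) * PP p (2*m) (1/3)))^2 = XA
    linear_combination s * T^3 * ((3*m).choose m : ℚ)^2 * XA * s1
  · rw [FB_one h, e3']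
    generalize (-1:ℚ)^(3*m) = s at *
    generalize (-3:ℚ)^(3*m) = T at *
    generalize (PP p (3*m) 1 / (PP p m (-1/3) * PP p (2*m) (1/3)))^2 = XA
    linear_combination s * (T⁻¹)^3 * ((3*m).choose m : ℚ)^2 * XA * s1
  · rw [FC_eq h, e3]
    ring

lemma SF0_one {m : ℕ} (h : p = 6*m+1) :
    M p 3 ((-1)^(3*m) * SF 0 (3*m+1) - ((3*m).choose m : ℚ)^2 * (1 + mu p m + (mu p m)^2/2)) := by
  have hD := dat_one h
  obtain ⟨⟨EA, a1, a2⟩, ⟨EB, b1, b2⟩, ⟨EC, c1, c2⟩⟩ := F_logs h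
  have f := (interp_all (3*m) hD.n (fun e => SF e (3*m+1)) (Quad_SF (3*m) hD.n)).1
  rw [a1, b1, c1] at f
  have s1 := s_sq (3*m)
  have s0 : ((-1:ℚ)^(3*m)) ∈ O p := pow_mem neg_one_mem' _
  have bm : ((3*m).choose m : ℚ)^2 ∈ O p := pow_mem (natCast_mem _ _) _
  have ms := M_ss (p := p) (k := 2*m) (by omega)
  have mk := M_hh (p := p) (k := 2*m) (by omega)
  have mn := M_hh (p := p) (k := 3*m) (by omega)
  have q1 := ms.mul mk
  have q2 := ms.mul mn
  have q3 : M p 3 (ss p (2*m) * ss p (2*m)) := ((ms.mul ms).mono (by norm_num))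
  have key : M p 3 (EB/8 - EA/4 + 9/8*EC - (1 + mu p m + (mu p m)^2/2)) := by
    have := ((b2.2.rat 1 3 0).sub (a2.2.rat 1 2 0)).add (c2.2.rat 9 3 0)
    refine ((this.add (q1.rat 0 0 0)).add (q2.rat (-5) 1 1)).add (q3.rat (-25) 5 2) |>.congr ?_
    unfold mu
    push_cast
    ring
  refine ((f.lmul s0).add (key.lmul bm)).congr ?_
  generalize (-1:ℚ)^(3*m) = s at *
  linear_combination (((3*m).choose m : ℚ)^2 * (EB/8 - EA/4 + 9/8*EC)) * (-s1)

lemma A_prod (n : ℕ) : SF (eA n) (n+1) * SW (eA n) (n+1) = 2 * (SK (eA n) (n+1))^2 := by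
  obtain ⟨a, b, c⟩ := FA_closed n
  rw [a, b, c]
  have : ((∏ j ∈ Finset.range n, 3*((3*(j:ℚ)+2)/(4*j+2))^2)) * (∏ j ∈ Finset.range n, 3*((3*(j:ℚ)+4)/(4*j+2))^2) =
    (∏ j ∈ Finset.range n, 3*(3*(j:ℚ)+2)*(3*j+4)/(4*j+2)^2)^2 := by
    rw [← Finset.prod_mul_distrib, ← Finset.prod_pow]
    refine Finset.prod_congr rfl fun j _ => ?_
    rw [div_pow, div_pow, div_pow]
    field_simp
  linear_combination (2/9) * this

lemma B_prod (n : ℕ) : SF (eB n) (n+1) * SW (eB n) (n+1) = (SK (eB n) (n+1))^2 / 2 := by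
  obtain ⟨a, b, c⟩ := FB_closed n
  rw [a, b, c]
  have : ((∏ j ∈ Finset.range n, (4/3)*((2*(j:ℚ)+3)/(3*j+4))^2)) * (∏ j ∈ Finset.range n, (4/3)*((2*(j:ℚ)+3)/(3*j+2))^2) =
    (∏ j ∈ Finset.range n, (4/3)*(2*(j:ℚ)+3)^2/((3*j+2)*(3*j+4)))^2 := by
    rw [← Finset.prod_mul_distrib, ← Finset.prod_pow]
    refine Finset.prod_congr rfl fun j _ => ?_
    rw [div_pow, div_pow, div_pow]
    field_simp
  linear_combination (2/9) * this

lemma beta_inv {m : ℕ} (h : p = 6*m+1) : (((3*m).choose m : ℚ))⁻¹ ∈ O p := by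
  have hb := beta_one m
  have i := fac_inv (p := p) (k := 3*m) (by omega)
  have f2 := fac_ne m
  have f3 := fac_ne (2*m)
  have b0 := beta_ne m
  rw [hb] at i
  have e : (((3*m).choose m : ℚ))⁻¹ = (((3*m).choose m : ℚ) * m.factorial * (2*m).factorial)⁻¹ * (m.factorial * (2*m).factorial) := by
    field_simp
  rw [e]
  exact mul_mem i (mul_mem (natCast_mem _ _) (natCast_mem _ _))

lemma SW0_one {m : ℕ} (h : p = 6*m+1) :
    M p 3 ((-1)^(3*m) * SW 0 (3*m+1) + (p:ℚ)^2 / (36 * ((3*m).choose m : ℚ)^2)) := by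
  have hD := dat_one h
  obtain ⟨⟨EA, a1, a2⟩, ⟨EB, b1, b2⟩, _⟩ := F_logs h
  have f := (interp_all (3*m) hD.n (fun e => SW e (3*m+1)) (Quad_SW (3*m) hD.n)).1
  have s1 := s_sq (3*m)
  have s0 : ((-1:ℚ)^(3*m)) ∈ O p := pow_mem neg_one_mem' _
  have bi := beta_inv h
  have b0 := beta_ne m
  have pa := A_prod (3*m)
  have pb := B_prod (3*m)
  rw [a1, KA_eq hD.n] at pa
  rw [b1, KB_eq hD.n] at pb
  have lu := L_UU hD.n
  have u0 := lu.ne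
  have ea := a2.ne
  have eb := b2.ne
  have hA := (lu.sq.div a2).one_congr
  have hB := (lu.sq.inv.div b2).one_congr
  simp only [(FC_one m).2.2] at f
  have p2 : M p 2 ((p:ℚ)*p) := M_p.mul M_p
  have c2 : M p 2 ((p:ℚ)*p*((((3*m).choose m : ℚ))⁻¹)^2) := p2.rmul (pow_mem bi 2)
  have g1 := c2.mul hA
  have g2 := c2.mul hB
  have wA : (-1)^(3*m) * SW (eA (3*m)) (3*m+1) = 2/9 * ((p:ℚ)*p*((((3*m).choose m : ℚ))⁻¹)^2) * ((UU p (3*m))^2/EA) := by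
    generalize (-1:ℚ)^(3*m) = s at *
    generalize SW (eA (3*m)) (3*m+1) = w at *
    generalize ((3*m).choose m : ℚ) = c at *
    generalize UU p (3*m) = u at *
    field_simp
    linear_combination (9:ℚ) * pa + (2*p^2*u^2 : ℚ) * s1
  have wB : (-1)^(3*m) * SW (eB (3*m)) (3*m+1) = 2/9 * ((p:ℚ)*p*((((3*m).choose m : ℚ))⁻¹)^2) * (((UU p (3*m))^2)⁻¹/EB) := by
    generalize (-1:ℚ)^(3*m) = s at *
    generalize SW (eB (3*m)) (3*m+1) = w at *
    generalize ((3*m).choose m : ℚ) = c at *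
    generalize UU p (3*m) = u at *
    field_simp at pb ⊢
    linear_combination pb + (2*p^2 : ℚ) * s1
  refine (((f.lmul s0).add (g2.rat 1 2 2)).sub (g1.rat 1 1 2)).congr ?_
  push_cast
  have e : (p:ℚ)^2 / (36 * ((3*m).choose m : ℚ)^2) = 1/36*((p:ℚ)*p*((((3*m).choose m : ℚ))⁻¹)^2) := by
    field_simp
  rw [e]
  linear_combination (-1/8:ℚ) * wB + (1/4:ℚ) * wA

end
end S4


/-! ### Part 9: a Jacobi sum modulo `p^3` -/
namespace S4
section
variable {p : ℕ} [hp : Fact p.Prime]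

/-- reduction modulo `p` -/
def red (p : ℕ) : ZMod (p^3) →+* ZMod p := ZMod.castHom (dvd_pow_self p (by norm_num)) (ZMod p)

lemma red_unit {x : ZMod (p^3)} (h : red p x ≠ 0) : IsUnit x := by
  have : NeZero (p^3) := ⟨pow_ne_zero _ hp.out.ne_zero⟩
  rw [← ZMod.natCast_zmod_val x] at h ⊢
  rw [map_natCast] at h
  rw [ZMod.isUnit_iff_coprime]
  apply Nat.Coprime.pow_right
  rw [Nat.coprime_comm, hp.out.coprime_iff_not_dvd]
  intro h2
  exact h ((ZMod.natCast_eq_zero_iff _ _).2 h2)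

lemma red_zero {x : ZMod (p^3)} (h : red p x = 0) : ∃ z, x = p * z := by
  have : NeZero (p^3) := ⟨pow_ne_zero _ hp.out.ne_zero⟩
  rw [← ZMod.natCast_zmod_val x] at h ⊢
  rw [map_natCast, ZMod.natCast_eq_zero_iff] at h
  obtain ⟨k, hk⟩ := h
  exact ⟨k, by rw [hk]; push_cast; ring⟩

lemma p3_zero : (p : ZMod (p^3))^3 = 0 := by
  have := ZMod.natCast_self (p^3)
  exact_mod_cast this

lemma pow_eq_of_red {x y : ZMod (p^3)} (h : red p x = red p y) : x^(p^2) = y^(p^2) := by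
  obtain ⟨z, hz⟩ := red_zero (p := p) (x := x - y) (by rw [map_sub, h, sub_self])
  have := dvd_sub_pow_of_dvd_sub (p := p) (a := x) (b := y) ⟨z, hz⟩ 2
  norm_num at this
  rw [p3_zero, zero_dvd_iff] at this
  exact sub_eq_zero.1 this

/-- Teichmüller lift -/
def tau (a : ZMod p) : ZMod (p^3) := ((a.val : ℕ) : ZMod (p^3))^(p^2)

lemma tau_eq {a : ZMod p} {x : ZMod (p^3)} (h : red p x = a) : tau a = x^(p^2) := by
  apply pow_eq_of_red
  rw [h, map_natCast, ZMod.natCast_zmod_val]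

lemma red_tau (a : ZMod p) : red p (tau a) = a := by
  rw [tau, map_pow, map_natCast, ZMod.natCast_zmod_val, pow_two, pow_mul, ZMod.pow_card, ZMod.pow_card]

lemma tau_mul (a b : ZMod p) : tau (a*b) = tau a * tau b := by
  rw [tau_eq (x := (a.val : ZMod (p^3)) * (b.val : ZMod (p^3))), mul_pow]; rfl
  rw [map_mul, map_natCast, map_natCast, ZMod.natCast_zmod_val, ZMod.natCast_zmod_val]

lemma tau_one : tau (1 : ZMod p) = 1 := by
  rw [tau_eq (x := 1) (map_one _), one_pow]

lemma tau_zero : tau (0 : ZMod p) = 0 := by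
  rw [tau_eq (x := 0) (map_zero _), zero_pow]
  exact pow_ne_zero _ hp.out.ne_zero

lemma tau_pow (a : ZMod p) (k : ℕ) : tau (a^k) = tau a ^ k := by
  induction k with
  | zero => simp [tau_one]
  | succ k ih => rw [pow_succ a k, tau_mul, ih, pow_succ (tau a) k]

lemma tau_unit {a : ZMod p} (h : a ≠ 0) : IsUnit (tau a) := red_unit (by rwa [red_tau])

lemma tau_fermat {a : ZMod p} (h : a ≠ 0) : tau a ^ (p-1) = 1 := by
  rw [← tau_pow, ZMod.pow_card_sub_one_eq_one h, tau_one]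

lemma tau_one_sub (a : ZMod p) : tau (1 - a) = (1 - tau a)^(p^2) :=
  tau_eq (by rw [map_sub, map_one, red_tau])

/-- the quadratic character -/
lemma tau_half (h2 : p ≠ 2) (a : ZMod p) : tau a ^ (p/2) = ((quadraticChar (ZMod p) a : ℤ) : ZMod (p^3)) := by
  have e := quadraticChar_eq_pow_of_char_ne_two' (F := ZMod p) (by rwa [ZMod.ringChar_zmod_n]) a
  rw [ZMod.card] at e
  rw [← tau_pow, ← e, tau_eq (x := ((quadraticChar (ZMod p) a : ℤ) : ZMod (p^3))) (map_intCast _ _)]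
  have hodd : Odd (p^2) := (hp.out.odd_of_ne_two h2).pow
  by_cases h0 : a = 0
  · subst h0
    rw [MulChar.map_zero, Int.cast_zero, zero_pow]
    exact pow_ne_zero _ hp.out.ne_zero
  · rcases quadraticChar_dichotomy h0 with h | h
    · rw [h]; simp
    · rw [h]; push_cast; exact hodd.neg_one_pow

lemma exists_gen (p : ℕ) [hp : Fact p.Prime] : ∃ g : (ZMod p)ˣ, ∀ x, x ∈ Subgroup.zpowers g :=
  IsCyclic.exists_generator

/-- orthogonality -/
lemma sum_tau (E : ℕ) (hE : 0 < E) : ∑ a : ZMod p, tau a ^ E = if (p-1) ∣ E then ((p-1 : ℕ) : ZMod (p^3)) else 0 := by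
  classical
  split_ifs with hd
  · obtain ⟨k, rfl⟩ := hd
    have : ∀ a : ZMod p, tau a ^ ((p-1)*k) = if a = 0 then 0 else 1 := by
      intro a
      split_ifs with h0
      · rw [h0, tau_zero, zero_pow hE.ne']
      · rw [pow_mul, tau_fermat h0, one_pow]
    simp only [this]
    rw [← Finset.sum_erase_add _ _ (Finset.mem_univ 0), if_pos rfl, add_zero,
      Finset.sum_congr rfl (g := fun _ => 1) (fun a ha => if_neg (Finset.ne_of_mem_erase ha))]
    simp [Finset.card_erase_of_mem, ZMod.card]
  · obtain ⟨g, hg⟩ := exists_gen p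
    have hgE : ((g:ZMod p))^E ≠ 1 := by
      intro h
      apply hd
      have h1 : g^E = 1 := by ext; simpa using h
      have := orderOf_dvd_of_pow_eq_one h1
      rwa [orderOf_eq_card_of_forall_mem_zpowers hg, Nat.card_eq_fintype_card, ZMod.card_units] at this
    have hu : IsUnit (tau (g:ZMod p)^E - 1) := red_unit (by
      rw [map_sub, map_pow, red_tau, map_one]
      exact sub_ne_zero.2 hgE)
    have h1 : ∑ a : ZMod p, tau ((g:ZMod p) * a) ^ E = ∑ a : ZMod p, tau a ^ E :=
      Fintype.sum_equiv (Units.mulLeft g) _ _ (fun a => rfl)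
    simp only [tau_mul, mul_pow] at h1
    rw [← Finset.mul_sum] at h1
    have h2 : (tau (g:ZMod p)^E - 1) * ∑ a : ZMod p, tau a ^ E = 0 := by rw [sub_mul, h1]; ring
    exact (hu.mul_right_eq_zero).1 h2

lemma pow_expand {R : Type*} [CommRing R] {e : R} (h : e^3 = 0) (N : ℕ) :
    2*(1+e)^N = 2 + 2*N*e + N*(N-1)*e^2 := by
  induction N with
  | zero => simp
  | succ N ih =>
    rw [pow_succ]
    push_cast
    linear_combination (1+e)*ih + (N*(N-1):R)*h

lemma interp_pow {N : ℕ} (hN : 2*N+1 = p^2) {u : ZMod (p^3)} (hu : red p u = 1) (h2 : p ≠ 2) :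
    8*u^N = 15 - 10*u + 3*u^2 := by
  obtain ⟨z, hz⟩ := red_zero (p := p) (x := u - 1) (by rw [map_sub, hu, map_one, sub_self])
  have e3 : ((p:ZMod (p^3))*z)^3 = 0 := by rw [mul_pow, p3_zero, zero_mul]
  have := pow_expand e3 N
  have hu' : u = 1 + p*z := by rw [← hz]; ring
  rw [← hu'] at this
  have hN' : 2*(N:ZMod (p^3)) + 1 = (p:ZMod (p^3))^2 := by exact_mod_cast congrArg (Nat.cast (R := ZMod (p^3))) hN
  have c3 := p3_zero (p := p)
  rw [hu'] at this ⊢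
  linear_combination 4*this + 4*((p:ZMod (p^3))*z)*hN' + 4*z*c3 + (2*(N:ZMod (p^3)) - 3)*((p:ZMod (p^3))*z)^2*hN' + (2*(N:ZMod (p^3)) - 3)*z^2*p*c3

lemma Q_eq {m : ℕ} (h : p = 6*m+1) (hm : 0 < m) (l : ℕ) :
    ∑ a : ZMod p, tau a ^ (5*m) * (1 - tau a)^(3*m+6*m*l) =
      (-1)^m * (6*m) * ∑ r ∈ Finset.range (l+1), ((3*m+6*m*l).choose (m+6*m*r) : ZMod (p^3)) := by
  set E := 3*m+6*m*l with hE
  have e1 : ∀ a : ZMod p, tau a ^ (5*m) * (1 - tau a)^E =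
      ∑ j ∈ Finset.range (E+1), ((-1)^j * (E.choose j : ZMod (p^3))) * tau a ^ (5*m+j) := by
    intro a
    rw [show 1 - tau a = -tau a + 1 by ring, add_pow, Finset.mul_sum]
    refine Finset.sum_congr rfl fun j _ => ?_
    rw [neg_pow, one_pow, pow_add]
    ring
  simp only [e1]
  rw [Finset.sum_comm]
  simp only [← Finset.mul_sum]
  have inj : Set.InjOn (fun r => m+6*m*r) (Finset.range (l+1) : Set ℕ) := by
    intro r _ s _ hrs
    have : 6*m*r = 6*m*s := by simpa using hrs
    exact Nat.eq_of_mul_eq_mul_left (by omega) this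
  have e2 := Finset.sum_image (s := Finset.range (l+1)) (g := fun r => m+6*m*r)
    (f := fun j => ((-1)^j * (E.choose j : ZMod (p^3))) * ∑ a : ZMod p, tau a ^ (5*m+j)) inj
  rw [← Finset.sum_subset (s₁ := (Finset.range (l+1)).image (fun r => m+6*m*r)), e2, Finset.mul_sum]
  · refine Finset.sum_congr rfl fun r _ => ?_
    rw [sum_tau _ (by omega), if_pos ⟨1+r, by rw [h]; simp; ring⟩, show p - 1 = 6*m by omega,
      pow_add, Even.neg_one_pow (n := 6*m*r) ⟨3*m*r, by ring⟩]
    push_cast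
    ring
  · intro j hj
    rw [Finset.mem_image] at hj
    obtain ⟨r, hr, rfl⟩ := hj
    rw [Finset.mem_range] at hr ⊢
    have : 6*m*r ≤ 6*m*l := Nat.mul_le_mul_left _ (by omega)
    omega
  · intro j hj hj2
    rw [sum_tau _ (by omega), if_neg, mul_zero]
    rintro ⟨k, hk⟩
    rw [show p - 1 = 6*m by omega] at hk
    apply hj2
    rw [Finset.mem_image]
    rw [Finset.mem_range] at hj
    have k0 : k ≠ 0 := by rintro rfl; omega
    obtain ⟨r, rfl⟩ := Nat.exists_eq_succ_of_ne_zero k0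
    refine ⟨r, ?_, ?_⟩
    · rw [Finset.mem_range]
      by_contra hc
      have : 6*m*(l+1) ≤ 6*m*r := Nat.mul_le_mul_left _ (by omega)
      rw [Nat.succ_eq_add_one, mul_add] at hk
      rw [mul_add] at this
      omega
    · rw [Nat.succ_eq_add_one, mul_add] at hk
      change m + 6*m*r = j
      omega

/-- the integer approximating eight times the Jacobi sum -/
def cc (m : ℕ) : ℤ := 6*m*(15*((3*m).choose m) - 10*((9*m).choose m + (9*m).choose (7*m))
  + 3*((15*m).choose m + (15*m).choose (7*m) + (15*m).choose (13*m)))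

lemma eightJ {m : ℕ} (h : p = 6*m+1) (hm : 0 < m) :
    8 * ∑ a : ZMod p, tau a ^ (5*m) * tau (1-a)^(3*m) = (-1)^m * ((cc m : ℤ) : ZMod (p^3)) := by
  have h2 : p ≠ 2 := by omega
  have key : ∀ a : ZMod p, 8*(tau a ^ (5*m) * tau (1-a)^(3*m)) = 15*(tau a ^ (5*m) * (1 - tau a)^(3*m+6*m*0))
      - 10*(tau a ^ (5*m) * (1 - tau a)^(3*m+6*m*1)) + 3*(tau a ^ (5*m) * (1 - tau a)^(3*m+6*m*2)) := by
    intro a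
    by_cases ha : a = 1
    · subst ha
      rw [sub_self, tau_zero, tau_one, sub_self, zero_pow (by omega), zero_pow (by omega), zero_pow (by omega), zero_pow (by omega)]
      ring
    · have hu : red p ((1 - tau a)^(p-1)) = 1 := by
        rw [map_pow, map_sub, map_one, red_tau]
        exact ZMod.pow_card_sub_one_eq_one (sub_ne_zero.2 (Ne.symm ha))
      have := interp_pow (N := 3*m*(p+1)) (by subst h; ring) hu h2
      rw [tau_one_sub, ← pow_mul, show p^2*(3*m) = 3*m + (p-1)*(3*m*(p+1)) by
        rw [show p - 1 = 6*m by omega, h]; ring, pow_add, pow_mul _ (p-1) (3*m*(p+1)), pow_add _ (3*m) (6*m*0),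
        pow_add _ (3*m) (6*m*1), pow_add _ (3*m) (6*m*2), mul_zero, mul_one, pow_mul _ (6*m) 2]
      rw [show p - 1 = 6*m by omega] at this ⊢
      linear_combination tau a^(5*m) * (1 - tau a)^(3*m) * this
  rw [Finset.mul_sum, Finset.sum_congr rfl (fun a _ => key a), Finset.sum_add_distrib, Finset.sum_sub_distrib,
    ← Finset.mul_sum, ← Finset.mul_sum, ← Finset.mul_sum, Q_eq h hm, Q_eq h hm, Q_eq h hm]
  simp only [Finset.sum_range_succ, Finset.sum_range_zero]
  rw [show m+6*m*0 = m by ring, show m+6*m*1 = 7*m by ring, show m+6*m*2 = 13*m by ring,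
    show 3*m+6*m*0 = 3*m by ring, show 3*m+6*m*1 = 9*m by ring, show 3*m+6*m*2 = 15*m by ring]
  unfold cc
  push_cast
  ring

end
end S4


/-! ### Part 10: norm and trace of the Jacobi sum -/
namespace S4
section
variable {p : ℕ} [hp : Fact p.Prime]

/-- integer values of the quadratic part -/
def ff (a : ZMod p) : ℤ := quadraticChar (ZMod p) a * quadraticChar (ZMod p) (1-a)

lemma ff_zero : ff (0 : ZMod p) = 0 := by simp [ff]

lemma ff_odd {a : ZMod p} (h0 : a ≠ 0) (h1 : a ≠ 1) : ff a = 1 ∨ ff a = -1 := by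
  unfold ff
  rcases quadraticChar_dichotomy h0 with h | h <;>
  rcases quadraticChar_dichotomy (sub_ne_zero.2 (Ne.symm h1)) with h' | h' <;> rw [h, h'] <;> simp

/-- class sums -/
def cs (e : ZMod p → ℕ) (i : ℕ) : ℤ := ∑ a : ZMod p, if e a % 3 = i then ff a else 0

lemma cs_sum {R : Type*} [CommRing R] (e : ZMod p → ℕ) {w : R} (hw : w^3 = 1) :
    ∑ a : ZMod p, (ff a : R) * w^(e a) = cs e 0 + cs e 1 * w + cs e 2 * w^2 := by
  unfold cs
  push_cast
  rw [Finset.sum_mul, Finset.sum_mul, ← Finset.sum_add_distrib, ← Finset.sum_add_distrib]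
  refine Finset.sum_congr rfl fun a _ => ?_
  have e1 : w^(e a) = w^(e a % 3) := by
    conv_lhs => rw [← Nat.mod_add_div (e a) 3, pow_add, pow_mul, hw, one_pow, mul_one]
  rw [e1]
  have : e a % 3 = 0 ∨ e a % 3 = 1 ∨ e a % 3 = 2 := by omega
  rcases this with h | h | h <;> rw [h] <;> simp

lemma exists_log (g : (ZMod p)ˣ) (hg : ∀ x, x ∈ Subgroup.zpowers g) :
    ∃ e : ZMod p → ℕ, ∀ a, a ≠ 0 → a = (g:ZMod p)^(e a) := by
  have : ∀ a : ZMod p, ∃ k : ℕ, a ≠ 0 → a = (g:ZMod p)^k := by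
    intro a
    by_cases h : a = 0
    · exact ⟨0, fun h' => absurd h h'⟩
    · have h1 := hg (Units.mk0 a h)
      rw [← mem_powers_iff_mem_zpowers] at h1
      obtain ⟨k, hk⟩ := h1
      refine ⟨k, fun _ => ?_⟩
      have := congrArg (Units.val) hk
      simpa using this.symm
  choose e he using this
  exact ⟨e, he⟩

lemma log_mod {m : ℕ} (h : p = 6*m+1) {g : (ZMod p)ˣ} (hg : ∀ x, x ∈ Subgroup.zpowers g) {k : ℕ}
    (hk : (g:ZMod p)^k = 1) : k % 3 = 0 := by
  have h1 : g^k = 1 := by ext; simpa using hk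
  have := orderOf_dvd_of_pow_eq_one h1
  rw [orderOf_eq_card_of_forall_mem_zpowers hg, Nat.card_eq_fintype_card, ZMod.card_units,
    show p - 1 = 3*(2*m) by omega] at this
  have := (Dvd.intro _ rfl).trans this
  omega

lemma cs_parity {m : ℕ} (h : p = 6*m+1) {g : (ZMod p)ˣ} (hg : ∀ x, x ∈ Subgroup.zpowers g)
    {e : ZMod p → ℕ} (he : ∀ a, a ≠ 0 → a = (g:ZMod p)^(e a)) : (2:ℤ) ∣ cs e 1 - cs e 2 := by
  have h2 : cs e 2 = ∑ a : ZMod p, if e (a⁻¹) % 3 = 2 then ff (a⁻¹) else 0 :=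
    (Fintype.sum_equiv (⟨fun a => a⁻¹, fun a => a⁻¹, inv_inv, inv_inv⟩ : ZMod p ≃ ZMod p) _ _ (fun a => rfl)).symm
  rw [h2, cs, ← Finset.sum_sub_distrib]
  refine Finset.dvd_sum fun a _ => ?_
  by_cases h0 : a = 0
  · subst h0
    simp [ff_zero]
  · have hi : a⁻¹ ≠ 0 := inv_ne_zero h0
    have hs : (e a + e a⁻¹) % 3 = 0 := log_mod h hg (by
      rw [pow_add, ← he a h0, ← he _ hi, mul_inv_cancel₀ h0])
    by_cases hc : e a % 3 = 1
    · have hc' : e a⁻¹ % 3 = 2 := by omega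
      have h1 : a ≠ 1 := by
        rintro rfl
        have := log_mod h hg (he 1 h0).symm
        omega
      have h1' : a⁻¹ ≠ 1 := by simpa using h1
      rw [if_pos hc, if_pos hc']
      rcases ff_odd h0 h1 with h | h <;> rcases ff_odd hi h1' with h' | h' <;> rw [h, h'] <;> norm_num
    · have hc' : ¬ e a⁻¹ % 3 = 2 := by omega
      rw [if_neg hc, if_neg hc']; simp

lemma cs_norm {m : ℕ} (h : p = 6*m+1) {g : (ZMod p)ˣ} (hg : ∀ x, x ∈ Subgroup.zpowers g)
    {e : ZMod p → ℕ} (he : ∀ a, a ≠ 0 → a = (g:ZMod p)^(e a)) :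
    (cs e 0)^2 + (cs e 1)^2 + (cs e 2)^2 - cs e 0 * cs e 1 - cs e 1 * cs e 2 - cs e 2 * cs e 0 = (p:ℤ) := by
  have prim := Complex.isPrimitiveRoot_exp 3 (by norm_num)
  set w : ℂ := Complex.exp (2 * Real.pi * Complex.I / (3:ℕ)) with hw
  have w3 : w^3 = 1 := prim.pow_eq_one
  have w1 : w ≠ 1 := prim.ne_one (by norm_num)
  have wq : w^2 + w + 1 = 0 := by
    have : (w-1)*(w^2+w+1) = 0 := by linear_combination w3
    exact (mul_eq_zero.1 this).resolve_left (sub_ne_zero.2 w1)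
  have wi : w * w^2 = 1 := by rw [← w3]; ring
  let wu : ℂˣ := ⟨w, w^2, wi, by rw [mul_comm]; exact wi⟩
  have hmem : wu ∈ rootsOfUnity (Fintype.card (ZMod p)ˣ) ℂ := by
    rw [mem_rootsOfUnity, ZMod.card_units]
    ext
    change w^(p-1) = 1
    rw [show p - 1 = 3*(2*m) by omega, pow_mul, w3, one_pow]
  let χ := MulChar.ofRootOfUnity hmem hg
  have hχg : χ (g:ZMod p) = w := MulChar.ofRootOfUnity_spec hmem hg
  have hχ : ∀ a, a ≠ 0 → χ a = w^(e a) := by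
    intro a ha
    conv_lhs => rw [he a ha, map_pow, hχg]
  have h2 : ringChar (ZMod p) ≠ 2 := by rw [ZMod.ringChar_zmod_n]; omega
  let φ : MulChar (ZMod p) ℂ := (quadraticChar (ZMod p)).ringHomComp (Int.castRingHom ℂ)
  have hφ1 : φ ≠ 1 := (MulChar.ringHomComp_ne_one_iff (RingHom.injective_int _)).2 (quadraticChar_ne_one h2)
  have hφa : ∀ a, φ a = ((quadraticChar (ZMod p) a : ℤ) : ℂ) := fun a => rfl
  have g0 : (g:ZMod p) ≠ 0 := g.ne_zero
  have hφg : φ (g:ZMod p) * φ (g:ZMod p) = 1 := by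
    rw [hφa]
    rcases quadraticChar_dichotomy g0 with h | h <;> rw [h] <;> norm_num
  have hφi : φ⁻¹ = φ := ((quadraticChar_isQuadratic (ZMod p)).comp _).inv
  have n1 : χ * φ ≠ 1 := by
    intro hh
    have h1 : χ (g:ZMod p) * φ (g:ZMod p) = 1 := by
      have := congrArg (fun ψ : MulChar (ZMod p) ℂ => ψ (g:ZMod p)) hh
      simpa [MulChar.one_apply] using this
    rw [hχg] at h1
    have : w^2 = 1 := by linear_combination (w * φ (g:ZMod p) + 1)*h1 - w^2*hφg
    exact w1 (by rw [← wi, this, mul_one])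
  have n2 : χ * φ * φ ≠ 1 := by
    intro hh
    have h1 : χ (g:ZMod p) * φ (g:ZMod p) * φ (g:ZMod p) = 1 := by
      have := congrArg (fun ψ : MulChar (ZMod p) ℂ => ψ (g:ZMod p)) hh
      simpa [MulChar.one_apply] using this
    rw [hχg, mul_assoc, hφg, mul_one] at h1
    exact w1 h1
  have key := jacobiSum_mul_jacobiSum_inv (by rw [ringChar.eq_zero, ZMod.ringChar_zmod_n]; exact hp.out.ne_zero.symm) n1 hφ1 n2
  rw [mul_inv, hφi, ZMod.card] at key
  have j1 : jacobiSum (χ * φ) φ = ∑ a : ZMod p, (ff a : ℂ) * w^(e a) := by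
    unfold jacobiSum
    refine Finset.sum_congr rfl fun a _ => ?_
    by_cases h0 : a = 0
    · rw [h0, ff_zero, MulChar.map_zero]; simp
    · rw [MulChar.mul_apply, hχ a h0, hφa, hφa, ff]; push_cast; ring
  have j2 : jacobiSum (χ⁻¹ * φ) φ = ∑ a : ZMod p, (ff a : ℂ) * (w^2)^(e a) := by
    unfold jacobiSum
    refine Finset.sum_congr rfl fun a _ => ?_
    by_cases h0 : a = 0
    · rw [h0, ff_zero, MulChar.map_zero]; simp
    · rw [MulChar.mul_apply, MulChar.inv_apply_eq_inv', hχ a h0, hφa, hφa, ff, ← inv_pow,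
        inv_eq_of_mul_eq_one_right wi]; push_cast; ring
  rw [j1, j2, cs_sum e w3, cs_sum e (by rw [← pow_mul, mul_comm, pow_mul, w3, one_pow])] at key
  have : (((cs e 0)^2 + (cs e 1)^2 + (cs e 2)^2 - cs e 0 * cs e 1 - cs e 1 * cs e 2 - cs e 2 * cs e 0 : ℤ):ℂ) = ((p:ℤ):ℂ) := by
    push_cast
    rw [← key]
    generalize (cs e 0 : ℂ) = A
    generalize (cs e 1 : ℂ) = B
    generalize (cs e 2 : ℂ) = C
    linear_combination (-(A*B + A*C + (B^2+C^2)*(w-1) + B*C*(w^2-w+1) + (A+B*w+C*w^2)*C*w*(w-1))) * wq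
  exact_mod_cast this

lemma rep_unique {a b x y : ℤ} (h1 : (p:ℤ) = a^2+3*b^2) (h2 : (p:ℤ) = x^2+3*y^2) : a^2 = x^2 := by
  have hpp : Prime (p:ℤ) := Nat.prime_iff_prime_int.1 hp.out
  have hpos : (0:ℤ) < p := by exact_mod_cast hp.out.pos
  have id : (a*y-b*x)*(a*y+b*x) = p*(y^2-b^2) := by
    linear_combination (-y^2)*h1 + b^2*h2
  have small : ∀ t s : ℤ, (p:ℤ)^2 = s^2 + 3*t^2 → (p:ℤ) ∣ t → t = 0 := by
    rintro t s hts ⟨k, rfl⟩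
    have : k = 0 := by
      by_contra hk
      have h1 : 1 ≤ k^2 := by have := sq_nonneg k; have : k^2 ≠ 0 := pow_ne_zero _ hk; omega
      nlinarith [sq_nonneg s, mul_pos hpos hpos]
    rw [this, mul_zero]
  have h0 : (a*y-b*x)*(a*y+b*x) = 0 := by
    rcases hpp.dvd_or_dvd (Dvd.intro _ id.symm) with h | h
    · rw [small _ (a*x+3*b*y) (by linear_combination (p + a^2+3*b^2)*h1 - (a^2+3*b^2)*(h1-h2)) h, zero_mul]
    · rw [small _ (a*x-3*b*y) (by linear_combination (p + a^2+3*b^2)*h1 - (a^2+3*b^2)*(h1-h2)) h, mul_zero]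
  rw [h0] at id
  have : y^2-b^2 = 0 := (mul_eq_zero.1 id.symm).resolve_left hpos.ne'
  linear_combination h2 - h1 + 3*this

lemma jac_main {m : ℕ} (h : p = 6*m+1) {x y : ℤ} (hxy : (p:ℤ) = x^2+3*y^2) :
    (p:ℤ)^3 ∣ (cc m)^4 + 4096*(p:ℤ)^2 - 64*(4*x^2-2*p)*(cc m)^2 := by
  have hm : 0 < m := by
    rcases Nat.eq_zero_or_pos m with rfl | h'
    · exact absurd hp.out (by rw [h]; norm_num)
    · exact h'
  obtain ⟨g, hg⟩ := exists_gen p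
  obtain ⟨e, he⟩ := exists_log g hg
  have hn := cs_norm h hg he
  obtain ⟨b0, hb0⟩ := cs_parity h hg he
  have hJ := eightJ h hm
  set J := ∑ a : ZMod p, tau a ^ (5*m) * tau (1-a)^(3*m) with hJdef
  have g0 : (g:ZMod p) ≠ 0 := g.ne_zero
  set w : ZMod (p^3) := tau (g:ZMod p)^(2*m) with hw
  have w3 : w^3 = 1 := by
    rw [hw, ← pow_mul, show 2*m*3 = p - 1 by omega, tau_fermat g0]
  have wu : IsUnit (w - 1) := red_unit (by
    rw [hw, map_sub, map_pow, red_tau, map_one]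
    refine sub_ne_zero.2 fun hh => ?_
    have h1 : g^(2*m) = 1 := by ext; simpa using hh
    have := orderOf_dvd_of_pow_eq_one h1
    rw [orderOf_eq_card_of_forall_mem_zpowers hg, Nat.card_eq_fintype_card, ZMod.card_units] at this
    have := Nat.le_of_dvd (by omega) this
    omega)
  have wq : w^2 + w + 1 = 0 := by
    have : (w-1)*(w^2+w+1) = 0 := by linear_combination w3
    exact wu.mul_right_eq_zero.1 this
  have hJ2 : J = cs e 0 + cs e 1 * w + cs e 2 * w^2 := by
    rw [← cs_sum e w3, hJdef]
    refine Finset.sum_congr rfl fun a _ => ?_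
    by_cases h0 : a = 0
    · rw [h0, ff_zero, tau_zero, zero_pow (by omega)]; simp
    · have e1 : tau a ^ (2*m) = w^(e a) := by
        conv_lhs => rw [he a h0, tau_pow]
        rw [hw, ← pow_mul, ← pow_mul, mul_comm]
      have e2 := tau_half (p := p) (by omega) a
      have e3 := tau_half (p := p) (by omega) (1-a)
      rw [show p/2 = 3*m by omega] at e2 e3
      rw [show 5*m = 3*m+2*m by ring, pow_add, e1, e2, e3, ff]
      push_cast
      ring
  set a0 : ℤ := cs e 0 - cs e 2 - b0 with ha0
  have hb1 : cs e 1 = cs e 2 + 2*b0 := by linear_combination hb0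
  have hab : (p:ℤ) = a0^2 + 3*b0^2 := by
    rw [← hn, ha0, hb1]; ring
  have hx := rep_unique hab hxy
  have habc : (p:ZMod (p^3)) = (a0:ZMod (p^3))^2 + 3*(b0:ZMod (p^3))^2 := by
    have := congrArg (Int.cast (R := ZMod (p^3))) hab
    push_cast at this
    exact this
  have hJ3 : J = a0 + b0*(2*w+1) := by
    rw [hJ2, hb1, ha0]
    push_cast
    linear_combination (cs e 2 : ZMod (p^3)) * wq
  have hquad : J^2 - 2*a0*J + p = 0 := by
    rw [hJ3, habc]
    linear_combination 4*(b0:ZMod (p^3))^2*wq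
  have hxc : (a0:ZMod (p^3))^2 = (x:ZMod (p^3))^2 := by exact_mod_cast congrArg (Int.cast (R := ZMod (p^3))) hx
  have h4 : J^4 + p^2 - (4*(x:ZMod (p^3))^2 - 2*p)*J^2 = 0 := by
    rw [← hxc]
    linear_combination (J^2 + 2*a0*J + p)*hquad
  have s1 : ((-1:ZMod (p^3))^m)^2 = 1 := by rw [← pow_mul, mul_comm, pow_mul]; simp
  have key : (((cc m)^4 + 4096*(p:ℤ)^2 - 64*(4*x^2-2*p)*(cc m)^2 : ℤ) : ZMod (p^3)) = 0 := by
    push_cast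
    have c2 : (cc m : ZMod (p^3))^2 = 64*J^2 := by
      have : (8*J)^2 = ((-1)^m * (cc m : ZMod (p^3)))^2 := by rw [hJ]
      rw [mul_pow, mul_pow, s1] at this
      linear_combination -this
    rw [show (cc m : ZMod (p^3))^4 = ((cc m : ZMod (p^3))^2)^2 by ring, c2]
    linear_combination 4096*h4
  have := (ZMod.intCast_zmod_eq_zero_iff_dvd _ _).1 key
  exact_mod_cast this

end
end S4


/-! ### Part 11: the integer `cc m` modulo `p^3` -/
namespace S4
section
variable {p : ℕ} [hp : Fact p.Prime] [h3 : Fact (3 < p)]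

lemma U1 {m : ℕ} (h : p = 6*m+1) (k : ℕ) :
    ((6*m+k).factorial : ℚ) = (6*m).factorial * p * k.factorial * PP p k (-1) / (p+k) := by
  have hq : (p:ℚ) = 6*m+1 := by exact_mod_cast h
  have h0 : (p:ℚ) + k ≠ 0 := by rw [hq]; positivity
  rw [eq_div_iff h0, ← R_one, ← R_one, R_split, show (1:ℚ) + ((6*m:ℕ):ℚ) = p by rw [hq]; push_cast; ring]
  have e1 := R_succ (p:ℚ) k
  rw [R_succ', R_PP' p k (-1) (by ring)] at e1
  linear_combination (-R 1 (6*m)) * e1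

lemma U2 {m : ℕ} (h : p = 6*m+1) (k : ℕ) :
    ((12*m+k).factorial : ℚ) = (12*m).factorial * (2*p-1) * (2*p) * k.factorial * PP p k (-2) / ((2*p-1+k)*(2*p+k)) := by
  have hq : (p:ℚ) = 6*m+1 := by exact_mod_cast h
  have h0 : ((2*(p:ℚ)-1+k)*(2*p+k)) ≠ 0 := by
    rw [hq, show (2*(6*(m:ℚ)+1)-1+k) = 12*m+1+k by ring]; positivity
  rw [eq_div_iff h0, ← R_one, ← R_one, R_split, show (1:ℚ) + ((12*m:ℕ):ℚ) = 2*p-1 by rw [hq]; push_cast; ring]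
  have e1 := R_succ (2*(p:ℚ)-1) k
  have e2 := R_succ (2*(p:ℚ)-1) (k+1)
  rw [R_succ', R_succ', R_PP' p k (-2) (by ring)] at e2
  push_cast at e2
  linear_combination (-R 1 (12*m)) * e2 - R 1 (12*m) * (2*p+k) * e1

lemma U3 {m : ℕ} (h : p = 6*m+1) :
    ((12*m).factorial : ℚ) = (6*m).factorial * p * (6*m).factorial * PP p (p-1) (-1) / (2*p-1) := by
  have hq : (p:ℚ) = 6*m+1 := by exact_mod_cast h
  have := U1 h (6*m)
  rw [show 6*m+6*m = 12*m by ring] at this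
  rw [this, show p - 1 = 6*m by omega, show (p:ℚ) + ((6*m:ℕ):ℚ) = 2*p-1 by rw [hq]; push_cast; ring]

lemma choose_div {N j l : ℕ} (h : N = j + l) : (N.choose j : ℚ) = N.factorial / (j.factorial * l.factorial) := by
  rw [Nat.cast_choose ℚ (by omega : j ≤ N), show N - j = l by omega]

lemma bin_forms {m : ℕ} (h : p = 6*m+1) :
    ((9*m).choose m : ℚ) = ((3*m).choose m : ℚ) * (2/3) * ((1-4*p)/(1-3*p)*(PP p (3*m) (-1)/PP p (2*m) (-1))) ∧
    ((9*m).choose (7*m) : ℚ) = ((3*m).choose m : ℚ) * (1/3) * ((1-7*p)/(1-3*p)*(PP p (3*m) (-1)/PP p m (-1))) ∧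
    ((15*m).choose m : ℚ) = ((3*m).choose m : ℚ) * (4*(4-7*p)/27) *
      ((1-7*p)/((1-5*p)*(1-5/3*p))*(PP p (3*m) (-2)/PP p (2*m) (-2))) ∧
    ((15*m).choose (13*m) : ℚ) = ((3*m).choose m : ℚ) * ((7-13*p)/27) *
      ((1-13*p)/((1-5*p)*(1-5/3*p))*(PP p (3*m) (-2)/PP p m (-2))) ∧
    ((15*m).choose (7*m) : ℚ) = ((3*m).choose m : ℚ) * (4/27) *
      (((1-7*p)*(1-4*p))/((1-5*p)*(1-5/3*p))*(PP p (p-1) (-1)*PP p (3*m) (-2)/(PP p m (-1)*PP p (2*m) (-1)))) := by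
  have hD := dat_one h
  have n1 : (-1:ℚ) ∈ O p := neg_one_mem'
  have n2 : (-2:ℚ) ∈ O p := neg_mem (by simpa using natCast_mem (O p) 2)
  have u1 := (L_Pm hD n1).ne
  have u2 := (L_Pm hD n2).ne
  have u3 := (L_Pk hD n1).ne
  have u4 := (L_Pk hD n2).ne
  have hq : (m:ℚ) = (p-1)/6 := by
    have : (p:ℚ) = 6*m+1 := by exact_mod_cast h
    rw [this]; ring
  have hb := beta_one m
  have f1 := fac_ne m
  have f2 := fac_ne (2*m)
  have f6 := fac_ne (6*m)
  have f12 := fac_ne (12*m)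
  have p1 : (1:ℚ) < p := by exact_mod_cast hp.out.one_lt
  have d1 : 1-3*(p:ℚ) ≠ 0 := by linarith
  have d2 : 1-5*(p:ℚ) ≠ 0 := by linarith
  have d3 : 3-5*(p:ℚ) ≠ 0 := by linarith
  have d4 : 2*(p:ℚ)-1 ≠ 0 := by linarith
  have d5 : (p:ℚ) ≠ 0 := by linarith
  have a1 : (p:ℚ) + ((m:ℕ):ℚ) = (7*p-1)/6 := by rw [hq]; ring
  have a2 : (p:ℚ) + ((2*m:ℕ):ℚ) = (4*p-1)/3 := by push_cast; rw [hq]; ring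
  have a3 : (p:ℚ) + ((3*m:ℕ):ℚ) = -(1-3*p)/2 := by push_cast; rw [hq]; ring
  have b1 : 2*(p:ℚ) + ((m:ℕ):ℚ) = (13*p-1)/6 := by rw [hq]; ring
  have b2 : 2*(p:ℚ) + ((2*m:ℕ):ℚ) = (7*p-1)/3 := by push_cast; rw [hq]; ring
  have b3 : 2*(p:ℚ) + ((3*m:ℕ):ℚ) = -(1-5*p)/2 := by push_cast; rw [hq]; ring
  have c1 : 2*(p:ℚ) - 1 + ((m:ℕ):ℚ) = (13*p-7)/6 := by rw [hq]; ring
  have c2 : 2*(p:ℚ) - 1 + ((2*m:ℕ):ℚ) = (7*p-4)/3 := by push_cast; rw [hq]; ring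
  have c3 : 2*(p:ℚ) - 1 + ((3*m:ℕ):ℚ) = -(3-5*p)/2 := by push_cast; rw [hq]; ring
  have e1 : 4*(p:ℚ)-1 ≠ 0 := by linarith
  have e2 : 7*(p:ℚ)-1 ≠ 0 := by linarith
  have e3 : 13*(p:ℚ)-1 ≠ 0 := by linarith
  have e4 : 7*(p:ℚ)-4 ≠ 0 := by linarith
  have e5 : 13*(p:ℚ)-7 ≠ 0 := by linarith
  have k1 : (1-5/3*(p:ℚ)) = (3-5*p)/3 := by ring
  have g7 := U1 h m
  have g8 := U1 h (2*m)
  have g9 := U1 h (3*m)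
  have g13 := U2 h m
  have g14 := U2 h (2*m)
  have g15 := U2 h (3*m)
  have g12 := U3 h
  rw [show 6*m+m = 7*m by ring, a1] at g7
  rw [show 6*m+2*m = 8*m by ring, a2] at g8
  rw [show 6*m+3*m = 9*m by ring, a3, hb] at g9
  rw [show 12*m+m = 13*m by ring, b1, c1] at g13
  rw [show 12*m+2*m = 14*m by ring, b2, c2] at g14
  rw [show 12*m+3*m = 15*m by ring, b3, c3, hb] at g15
  rw [choose_div (show 9*m = m + 8*m by ring), choose_div (show 9*m = 7*m + 2*m by ring),
    choose_div (show 15*m = m + 14*m by ring), choose_div (show 15*m = 13*m + 2*m by ring),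
    choose_div (show 15*m = 7*m + 8*m by ring), g9, g15, g14, g13, g8, g7, k1]
  clear g7 g8 g9 g13 g14 g15 a1 a2 a3 b1 b2 b3 c1 c2 c3 hb hq k1
  generalize PP p m (-1) = Pm at *
  generalize PP p m (-2) = Pm' at *
  generalize PP p (2*m) (-1) = Pk at *
  generalize PP p (2*m) (-2) = Pk' at *
  generalize PP p (3*m) (-1) = Pn at *
  generalize PP p (3*m) (-2) = Pn' at *
  generalize PP p (p-1) (-1) = Pp at *
  generalize ((3*m).choose m : ℚ) = β at *
  generalize ((6*m).factorial:ℚ) = N6 at *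
  generalize (m.factorial:ℚ) = fm at *
  generalize ((2*m).factorial:ℚ) = fk at *
  refine ⟨?_, ?_, ?_, ?_, ?_⟩
  · generalize (p:ℚ) = q at *
    field_simp
    ring
  · generalize (p:ℚ) = q at *
    field_simp
    ring
  · generalize ((12*m).factorial:ℚ) = N12 at *
    generalize (p:ℚ) = q at *
    field_simp
    ring
  · generalize ((12*m).factorial:ℚ) = N12 at *
    generalize (p:ℚ) = q at *
    field_simp
    ring
  · rw [g12]
    clear g12 f12
    generalize (p:ℚ) = q at *
    generalize 2*q-1 = t at *
    field_simp
    ring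

lemma L.E2 {a α α1 α2 : ℚ} (h : L p a α) (e : α = α1 + α2) (h1 : M p 1 α1) (h2 : M p 2 α2) :
    M p 3 (a - (1 + α1 + α2 + α1^2/2)) := by
  have i1 : M p 3 (α1*α2) := h1.mul h2
  have i2 : M p 3 (α2*α2) := (h2.mul h2).mono (by norm_num)
  refine ((h.2.add i1).add (i2.rat 1 1 0)).congr ?_
  rw [e]; push_cast; ring

lemma cc_eq {m : ℕ} (h : p = 6*m+1) :
    M p 3 ((cc m : ℚ)/8 + ((3*m).choose m : ℚ) * (1 + mu p m/2 + (mu p m)^2/8)) := by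
  have hD := dat_one h
  have n1 : (-1:ℚ) ∈ O p := neg_one_mem'
  have n2 : (-2:ℚ) ∈ O p := neg_mem (by simpa using natCast_mem (O p) 2)
  obtain ⟨f1, f2, f3, f4, f5⟩ := bin_forms h
  have ms := M_ss (p := p) (k := 2*m) (by omega)
  have mk := M_hh (p := p) (k := 2*m) (by omega)
  have mn := M_hh (p := p) (k := 3*m) (by omega)
  have mp := M_p (p := p)
  have pm := p_mem (p := p)
  have hl : ∀ z : ℤ, L p (1 - z*p) (-(z*p) - (z*p)^2/2) := fun z => L_lin (mp.lmul (intCast_mem _ _))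
  have hl53 : L p (1 - 5/3*p) (-(5/3*p) - (5/3*p)^2/2) := L_lin ((mp.rat 5 0 1).congr (by push_cast; ring))
  have l3 := hl 3
  have l4 := hl 4
  have l5 := hl 5
  have l7 := hl 7
  have l13 := hl 13
  push_cast at l3 l4 l5 l7 l13
  have pn1 := L_Pn hD.n n1
  have pn2 := L_Pn hD.n n2
  have pk1 := L_Pk hD n1
  have pk2 := L_Pk hD n2
  have pm1 := L_Pm hD n1
  have pm2 := L_Pm hD n2
  have pp1 := L_Pp hD.n n1
  have x1 := (l4.div l3).mul (pn1.div pk1)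
  have x2 := (l7.div l3).mul (pn1.div pm1)
  have x3 := (l7.div (l5.mul hl53)).mul (pn2.div pk2)
  have x4 := (l13.div (l5.mul hl53)).mul (pn2.div pm2)
  have x5 := ((l7.mul l4).div (l5.mul hl53)).mul ((pp1.mul pn2).div (pm1.mul pk1))
  have cq : (cc m : ℚ) = (p-1)*(15*((3*m).choose m) - 10*((9*m).choose m + (9*m).choose (7*m))
      + 3*((15*m).choose m + (15*m).choose (7*m) + (15*m).choose (13*m))) := by
    unfold cc
    have hq : (p:ℚ) = 6*m+1 := by exact_mod_cast h
    rw [hq]; push_cast; ring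
  rw [cq, f1, f2, f3, f4, f5]
  clear cq f1 f2 f3 f4 f5
  revert x1 x2 x3 x4 x5
  generalize (1-4*(p:ℚ))/(1-3*p)*(PP p (3*m) (-1)/PP p (2*m) (-1)) = X1
  generalize (1-7*(p:ℚ))/(1-3*p)*(PP p (3*m) (-1)/PP p m (-1)) = X2
  generalize (1-7*(p:ℚ))/((1-5*p)*(1-5/3*p))*(PP p (3*m) (-2)/PP p (2*m) (-2)) = X3
  generalize (1-13*(p:ℚ))/((1-5*p)*(1-5/3*p))*(PP p (3*m) (-2)/PP p m (-2)) = X4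
  generalize ((1-7*(p:ℚ))*(1-4*p))/((1-5*p)*(1-5/3*p))*(PP p (p-1) (-1)*PP p (3*m) (-2)/(PP p m (-1)*PP p (2*m) (-1))) = X5
  intro x1 x2 x3 x4 x5
  unfold mu
  clear pn1 pn2 pk1 pk2 pm1 pm2 pp1 l3 l4 l5 l7 l13 hl hl53
  have bm : ((3*m).choose m : ℚ) ∈ O p := natCast_mem _ _
  generalize ((3*m).choose m : ℚ) = β at *
  generalize hh p (3*m) = a at *
  generalize hh p (2*m) = b at *
  generalize ss p (2*m) = s at *
  have m1 : M p 1 ((-1/1:ℚ)*((p:ℚ)) + (1/1:ℚ)*(a) + (-1/1:ℚ)*(b)) := (((mp.rat (-1) 0 0).add (mn.rat (1) 0 0)).add (mk.rat (-1) 0 0)).congr (by push_cast; ring)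
  have q1 : M p 2 ((-7/2:ℚ)*((p:ℚ)*(p:ℚ)) + (1/2:ℚ)*(s)) := (((mp.mul mp).rat (-7) 1 0).add (ms.rat (1) 1 0)).congr (by push_cast; ring)
  have y1 := x1.E2 (α1 := (-1/1:ℚ)*((p:ℚ)) + (1/1:ℚ)*(a) + (-1/1:ℚ)*(b)) (α2 := (-7/2:ℚ)*((p:ℚ)*(p:ℚ)) + (1/2:ℚ)*(s)) (by ring) m1 q1
  have m2 : M p 1 ((-4/1:ℚ)*((p:ℚ)) + (-1/1:ℚ)*(b)) := ((mp.rat (-4) 0 0).add (mk.rat (-1) 0 0)).congr (by push_cast; ring)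
  have q2 : M p 2 ((-20/1:ℚ)*((p:ℚ)*(p:ℚ)) + (3/1:ℚ)*(s)) := (((mp.mul mp).rat (-20) 0 0).add (ms.rat (3) 0 0)).congr (by push_cast; ring)
  have y2 := x2.E2 (α1 := (-4/1:ℚ)*((p:ℚ)) + (-1/1:ℚ)*(b)) (α2 := (-20/1:ℚ)*((p:ℚ)*(p:ℚ)) + (3/1:ℚ)*(s)) (by ring) m2 q2
  have m3 : M p 1 ((-1/3:ℚ)*((p:ℚ)) + (2/1:ℚ)*(a) + (-2/1:ℚ)*(b)) := (((mp.rat (-1) 0 1).add (mn.rat (2) 0 0)).add (mk.rat (-2) 0 0)).congr (by push_cast; ring)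
  have q3 : M p 2 ((-191/18:ℚ)*((p:ℚ)*(p:ℚ)) + (2/1:ℚ)*(s)) := (((mp.mul mp).rat (-191) 1 2).add (ms.rat (2) 0 0)).congr (by push_cast; ring)
  have y3 := x3.E2 (α1 := (-1/3:ℚ)*((p:ℚ)) + (2/1:ℚ)*(a) + (-2/1:ℚ)*(b)) (α2 := (-191/18:ℚ)*((p:ℚ)*(p:ℚ)) + (2/1:ℚ)*(s)) (by ring) m3 q3
  have m4 : M p 1 ((-19/3:ℚ)*((p:ℚ)) + (-2/1:ℚ)*(b)) := ((mp.rat (-19) 0 1).add (mk.rat (-2) 0 0)).congr (by push_cast; ring)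
  have q4 : M p 2 ((-1271/18:ℚ)*((p:ℚ)*(p:ℚ)) + (11/1:ℚ)*(s)) := (((mp.mul mp).rat (-1271) 1 2).add (ms.rat (11) 0 0)).congr (by push_cast; ring)
  have y4 := x4.E2 (α1 := (-19/3:ℚ)*((p:ℚ)) + (-2/1:ℚ)*(b)) (α2 := (-1271/18:ℚ)*((p:ℚ)*(p:ℚ)) + (11/1:ℚ)*(s)) (by ring) m4 q4
  have m5 : M p 1 ((-13/3:ℚ)*((p:ℚ)) + (1/1:ℚ)*(a) + (-2/1:ℚ)*(b)) := (((mp.rat (-13) 0 1).add (mn.rat (1) 0 0)).add (mk.rat (-2) 0 0)).congr (by push_cast; ring)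
  have q5 : M p 2 ((-335/18:ℚ)*((p:ℚ)*(p:ℚ)) + (7/2:ℚ)*(s)) := (((mp.mul mp).rat (-335) 1 2).add (ms.rat (7) 1 0)).congr (by push_cast; ring)
  have y5 := x5.E2 (α1 := (-13/3:ℚ)*((p:ℚ)) + (1/1:ℚ)*(a) + (-2/1:ℚ)*(b)) (α2 := (-335/18:ℚ)*((p:ℚ)*(p:ℚ)) + (7/2:ℚ)*(s)) (by ring) m5 q5
  have t1 : ∀ {x : ℚ}, M p 3 x → M p 3 ((p:ℚ)*x) := fun h => h.lmul pm
  have z0 : M p 3 _ := ((mp.mul mp).mul mp).mono (show 3 ≤ 1+1+1 by norm_num)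
  have z1 : M p 3 _ := (mp.mul ms).mono (show 3 ≤ 1+2 by norm_num)
  have z2 : M p 3 _ := ((mp.mul mp).mul mn).mono (show 3 ≤ 1+1+1 by norm_num)
  have z3 : M p 3 _ := ((mp.mul mp).mul mk).mono (show 3 ≤ 1+1+1 by norm_num)
  have z4 : M p 3 _ := ((mp.mul mn).mul mn).mono (show 3 ≤ 1+1+1 by norm_num)
  have z5 : M p 3 _ := ((mp.mul mn).mul mk).mono (show 3 ≤ 1+1+1 by norm_num)
  have z6 : M p 3 _ := ((mp.mul mk).mul mk).mono (show 3 ≤ 1+1+1 by norm_num)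
  have z7 : M p 3 _ := (((mp.mul mp).mul mp).mul mp).mono (show 3 ≤ 1+1+1+1 by norm_num)
  have z8 : M p 3 _ := ((mp.mul mp).mul ms).mono (show 3 ≤ 1+1+2 by norm_num)
  have z9 : M p 3 _ := (((mp.mul mp).mul mp).mul mn).mono (show 3 ≤ 1+1+1+1 by norm_num)
  have z10 : M p 3 _ := (((mp.mul mp).mul mp).mul mk).mono (show 3 ≤ 1+1+1+1 by norm_num)
  have z11 : M p 3 _ := (((mp.mul mp).mul mn).mul mn).mono (show 3 ≤ 1+1+1+1 by norm_num)
  have z12 : M p 3 _ := (((mp.mul mp).mul mn).mul mk).mono (show 3 ≤ 1+1+1+1 by norm_num)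
  have z13 : M p 3 _ := (((mp.mul mp).mul mk).mul mk).mono (show 3 ≤ 1+1+1+1 by norm_num)
  have z14 : M p 3 _ := (mk.mul ms).mono (show 3 ≤ 1+2 by norm_num)
  have z15 : M p 3 _ := (mn.mul ms).mono (show 3 ≤ 1+2 by norm_num)
  have z16 : M p 3 _ := (ms.mul ms).mono (show 3 ≤ 2+2 by norm_num)
  have key := ((((((((((((((((((((((((((((((t1 y1).rat (-5) 1 1).add (y1.rat (5) 1 1)).add ((t1 y2).rat (-5) 2 1)).add (y2.rat (5) 2 1)).add ((t1 y3).rat (11) 1 2)).add ((t1 (t1 y3)).rat (-7) 1 2)).add (y3.rat (-2) 0 2)).add ((t1 y4).rat (5) 1 2)).add ((t1 (t1 y4)).rat (-13) 3 2)).add (y4.rat (-7) 3 2)).add ((t1 y5).rat (1) 1 2)).add (y5.rat (-1) 1 2)).add (z0.rat (-7927) 3 4)).add (z1.rat (101) 2 2)).add (z2.rat (-16) 0 3)).add (z3.rat (329) 2 3)).add (z4.rat (5) 1 1)).add (z5.rat (-31) 1 2)).add (z6.rat (91) 3 2)).add (z7.rat (8575) 3 4)).add (z8.rat (-199) 3 2)).add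 (z9.rat (7) 0 3)).add (z10.rat (-275) 2 3)).add (z11.rat (-7) 0 2)).add (z12.rat (14) 0 2)).add (z13.rat (-41) 2 2)).add (z14.rat (1) 4 1)).add (z15.rat (-1) 3 2)).add (z16.rat (1) 7 2))
  refine (key.rmul bm).congr ?_
  push_cast
  ring

end
end S4


/-! ### Part 12: the main congruences -/
namespace S4
section
variable {p : ℕ} [hp : Fact p.Prime] [h3 : Fact (3 < p)]

lemma S3_sign {n : ℕ} (hn : p = 2*n+1) :
    M p 3 ((-1)^n * S 3 p - (-1)^n * S 2 p/2 - p/24) := by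
  have s0 : ((-1:ℚ)^n) ∈ O p := pow_mem (neg_mem (one_mem _)) _
  have s1 := s_sq n
  have a := (S3_eq (p := p)).lmul s0
  have b := ((S1_eq n hn).lmul s0).rat 1 2 0
  have c := ((K0 hn).lmul s0).rat 1 2 0
  refine ((a.add b).add c).congr ?_
  generalize ((-1:ℚ)^n) = s at *
  push_cast
  linear_combination (-(p:ℚ)/24) * s1

lemma solve {c β μ X F W : ℚ} (hX : X ∈ O p) (hc : c ∈ O p) (hβ : β ∈ O p) (hi : β⁻¹ ∈ O p) (h0 : β ≠ 0)
    (hμ : M p 1 μ) (h1 : M p 3 (c + β*(1+μ/2+μ^2/8)))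
    (hF : M p 3 (F - β^2*(1+μ+μ^2/2))) (hW : M p 3 (W + (p:ℚ)^2/(36*β^2)))
    (hq : M p 3 ((c^2)^2 + (p:ℚ)^2 - (4*X-2*p)*c^2)) :
    M p 3 (F/36 + W - (1/9*X - p/18 - (p:ℚ)^2/(72*X))) := by
  have mO := hμ.mem
  have hp1 := M_p (p := p)
  have pm : (p:ℚ) ∈ O p := p_mem
  have eO : β*(1+μ/2+μ^2/8) ∈ O p := by
    have : β*(1+μ/2+μ^2/8) = (c + β*(1+μ/2+μ^2/8)) - c := by ring
    rw [this]; exact sub_mem h1.mem hc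
  have b2 : β^2 ∈ O p := pow_mem hβ 2
  have m3 : M p 3 (μ*μ*μ) := (hμ.mul hμ).mul hμ
  have v1 : M p 3 (c^2 - β^2*(1+μ+μ^2/2)) := by
    refine (((h1.rmul (sub_mem hc eO)).add ((m3.lmul b2).rat 1 3 0)).add (((m3.rmul mO).lmul b2).rat 1 6 0)).congr ?_
    push_cast; ring
  have v2 : M p 1 (c^2 - β^2) := by
    refine ((v1.mono (by norm_num)).add ((hμ.lmul b2).add (((hμ.rmul mO).lmul b2).rat 1 1 0))).congr ?_
    push_cast; ring
  have nb : ¬ M p 1 (β^2) := by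
    intro h
    exact not_M_one (p := p) ((h.lmul (pow_mem hi 2)).congr (by field_simp))
  have nV : ¬ M p 1 (c^2) := by
    intro h
    exact nb ((h.sub v2).congr (by ring))
  have VO : c^2 ∈ O p := pow_mem hc 2
  generalize c^2 = V at *
  have Vi := inv_mem VO nV
  have V0 : V ≠ 0 := by rintro rfl; exact nV M_zero
  have v3 : M p 1 (V - 4*X) := by
    refine M.cancel (x := V) ?_ Vi V0
    refine (((hq.mono (show 1 ≤ 3 by norm_num)).sub (hp1.rmul pm)).sub ((hp1.rmul VO).rat 2 0 0)).congr ?_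
    push_cast; ring
  have nX : ¬ M p 1 X := by
    intro h
    exact nV ((v3.add (h.rat 4 0 0)).congr (by push_cast; ring))
  have Xi := inv_mem hX nX
  have X0 : X ≠ 0 := by rintro rfl; exact nX M_zero
  have p2 : M p 2 ((p:ℚ)*p) := hp1.mul hp1
  have v4 : M p 3 (V - (4*X - 2*p - (p:ℚ)^2/(4*X))) := by
    refine M.cancel (x := V) ?_ Vi V0
    refine (hq.add (((p2.mul v3).rmul Xi).rat 1 2 0)).congr ?_
    push_cast; field_simp; ring
  have v5 : M p 1 (4*X - β^2) := (v2.sub v3).congr (by ring)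
  have v6 := (((p2.mul v5).rmul Xi).rmul (pow_mem hi 2)).rat (-1) 4 2
  refine (((((hF.sub v1).rat 1 2 2).add hW).add v6).add (v4.rat 1 2 2)).congr ?_
  push_cast; field_simp; ring

lemma main_one {m : ℕ} {x y : ℤ} (h : p = 6*m+1) (hxy : (p:ℤ) = x^2 + 3*y^2) :
    M p 3 ((-1)^(3*m) * S 2 p - (1/9*(x:ℚ)^2 - p/18 - (p:ℚ)^2/(72*(x:ℚ)^2))) := by
  have s0 : ((-1:ℚ)^(3*m)) ∈ O p := pow_mem (neg_mem (one_mem _)) _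
  have hn : p = 2*(3*m)+1 := by omega
  have hμ : M p 1 (mu p m) := by
    have ms := M_ss (p := p) (k := 2*m) (by omega)
    have mk := M_hh (p := p) (k := 2*m) (by omega)
    have mn := M_hh (p := p) (k := 3*m) (by omega)
    refine ((mk.add (mn.rat (-2) 0 1)).add ((ms.mono (by norm_num)).rat 1 2 1)).congr ?_
    unfold mu; push_cast; ring
  have cO : (cc m : ℚ)/8 ∈ O p := by
    have := (M.rat (p := p) (r := 0) (x := (cc m : ℚ)) ⟨_, intCast_mem _ _, by rw [pow_zero, one_mul]⟩ 1 3 0).mem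
    convert this using 1
    push_cast; ring
  have q : M p 3 ((((cc m:ℚ)/8)^2)^2 + (p:ℚ)^2 - (4*(x:ℚ)^2-2*p)*((cc m:ℚ)/8)^2) := by
    have := (M_int_iff (p := p)).2 (jac_main h hxy)
    refine (this.rat 1 12 0).congr ?_
    push_cast; ring
  have key := solve (p := p) (X := (x:ℚ)^2) (pow_mem (intCast_mem _ _) 2) cO (natCast_mem _ _) (beta_inv h)
    (beta_ne m) hμ (cc_eq h) (SF0_one h) (SW0_one h) q
  refine (((S2_eq (3*m) hn).lmul s0).add key).congr ?_
  ring

end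
end S4


theorem statement4 (p : ℕ) (hp : p.Prime) (hp3 : 3 < p) :
    (∀ x y : ℤ, p % 3 = 1 → (p : ℤ) = x^2 + 3*y^2 →
      ratCongr p 3
        ((-1:ℚ)^((p-1)/2) *
          ∑ k ∈ Finset.range p, (k:ℚ)^2 * ((2*k).choose k : ℚ)^3 / 256^k)
        (1/9*(x:ℚ)^2 - (p:ℚ)/18 - (p:ℚ)^2/(72*(x:ℚ)^2)) ∧
      ratCongr p 3
        ((-1:ℚ)^((p-1)/2) *
          ∑ k ∈ Finset.range p, (k:ℚ)^3 * ((2*k).choose k : ℚ)^3 / 256^k)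
        (1/18*(x:ℚ)^2 + (p:ℚ)/72 - (p:ℚ)^2/(144*(x:ℚ)^2))) ∧
    (p % 3 = 2 →
      ratCongr p 2
        ((-1:ℚ)^((p-1)/2) *
          ∑ k ∈ Finset.range p, (k:ℚ)^2 * ((2*k).choose k : ℚ)^3 / 256^k)
        (-(2/9)*R3 p) ∧
      ratCongr p 2
        ((-1:ℚ)^((p-1)/2) *
          ∑ k ∈ Finset.range p, (k:ℚ)^3 * ((2*k).choose k : ℚ)^3 / 256^k)
        (-(1/9)*R3 p + (p:ℚ)/24)) := by
  have : Fact p.Prime := ⟨hp⟩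
  have : Fact (3 < p) := ⟨hp3⟩
  have hodd : p % 2 = 1 := by
    rcases hp.eq_two_or_odd with h | h
    · omega
    · exact h
  refine ⟨fun x y h1 hxy => ?_, fun h2 => ?_⟩
  · obtain ⟨m, hm⟩ : ∃ m, p = 6*m+1 := ⟨p/6, by omega⟩
    have e1 : (p-1)/2 = 3*m := by omega
    rw [e1]
    have a := S4.main_one hm hxy
    have b := S4.S3_sign (p := p) (n := 3*m) (by omega)
    have c := (b.add (a.rat 1 1 0))
    refine ⟨S4.num_of_M a, S4.num_of_M (c.congr ?_)⟩
    change _ = (-1:ℚ)^(3*m) * S4.S 3 p - _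
    rw [show (p:ℚ)^2/(144*(x:ℚ)^2) = (p:ℚ)^2/(72*(x:ℚ)^2)/2 by
      rw [div_div]; congr 1; ring]
    push_cast
    ring
  · obtain ⟨m, hm⟩ : ∃ m, p = 6*m+5 := ⟨p/6, by omega⟩
    have e1 : (p-1)/2 = 3*m+2 := by omega
    have e2 : p/6 = m := by omega
    have a := S4.main_two hm
    have b := S4.S3_sign (p := p) (n := 3*m+2) (by omega)
    have c := ((b.mono (show 2 ≤ 3 by norm_num)).add (a.rat 1 1 0))
    unfold R3
    rw [e1, e2]
    refine ⟨S4.num_of_M a, S4.num_of_M (c.congr ?_)⟩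
    change _ = (-1:ℚ)^(3*m+2) * S4.S 3 p - _
    push_cast
    ring
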